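/- arXiv:math/0406574 — 2 statements merged into one kernel-verified Lean document; each statement's English description precedes it below -/
import Mathlib

section
/- Let n ≥ 3 and let ν = (ν_n,…,ν_1), μ = (μ_n,…,μ_1) ∈ ℤ^n be dominant weights of type D_n with integer coordinates. Assume μ_n ≥ ν_{n−1} and ν_n − μ_n ≥ 0, and set l = ν_n − μ_n, ν' = (ν_{n−1},…,ν_1), μ' = (μ_{n−1},…,μ_1). Then K^{D_n}_{ν,μ}(q) = q^l · Σ_{(r,m) ∈ ℕ², r + 2m = l} Σ_λ d^λ_{ν',r} · K^{D_{n−1}}_{λ,μ'}(q), where the inner sum is over all dominant weights λ of type D_{n−1} with integer coordinates (only finitely many terms are nonzero). -/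
open scoped BigOperators

noncomputable section

/-- The `q`-analogue of Kostant's partition function attached to the finite set `R`
of positive roots: the coefficient of `q^k` is the number of families
`(m_α)_{α ∈ R}` of nonnegative integers with `∑ m_α = k` and `∑ m_α • α = β`. -/
def kostantQ {n : ℕ} (R : Finset (Fin n → ℚ)) (β : Fin n → ℚ) : PowerSeries ℤ :=
  PowerSeries.mk fun k =>
    (Nat.card {m : {α // α ∈ R} → ℕ //
      (∑ α, m α) = k ∧ (∑ α, (m α : ℚ) • (α : Fin n → ℚ)) = β} : ℤ)

/-- Positive roots of type `D_n` : `e_i - e_j` and `e_i + e_j` for `j < i`. -/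
def rootsD (n : ℕ) : Finset (Fin n → ℚ) :=
  ((Finset.univ : Finset (Fin n × Fin n)).filter fun p => p.2 < p.1).image
      (fun p => Pi.single p.1 (1 : ℚ) - Pi.single p.2 1) ∪
  ((Finset.univ : Finset (Fin n × Fin n)).filter fun p => p.2 < p.1).image
      (fun p => Pi.single p.1 (1 : ℚ) + Pi.single p.2 1)

/-- Positive roots of type `B_n`. -/
def rootsB (n : ℕ) : Finset (Fin n → ℚ) :=
  rootsD n ∪ (Finset.univ : Finset (Fin n)).image fun i => Pi.single i (1 : ℚ)

/-- Positive roots of type `C_n`. -/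
def rootsC (n : ℕ) : Finset (Fin n → ℚ) :=
  rootsD n ∪ (Finset.univ : Finset (Fin n)).image fun i => Pi.single i (2 : ℚ)

/-- Positive roots of type `A_{n-1}` : `e_i - e_j` for `j < i`. -/
def rootsA (n : ℕ) : Finset (Fin n → ℚ) :=
  ((Finset.univ : Finset (Fin n × Fin n)).filter fun p => p.2 < p.1).image
      fun p => Pi.single p.1 (1 : ℚ) - Pi.single p.2 1

/-- `ρ` of type `B_n` : `e_i`-coordinate `i - 1/2` (`0`-based index `i ↦ i + 1/2`). -/
def rhoB (n : ℕ) : Fin n → ℚ := fun i => ((i : ℕ) : ℚ) + 1/2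

/-- `ρ` of type `C_n` : `e_i`-coordinate `i`. -/
def rhoC (n : ℕ) : Fin n → ℚ := fun i => ((i : ℕ) : ℚ) + 1

/-- `ρ` of type `D_n` : `e_i`-coordinate `i - 1`. -/
def rhoD (n : ℕ) : Fin n → ℚ := fun i => ((i : ℕ) : ℚ)

/-- `ρ` of type `A_{n-1}` : `e_i`-coordinate `i - 1`. -/
def rhoA (n : ℕ) : Fin n → ℚ := fun i => ((i : ℕ) : ℚ)

/-- The signed permutation `(σ, ε)` acting on a weight: it maps `e_j` to `± e_{σ j}`. -/
def wAct {n : ℕ} (σ : Equiv.Perm (Fin n)) (ε : Fin n → Bool) (β : Fin n → ℚ) :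
    Fin n → ℚ := fun i => (if ε i then -1 else 1) * β (σ⁻¹ i)

/-- The determinant (sign) of the signed permutation `(σ, ε)`. -/
def wDet {n : ℕ} (σ : Equiv.Perm (Fin n)) (ε : Fin n → Bool) : ℤ :=
  (Equiv.Perm.sign σ : ℤ) * ∏ i, (if ε i then (-1 : ℤ) else 1)

/-- Kostka-Foulkes polynomial of type `B_n`, as a power series in `q`. -/
def KB (n : ℕ) (lam mu : Fin n → ℚ) : PowerSeries ℤ :=
  ∑ σ : Equiv.Perm (Fin n), ∑ ε : Fin n → Bool,
    wDet σ ε • kostantQ (rootsB n) (wAct σ ε (lam + rhoB n) - (mu + rhoB n))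

/-- Kostka-Foulkes polynomial of type `C_n`, as a power series in `q`. -/
def KC (n : ℕ) (lam mu : Fin n → ℚ) : PowerSeries ℤ :=
  ∑ σ : Equiv.Perm (Fin n), ∑ ε : Fin n → Bool,
    wDet σ ε • kostantQ (rootsC n) (wAct σ ε (lam + rhoC n) - (mu + rhoC n))

/-- Kostka-Foulkes polynomial of type `D_n`, as a power series in `q` (the Weyl group
consists of the signed permutations with an even number of sign changes). -/
def KD (n : ℕ) (lam mu : Fin n → ℚ) : PowerSeries ℤ :=
  ∑ σ : Equiv.Perm (Fin n), ∑ ε : Fin n → Bool,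
    if (∏ i, (if ε i then (-1 : ℤ) else 1)) = 1 then
      wDet σ ε • kostantQ (rootsD n) (wAct σ ε (lam + rhoD n) - (mu + rhoD n))
    else 0

/-- Kostka-Foulkes polynomial of type `A_{n-1}`, as a power series in `q`. -/
def KA (n : ℕ) (lam mu : Fin n → ℚ) : PowerSeries ℤ :=
  ∑ σ : Equiv.Perm (Fin n),
    (Equiv.Perm.sign σ : ℤ) •
      kostantQ (rootsA n) ((fun i => (lam + rhoA n) (σ⁻¹ i)) - (mu + rhoA n))

/-- Dominant weight of type `B_n` : `λ_n ≥ ⋯ ≥ λ_1 ≥ 0`, all coordinates in `ℤ`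
or all in `ℤ + 1/2`. -/
def DominantB {n : ℕ} (lam : Fin n → ℚ) : Prop :=
  Monotone lam ∧ (∀ i, 0 ≤ lam i) ∧
    ((∀ i, ∃ z : ℤ, lam i = z) ∨ (∀ i, ∃ z : ℤ, lam i = z + 1/2))

/-- Dominant weight of type `C_n` : `λ_n ≥ ⋯ ≥ λ_1 ≥ 0`, integer coordinates. -/
def DominantC {n : ℕ} (lam : Fin n → ℚ) : Prop :=
  Monotone lam ∧ (∀ i, 0 ≤ lam i) ∧ ∀ i, ∃ z : ℤ, lam i = z

/-- Dominant weight of type `D_n` : `λ_n ≥ ⋯ ≥ λ_2 ≥ |λ_1|`, all coordinates in `ℤ`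
or all in `ℤ + 1/2`. -/
def DominantD {n : ℕ} (lam : Fin n → ℚ) : Prop :=
  (∀ i j : Fin n, i ≤ j → 0 < (i : ℕ) → lam i ≤ lam j) ∧
  (∀ h : 0 < n, ∀ j : Fin n, 0 < (j : ℕ) → |lam ⟨0, h⟩| ≤ lam j) ∧
  ((∀ i, ∃ z : ℤ, lam i = z) ∨ (∀ i, ∃ z : ℤ, lam i = z + 1/2))

/-- Restriction of a weight of rank `n` to the first `n - 1` coordinates
(i.e. forgetting the `e_n`-coordinate). -/
def restrict1 {n : ℕ} (lam : Fin n → ℚ) : Fin (n - 1) → ℚ :=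
  fun i => lam ⟨(i : ℕ), by have := i.2; omega⟩

/-- Pieri number `b^λ_{γ,r}` of type `B_n`. -/
def bPieri {m : ℕ} (γ lam : Fin m → ℚ) (r : ℕ) : ℕ :=
  Nat.card {t : (Fin m → ℕ) × (Fin m → ℕ) × Bool //
    ((cond t.2.2 1 0) + ∑ i, (t.1 i + t.2.1 i)) = r ∧
    (∀ i, ((t.2.1 i : ℚ) - (t.1 i : ℚ)) = lam i - γ i) ∧
    (∀ i : Fin m, ∀ h : (i : ℕ) + 1 < m,
      lam i ≤ lam ⟨(i : ℕ) + 1, h⟩ - (t.2.1 ⟨(i : ℕ) + 1, h⟩ : ℚ)) ∧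
    (∀ i : Fin m, ∀ h : (i : ℕ) + 1 < m,
      lam i + (t.1 i : ℚ) - (t.2.1 i : ℚ) ≤
        lam ⟨(i : ℕ) + 1, h⟩ - (t.2.1 ⟨(i : ℕ) + 1, h⟩ : ℚ)) ∧
    (∀ h : 0 < m,
      if t.2.2 then (0 : ℚ) < lam ⟨0, h⟩ - (t.2.1 ⟨0, h⟩ : ℚ)
      else (0 : ℚ) ≤ lam ⟨0, h⟩ - (t.2.1 ⟨0, h⟩ : ℚ))}

/-- Pieri number `c^λ_{γ,r}` of type `C_n`. -/
def cPieri {m : ℕ} (γ lam : Fin m → ℚ) (r : ℕ) : ℕ :=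
  Nat.card {t : (Fin m → ℕ) × (Fin m → ℕ) //
    (∑ i, (t.1 i + t.2 i)) = r ∧
    (∀ i, ((t.2 i : ℚ) - (t.1 i : ℚ)) = lam i - γ i) ∧
    (∀ i : Fin m, ∀ h : (i : ℕ) + 1 < m,
      lam i ≤ lam ⟨(i : ℕ) + 1, h⟩ - (t.2 ⟨(i : ℕ) + 1, h⟩ : ℚ)) ∧
    (∀ i : Fin m, ∀ h : (i : ℕ) + 1 < m,
      lam i + (t.1 i : ℚ) - (t.2 i : ℚ) ≤
        lam ⟨(i : ℕ) + 1, h⟩ - (t.2 ⟨(i : ℕ) + 1, h⟩ : ℚ)) ∧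
    (∀ h : 0 < m, (0 : ℚ) ≤ lam ⟨0, h⟩ - (t.2 ⟨0, h⟩ : ℚ))}

/-- Pieri number `d^λ_{γ,r}` of type `D_n`. -/
def dPieri {m : ℕ} (γ lam : Fin m → ℚ) (r : ℕ) : ℕ :=
  Nat.card {t : (Fin m → ℕ) × (Fin m → ℕ) //
    (∀ h : 0 < m, min (t.1 ⟨0, h⟩) (t.2 ⟨0, h⟩) = 0) ∧
    (∑ i, (t.1 i + t.2 i)) = r ∧
    (∀ i, ((t.2 i : ℚ) - (t.1 i : ℚ)) = lam i - γ i) ∧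
    (∀ h : 1 < m,
      (t.1 ⟨0, by omega⟩ = 0 →
        lam ⟨0, by omega⟩ ≤ lam ⟨1, h⟩ - (t.2 ⟨1, h⟩ : ℚ)) ∧
      (0 < t.1 ⟨0, by omega⟩ →
        -lam ⟨0, by omega⟩ ≤ lam ⟨1, h⟩ - (t.2 ⟨1, h⟩ : ℚ))) ∧
    (∀ i : Fin m, 1 ≤ (i : ℕ) → ∀ h : (i : ℕ) + 1 < m,
      lam i ≤ lam ⟨(i : ℕ) + 1, h⟩ - (t.2 ⟨(i : ℕ) + 1, h⟩ : ℚ)) ∧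
    (∀ i : Fin m, 1 ≤ (i : ℕ) → ∀ h : (i : ℕ) + 1 < m,
      lam i + (t.1 i : ℚ) - (t.2 i : ℚ) ≤
        lam ⟨(i : ℕ) + 1, h⟩ - (t.2 ⟨(i : ℕ) + 1, h⟩ : ℚ)) ∧
    (∀ h : 1 < m,
      (t.1 ⟨0, by omega⟩ = 0 → 0 ≤ γ ⟨0, by omega⟩ →
        lam ⟨0, by omega⟩ - (t.2 ⟨0, by omega⟩ : ℚ) ≤ lam ⟨1, h⟩ - (t.2 ⟨1, h⟩ : ℚ)) ∧
      (t.2 ⟨0, by omega⟩ = 0 → 0 ≤ γ ⟨0, by omega⟩ →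
        lam ⟨0, by omega⟩ + (t.1 ⟨0, by omega⟩ : ℚ) ≤ lam ⟨1, h⟩ - (t.2 ⟨1, h⟩ : ℚ)) ∧
      (t.2 ⟨0, by omega⟩ = 0 → γ ⟨0, by omega⟩ < 0 →
        -lam ⟨0, by omega⟩ - (t.1 ⟨0, by omega⟩ : ℚ) ≤ lam ⟨1, h⟩ - (t.2 ⟨1, h⟩ : ℚ)) ∧
      (t.1 ⟨0, by omega⟩ = 0 → γ ⟨0, by omega⟩ < 0 →
        -lam ⟨0, by omega⟩ + (t.2 ⟨0, by omega⟩ : ℚ) ≤ lam ⟨1, h⟩ - (t.2 ⟨1, h⟩ : ℚ)))}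

/-- The monomial `x^β = ∏ y_i ^ (2 β_i)` in the Laurent polynomial ring
`ℤ[y_1^{±1}, …, y_n^{±1}]`, realized as the group algebra of `ℤ^n`. -/
def xpow {n : ℕ} (β : Fin n → ℚ) : AddMonoidAlgebra ℤ (Fin n → ℤ) :=
  AddMonoidAlgebra.single (fun i => ⌊2 * β i⌋) 1

/-- The Weyl alternant `a_β = ∑_{σ ∈ W_{B_n}} det σ · x^{σ β}` of type `B_n`. -/
def altB {n : ℕ} (β : Fin n → ℚ) : AddMonoidAlgebra ℤ (Fin n → ℤ) :=
  ∑ σ : Equiv.Perm (Fin n), ∑ ε : Fin n → Bool, wDet σ ε • xpow (wAct σ ε β)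

/-- The Weyl alternant `a_β = ∑_{σ ∈ W_{D_n}} det σ · x^{σ β}` of type `D_n`. -/
def altD {n : ℕ} (β : Fin n → ℚ) : AddMonoidAlgebra ℤ (Fin n → ℤ) :=
  ∑ σ : Equiv.Perm (Fin n), ∑ ε : Fin n → Bool,
    if (∏ i, (if ε i then (-1 : ℤ) else 1)) = 1 then wDet σ ε • xpow (wAct σ ε β) else 0

end


noncomputable section KDproof

set_option linter.unusedSimpArgs false

open Finset

/-- pairs of families with total sum `l` -/
def pairsS (m l : ℕ) : Finset ((Fin m → ℕ) × (Fin m → ℕ)) :=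
  (Fintype.piFinset (fun _ => Finset.range (l + 1)) ×ˢ
    Fintype.piFinset (fun _ => Finset.range (l + 1))).filter
      fun t => ∑ i, (t.1 i + t.2 i) = l

theorem mem_pairsS {m l : ℕ} (t : (Fin m → ℕ) × (Fin m → ℕ)) :
    t ∈ pairsS m l ↔ ∑ i, (t.1 i + t.2 i) = l := by
  unfold pairsS
  simp only [Finset.mem_filter, Finset.mem_product, Fintype.mem_piFinset, Finset.mem_range,
    and_iff_right_iff_imp]
  intro h
  have key : ∀ i, t.1 i + t.2 i ≤ l := fun i => by
    rw [← h]
    exact Finset.single_le_sum (f := fun i => t.1 i + t.2 i) (fun _ _ => Nat.zero_le _)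
      (Finset.mem_univ i)
  exact ⟨fun i => by have := key i; omega, fun i => by have := key i; omega⟩

def rootMap (m : ℕ) : {α // α ∈ rootsD m} ⊕ (Fin m ⊕ Fin m) → (Fin (m + 1) → ℚ)
  | Sum.inl α => Fin.snoc (α := fun _ => ℚ) α.1 0
  | Sum.inr (Sum.inl j) => Pi.single (Fin.last m) (1 : ℚ) + Pi.single j.castSucc 1
  | Sum.inr (Sum.inr j) => Pi.single (Fin.last m) (1 : ℚ) - Pi.single j.castSucc 1

theorem snoc_single {m : ℕ} (i : Fin m) (a : ℚ) :
    Fin.snoc (α := fun _ => ℚ) (Pi.single i a : Fin m → ℚ) 0 = Pi.single i.castSucc a := by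
  funext x
  refine Fin.lastCases ?_ (fun y => ?_) x
  · have : Fin.last m ≠ i.castSucc := (Fin.castSucc_lt_last i).ne'
    simp [Pi.single_eq_of_ne this]
  · by_cases h : y = i
    · subst h; simp
    · have : y.castSucc ≠ i.castSucc := fun e => h (Fin.castSucc_injective _ e)
      simp [Pi.single_eq_of_ne this, Pi.single_eq_of_ne h]

theorem snoc_add0 {m : ℕ} (a b : Fin m → ℚ) :
    Fin.snoc (α := fun _ => ℚ) (a + b) 0 =
      Fin.snoc (α := fun _ => ℚ) a 0 + Fin.snoc (α := fun _ => ℚ) b 0 := by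
  funext x
  refine Fin.lastCases ?_ (fun y => ?_) x <;> simp

theorem snoc_sub0 {m : ℕ} (a b : Fin m → ℚ) :
    Fin.snoc (α := fun _ => ℚ) (a - b) 0 =
      Fin.snoc (α := fun _ => ℚ) a 0 - Fin.snoc (α := fun _ => ℚ) b 0 := by
  funext x
  refine Fin.lastCases ?_ (fun y => ?_) x <;> simp

theorem mem_rootsD {n : ℕ} (α : Fin n → ℚ) : α ∈ rootsD n ↔
    ∃ i j : Fin n, j < i ∧ (α = Pi.single i (1 : ℚ) - Pi.single j 1 ∨
      α = Pi.single i (1 : ℚ) + Pi.single j 1) := by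
  unfold rootsD
  simp only [Finset.mem_union, Finset.mem_image, Finset.mem_filter, Finset.mem_univ, true_and,
    Prod.exists]
  constructor
  · rintro (⟨i, j, h, rfl⟩ | ⟨i, j, h, rfl⟩)
    · exact ⟨i, j, h, Or.inl rfl⟩
    · exact ⟨i, j, h, Or.inr rfl⟩
  · rintro ⟨i, j, h, rfl | rfl⟩
    · exact Or.inl ⟨i, j, h, rfl⟩
    · exact Or.inr ⟨i, j, h, rfl⟩

theorem rootMap_mem (m : ℕ) (x) : rootMap m x ∈ rootsD (m + 1) := by
  rw [mem_rootsD]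
  rcases x with ⟨α, hα⟩ | j | j
  · obtain ⟨i, j, h, rfl | rfl⟩ := (mem_rootsD α).1 hα
    · exact ⟨i.castSucc, j.castSucc, by simpa using h, Or.inl (by
        simp [rootMap, snoc_sub0, snoc_single])⟩
    · exact ⟨i.castSucc, j.castSucc, by simpa using h, Or.inr (by
        simp [rootMap, snoc_add0, snoc_single])⟩
  · exact ⟨Fin.last m, j.castSucc, Fin.castSucc_lt_last j, Or.inr rfl⟩
  · exact ⟨Fin.last m, j.castSucc, Fin.castSucc_lt_last j, Or.inl rfl⟩

theorem single_last_castSucc {m : ℕ} (j : Fin m) (a : ℚ) :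
    (Pi.single (Fin.last m) a : Fin (m + 1) → ℚ) j.castSucc = 0 :=
  Pi.single_eq_of_ne (Fin.castSucc_lt_last j).ne _

theorem single_castSucc_last {m : ℕ} (j : Fin m) (a : ℚ) :
    (Pi.single j.castSucc a : Fin (m + 1) → ℚ) (Fin.last m) = 0 :=
  Pi.single_eq_of_ne (Fin.castSucc_lt_last j).ne' _

theorem single_castSucc_castSucc {m : ℕ} (j k : Fin m) (a : ℚ) :
    (Pi.single j.castSucc a : Fin (m + 1) → ℚ) k.castSucc = (Pi.single j a : Fin m → ℚ) k := by
  rw [← snoc_single, Fin.snoc_castSucc]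

theorem rootMap_inj (m : ℕ) : Function.Injective (rootMap m) := by
  have hl := @single_castSucc_last m
  have hc := @single_last_castSucc m
  have hcc := @single_castSucc_castSucc m
  rintro (⟨α, hα⟩ | j | j) (⟨β, hβ⟩ | k | k) h
  · congr 2
    funext x
    simpa [rootMap] using congrFun h x.castSucc
  · have := congrFun h (Fin.last m); simp [rootMap, hl] at this
  · have := congrFun h (Fin.last m); simp [rootMap, hl] at this
  · have := congrFun h (Fin.last m); simp [rootMap, hl] at this
  · have := congrFun h k.castSucc
    by_cases e : j = k
    · rw [e]
    · simp [rootMap, hc, hcc, Pi.single_apply, Ne.symm e] at this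
  · have := congrFun h k.castSucc
    by_cases e : j = k
    · simp [rootMap, hc, hcc, e] at this; norm_num at this
    · simp [rootMap, hc, hcc, Pi.single_apply, Ne.symm e] at this
  · have := congrFun h (Fin.last m); simp [rootMap, hl] at this
  · have := congrFun h k.castSucc
    by_cases e : j = k
    · simp [rootMap, hc, hcc, e] at this; norm_num at this
    · simp [rootMap, hc, hcc, Pi.single_apply, Ne.symm e] at this
  · have := congrFun h k.castSucc
    by_cases e : j = k
    · rw [e]
    · simp [rootMap, hc, hcc, Pi.single_apply, Ne.symm e] at this

theorem rootMap_surj (m : ℕ) (α : Fin (m + 1) → ℚ) (h : α ∈ rootsD (m + 1)) :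
    ∃ x, rootMap m x = α := by
  obtain ⟨i, j, hij, h⟩ := (mem_rootsD α).1 h
  have hj : j ≠ Fin.last m := fun e => by
    subst e; exact absurd (Fin.le_last i) (not_le.2 hij)
  obtain ⟨j, rfl⟩ := Fin.exists_castSucc_eq.2 hj
  by_cases hi : i = Fin.last m
  · subst hi
    rcases h with rfl | rfl
    · exact ⟨Sum.inr (Sum.inr j), rfl⟩
    · exact ⟨Sum.inr (Sum.inl j), rfl⟩
  · obtain ⟨i, rfl⟩ := Fin.exists_castSucc_eq.2 hi
    have hij' : j < i := by simpa using hij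
    rcases h with rfl | rfl
    · exact ⟨Sum.inl ⟨Pi.single i (1 : ℚ) - Pi.single j 1,
        (mem_rootsD _).2 ⟨i, j, hij', Or.inl rfl⟩⟩, by simp [rootMap, snoc_sub0, snoc_single]⟩
    · exact ⟨Sum.inl ⟨Pi.single i (1 : ℚ) + Pi.single j 1,
        (mem_rootsD _).2 ⟨i, j, hij', Or.inr rfl⟩⟩, by simp [rootMap, snoc_add0, snoc_single]⟩

def rootEquiv (m : ℕ) :
    {α // α ∈ rootsD m} ⊕ (Fin m ⊕ Fin m) ≃ {α // α ∈ rootsD (m + 1)} :=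
  Equiv.ofBijective (fun x => ⟨rootMap m x, rootMap_mem m x⟩)
    ⟨fun x y h => rootMap_inj m (congrArg Subtype.val h),
     fun y => by
      obtain ⟨x, hx⟩ := rootMap_surj m y.1 y.2
      exact ⟨x, Subtype.ext hx⟩⟩

theorem rootEquiv_coe (m : ℕ) (x) : ((rootEquiv m x : {α // α ∈ rootsD (m + 1)}) :
    Fin (m + 1) → ℚ) = rootMap m x := rfl

theorem fam_sum (m : ℕ) (f : {α // α ∈ rootsD (m + 1)} → ℕ) :
    ∑ α, f α = ∑ α, f (rootEquiv m (Sum.inl α)) +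
      ∑ j, (f (rootEquiv m (Sum.inr (Sum.inl j))) + f (rootEquiv m (Sum.inr (Sum.inr j)))) := by
  rw [← Equiv.sum_comp (rootEquiv m), Fintype.sum_sum_type, Fintype.sum_sum_type,
    Finset.sum_add_distrib]

theorem fam_last (m : ℕ) (f : {α // α ∈ rootsD (m + 1)} → ℕ) :
    (∑ α, (f α : ℚ) • (α : Fin (m + 1) → ℚ)) (Fin.last m) =
      ((∑ j, (f (rootEquiv m (Sum.inr (Sum.inl j))) +
        f (rootEquiv m (Sum.inr (Sum.inr j)))) : ℕ) : ℚ) := by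
  rw [← Equiv.sum_comp (rootEquiv m), Fintype.sum_sum_type, Fintype.sum_sum_type]
  simp only [rootEquiv_coe]
  simp [rootMap, single_castSucc_last, Finset.sum_add_distrib, Finset.sum_apply]

theorem fam_cast (m : ℕ) (f : {α // α ∈ rootsD (m + 1)} → ℕ) (i : Fin m) :
    (∑ α, (f α : ℚ) • (α : Fin (m + 1) → ℚ)) i.castSucc =
      (∑ α, (f (rootEquiv m (Sum.inl α)) : ℚ) • (α : Fin m → ℚ)) i +
       ((f (rootEquiv m (Sum.inr (Sum.inl i))) : ℚ) -
        (f (rootEquiv m (Sum.inr (Sum.inr i))) : ℚ)) := by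
  rw [← Equiv.sum_comp (rootEquiv m), Fintype.sum_sum_type, Fintype.sum_sum_type]
  simp only [rootEquiv_coe]
  simp [rootMap, single_last_castSucc, single_castSucc_castSucc, Finset.sum_apply,
    Pi.single_apply, sub_eq_add_neg]

theorem kostant_neg (m : ℕ) (β : Fin (m + 1) → ℚ) (h : β (Fin.last m) < 0) :
    kostantQ (rootsD (m + 1)) β = 0 := by
  ext k
  unfold kostantQ
  rw [PowerSeries.coeff_mk]
  have : IsEmpty {f : {α // α ∈ rootsD (m + 1)} → ℕ //
      (∑ α, f α) = k ∧ (∑ α, (f α : ℚ) • (α : Fin (m + 1) → ℚ)) = β} := by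
    refine ⟨fun ⟨f, _, hf⟩ => ?_⟩
    have := congrFun hf (Fin.last m)
    rw [fam_last] at this
    rw [← this] at h
    exact absurd h (not_lt.2 (Nat.cast_nonneg _))
  rw [Nat.card_of_isEmpty]
  simp

instance fam_finite {ι : Type*} [Fintype ι] (k : ℕ) (P : (ι → ℕ) → Prop) :
    Finite {f : ι → ℕ // ∑ i, f i = k ∧ P f} := by
  classical
  refine Set.Finite.to_subtype (s := {f : ι → ℕ | ∑ i, f i = k ∧ P f}) ?_
  refine Set.Finite.subset (Set.Finite.pi' (fun _ : ι => Set.finite_Iic k)) ?_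
  rintro f ⟨hf, _⟩ i
  simp only [Set.mem_Iic]
  rw [← hf]
  exact Finset.single_le_sum (f := f) (fun _ _ => Nat.zero_le _) (Finset.mem_univ i)

theorem kostant_rec (m l : ℕ) (β : Fin (m + 1) → ℚ) (h : β (Fin.last m) = l) :
    kostantQ (rootsD (m + 1)) β =
      PowerSeries.X ^ l * ∑ t ∈ pairsS m l, kostantQ (rootsD m)
        (fun i => β i.castSucc + ((t.2 i : ℚ) - (t.1 i : ℚ))) := by
  ext k
  rw [PowerSeries.coeff_X_pow_mul', map_sum]
  unfold kostantQ
  simp only [PowerSeries.coeff_mk]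
  split_ifs with hk
  · rw [← Nat.cast_sum, Nat.cast_inj]
    rw [← Finset.sum_coe_sort, ← Nat.card_sigma]
    refine Nat.card_congr
      { toFun := fun f => ⟨⟨(fun j => f.1 (rootEquiv m (Sum.inr (Sum.inl j))),
          fun j => f.1 (rootEquiv m (Sum.inr (Sum.inr j)))), ?_⟩,
          ⟨fun α => f.1 (rootEquiv m (Sum.inl α)), ?_, ?_⟩⟩
        invFun := fun x => ⟨fun α => Sum.elim x.2.1 (Sum.elim x.1.1.1 x.1.1.2)
            ((rootEquiv m).symm α), ?_, ?_⟩
        left_inv := ?_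
        right_inv := ?_ }
    · rw [mem_pairsS]
      have := congrFun f.2.2 (Fin.last m)
      rw [fam_last, h] at this
      exact_mod_cast this
    · have := congrFun f.2.2 (Fin.last m)
      rw [fam_last, h] at this
      have h3 := f.2.1
      rw [fam_sum] at h3
      have h4 : (∑ j, (f.1 (rootEquiv m (Sum.inr (Sum.inl j))) +
        f.1 (rootEquiv m (Sum.inr (Sum.inr j))))) = l := by exact_mod_cast this
      simp only
      omega
    · funext i
      have := congrFun f.2.2 i.castSucc
      rw [fam_cast] at this
      simp only
      linarith
    · rw [fam_sum]
      have h5 := (mem_pairsS _).1 x.1.2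
      have h6 := x.2.2.1
      simp only [Equiv.symm_apply_apply, Sum.elim_inl, Sum.elim_inr]
      omega
    · have h5 := (mem_pairsS _).1 x.1.2
      have h6 := x.2.2.2
      funext i
      refine Fin.lastCases ?_ (fun y => ?_) i
      · rw [fam_last, h]
        simp only [Equiv.symm_apply_apply, Sum.elim_inl, Sum.elim_inr]
        rw [h5]
      · rw [fam_cast]
        simp only [Equiv.symm_apply_apply, Sum.elim_inl, Sum.elim_inr]
        rw [h6]
        ring
    · rintro ⟨f, hf⟩
      ext α
      simp only
      obtain ⟨x, rfl⟩ := (rootEquiv m).surjective α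
      rcases x with x | x | x <;> simp
    · rintro ⟨⟨⟨a, b⟩, hab⟩, ⟨f, hf⟩⟩
      refine Sigma.subtype_ext ?_ ?_ <;> simp
  · have : IsEmpty {f : {α // α ∈ rootsD (m + 1)} → ℕ //
      (∑ α, f α) = k ∧ (∑ α, (f α : ℚ) • (α : Fin (m + 1) → ℚ)) = β} := by
      refine ⟨fun ⟨f, hk', hf⟩ => ?_⟩
      have := congrFun hf (Fin.last m)
      rw [fam_last, h] at this
      rw [fam_sum] at hk'
      have h4 : (∑ j, (f (rootEquiv m (Sum.inr (Sum.inl j))) +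
        f (rootEquiv m (Sum.inr (Sum.inr j))))) = l := by exact_mod_cast this
      omega
    rw [Nat.card_of_isEmpty]
    simp

/-- The alternating sum defining `KD`, as a function of the shifted integral weight. -/
def FD (m : ℕ) (κ : Fin m → ℚ) (β : Fin m → ℤ) : PowerSeries ℤ :=
  ∑ σ : Equiv.Perm (Fin m), ∑ ε : Fin m → Bool,
    if (∏ i, (if ε i then (-1 : ℤ) else 1)) = 1 then
      wDet σ ε • kostantQ (rootsD m) (wAct σ ε (fun i => (β i : ℚ)) - κ)
    else 0

def permE (m : ℕ) : Option (Fin m) × Equiv.Perm (Fin m) ≃ Equiv.Perm (Fin (m + 1)) :=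
  ((finSuccEquivLast.permCongr).trans Equiv.Perm.decomposeOption).symm

theorem permE_none_castSucc (m : ℕ) (σ : Equiv.Perm (Fin m)) (i : Fin m) :
    permE m (none, σ) i.castSucc = (σ i).castSucc := by
  simp [permE, Equiv.permCongr_apply]

theorem permE_none_last (m : ℕ) (σ : Equiv.Perm (Fin m)) :
    permE m (none, σ) (Fin.last m) = Fin.last m := by
  simp [permE, Equiv.permCongr_apply]

theorem permE_none_inv_castSucc (m : ℕ) (σ : Equiv.Perm (Fin m)) (i : Fin m) :
    (permE m (none, σ))⁻¹ i.castSucc = (σ⁻¹ i).castSucc := by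
  rw [Equiv.Perm.inv_eq_iff_eq, permE_none_castSucc]; simp

theorem permE_none_inv_last (m : ℕ) (σ : Equiv.Perm (Fin m)) :
    (permE m (none, σ))⁻¹ (Fin.last m) = Fin.last m := by
  rw [Equiv.Perm.inv_eq_iff_eq, permE_none_last]

theorem permE_some_inv_last (m : ℕ) (j : Fin m) (σ : Equiv.Perm (Fin m)) :
    ∃ i : Fin m, (permE m (some j, σ))⁻¹ (Fin.last m) = i.castSucc := by
  have : (permE m (some j, σ))⁻¹ (Fin.last m) ≠ Fin.last m := by
    rw [Ne, Equiv.Perm.inv_eq_iff_eq]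
    simp [permE, Equiv.permCongr_apply]
    exact (Fin.castSucc_lt_last j).ne'
  obtain ⟨i, hi⟩ := Fin.exists_castSucc_eq.2 this
  exact ⟨i, hi.symm⟩

theorem permE_none_sign (m : ℕ) (σ : Equiv.Perm (Fin m)) :
    Equiv.Perm.sign (permE m (none, σ)) = Equiv.Perm.sign σ := by
  have : permE m (none, σ) = (finSuccEquivLast.permCongr).symm
      (Equiv.Perm.decomposeOption.symm (none, σ)) := rfl
  rw [this, Equiv.permCongr_symm, Equiv.Perm.sign_permCongr, Equiv.Perm.decomposeOption_symm_sign]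

/-- Invariance of the multiset of weights of the symmetric power. -/
theorem pairs_invariance (m l : ℕ) (σ : Equiv.Perm (Fin m)) (ε : Fin m → Bool)
    (c : Fin m → ℚ) (G : (Fin m → ℚ) → PowerSeries ℤ) :
    ∑ t ∈ pairsS m l, G (fun i => wAct σ ε c i + ((t.2 i : ℚ) - (t.1 i : ℚ))) =
    ∑ t ∈ pairsS m l, G (wAct σ ε (fun i => c i + ((t.2 i : ℚ) - (t.1 i : ℚ)))) := by
  refine Finset.sum_bij'
    (fun t _ => (fun i => if ε (σ i) then t.2 (σ i) else t.1 (σ i),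
                 fun i => if ε (σ i) then t.1 (σ i) else t.2 (σ i)))
    (fun t _ => (fun i => if ε i then t.2 (σ⁻¹ i) else t.1 (σ⁻¹ i),
                 fun i => if ε i then t.1 (σ⁻¹ i) else t.2 (σ⁻¹ i))) ?_ ?_ ?_ ?_ ?_
  · intro t ht
    rw [mem_pairsS] at ht ⊢
    rw [← ht, ← Equiv.sum_comp σ (fun i => t.1 i + t.2 i)]
    refine Finset.sum_congr rfl fun i _ => ?_
    dsimp only
    split_ifs <;> omega
  · intro t ht
    rw [mem_pairsS] at ht ⊢
    rw [← ht, ← Equiv.sum_comp σ⁻¹ (fun i => t.1 i + t.2 i)]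
    refine Finset.sum_congr rfl fun i _ => ?_
    dsimp only
    split_ifs <;> omega
  · rintro ⟨a, b⟩ ht
    refine Prod.ext ?_ ?_ <;> funext i <;> by_cases h : ε i <;> simp [h]
  · rintro ⟨a, b⟩ ht
    refine Prod.ext ?_ ?_ <;> funext i <;> by_cases h : ε (σ i) <;> simp [h]
  · rintro ⟨a, b⟩ ht
    congr 1
    funext i
    by_cases h : ε i <;> simp [wAct, h]
    ring

theorem KD_rec (m : ℕ) (ν μ : Fin (m + 1) → ℤ)
    (hpos : 0 < μ (Fin.last m) + m)
    (hlast : ∀ i : Fin m, |ν i.castSucc + (i : ℕ)| < μ (Fin.last m) + m)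
    (h2 : μ (Fin.last m) ≤ ν (Fin.last m)) :
    KD (m + 1) (fun i => (ν i : ℚ)) (fun i => (μ i : ℚ)) =
      PowerSeries.X ^ (ν (Fin.last m) - μ (Fin.last m)).toNat *
        ∑ t ∈ pairsS m (ν (Fin.last m) - μ (Fin.last m)).toNat,
          FD m (fun i => (μ i.castSucc : ℚ) + ((i : ℕ) : ℚ))
            (fun i => ν i.castSucc + (i : ℕ) + ((t.2 i : ℤ) - (t.1 i : ℤ))) := by
  set l := (ν (Fin.last m) - μ (Fin.last m)).toNat with hl
  have hlZ : (l : ℤ) = ν (Fin.last m) - μ (Fin.last m) := by omega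
  have hlQ : (l : ℚ) = (ν (Fin.last m) : ℚ) - (μ (Fin.last m) : ℚ) := by exact_mod_cast hlZ
  have hposQ : (0 : ℚ) < (μ (Fin.last m) : ℚ) + (m : ℚ) := by exact_mod_cast hpos
  have hlastQ : ∀ i : Fin m, |(ν i.castSucc : ℚ) + ((i : ℕ) : ℚ)| <
      (μ (Fin.last m) : ℚ) + (m : ℚ) := by
    intro i; exact_mod_cast hlast i
  have h2Q : (μ (Fin.last m) : ℚ) ≤ (ν (Fin.last m) : ℚ) := by exact_mod_cast h2
  unfold KD FD
  rw [← Equiv.sum_comp (permE m), Fintype.sum_prod_type, Fintype.sum_option]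
  rw [Finset.sum_eq_zero (s := (Finset.univ : Finset (Fin m))), add_zero]
  swap
  · intro j _
    refine Finset.sum_eq_zero fun σ _ => Finset.sum_eq_zero fun ε _ => ?_
    rw [kostant_neg, smul_zero, ite_self]
    obtain ⟨i, hi⟩ := permE_some_inv_last m j σ
    have := abs_lt.1 (hlastQ i)
    simp only [wAct, Pi.sub_apply, Pi.add_apply, hi, rhoD, Fin.val_castSucc, Fin.val_last]
    split_ifs <;> linarith
  have step : ∀ σ : Equiv.Perm (Fin m), 
      (∑ ε : Fin (m + 1) → Bool,
        if (∏ i, (if ε i then (-1 : ℤ) else 1)) = 1 then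
          wDet (permE m (none, σ)) ε • kostantQ (rootsD (m + 1))
            (wAct (permE m (none, σ)) ε ((fun i => (ν i : ℚ)) + rhoD (m + 1)) -
              ((fun i => (μ i : ℚ)) + rhoD (m + 1))) else 0) =
      PowerSeries.X ^ l * ∑ ε : Fin m → Bool,
        if (∏ i, (if ε i then (-1 : ℤ) else 1)) = 1 then
          wDet σ ε • ∑ t ∈ pairsS m l, kostantQ (rootsD m)
            (wAct σ ε (fun i => ((ν i.castSucc + (i : ℕ) + ((t.2 i : ℤ) - (t.1 i : ℤ)) : ℤ) : ℚ)) -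
              (fun i : Fin m => (μ i.castSucc : ℚ) + ((i : ℕ) : ℚ))) else 0 := by
    intro σ
    rw [← Equiv.sum_comp (Fin.snocEquiv (fun _ => Bool)), Fintype.sum_prod_type, Fintype.sum_bool]
    rw [Finset.sum_eq_zero, zero_add, Finset.mul_sum]
    · refine Finset.sum_congr rfl fun ε _ => ?_
      have hprod : (∏ i, (if (Fin.snocEquiv (fun _ => Bool)) (false, ε) i then (-1 : ℤ) else 1)) =
          ∏ i, (if ε i then (-1 : ℤ) else 1) := by
        rw [Fin.prod_univ_castSucc]
        simp [Fin.snocEquiv]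
      have hdet : wDet (permE m (none, σ)) ((Fin.snocEquiv (fun _ => Bool)) (false, ε)) =
          wDet σ ε := by
        unfold wDet
        rw [hprod, permE_none_sign]
      rw [hprod, hdet]
      split_ifs with he
      · rw [kostant_rec m l, mul_smul_comm]
        · congr 2
          have := pairs_invariance m l σ ε (fun i : Fin m => (ν i.castSucc : ℚ) + ((i : ℕ) : ℚ))
            (fun β => kostantQ (rootsD m)
              (β - (fun i : Fin m => (μ i.castSucc : ℚ) + ((i : ℕ) : ℚ))))
          push_cast
          rw [← this]
          refine Finset.sum_congr rfl fun t _ => ?_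
          congr 1
          funext i
          simp only [wAct, Pi.sub_apply, Pi.add_apply, permE_none_inv_castSucc, rhoD,
            Fin.val_castSucc]
          simp [Fin.snocEquiv]
          ring
        · simp only [wAct, Pi.sub_apply, Pi.add_apply, permE_none_inv_last, rhoD, Fin.val_last]
          simp [Fin.snocEquiv]
          rw [hlQ]
      · simp
    · intro ε _
      rw [kostant_neg, smul_zero, ite_self]
      simp only [wAct, Pi.sub_apply, Pi.add_apply, permE_none_inv_last, rhoD, Fin.val_last]
      simp [Fin.snocEquiv]
      linarith
  rw [Finset.sum_congr rfl fun σ _ => step σ, ← Finset.mul_sum]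
  congr 1
  simp only [Finset.smul_sum]
  conv_rhs => rw [Finset.sum_comm]
  refine Finset.sum_congr rfl fun σ _ => ?_
  conv_rhs => rw [Finset.sum_comm]
  refine Finset.sum_congr rfl fun ε _ => ?_
  split_ifs <;> simp

/-! ### The alternating property -/

theorem FD_swap (m : ℕ) (κ : Fin m → ℚ) (β : Fin m → ℤ) (i j : Fin m) (hij : i ≠ j) :
    FD m κ (fun x => if x = i then β j else if x = j then β i else β x) = - FD m κ β := by
  unfold FD
  rw [← Finset.sum_neg_distrib]
  refine Fintype.sum_equiv (Equiv.mulRight (Equiv.swap i j)) _ _ fun σ => ?_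
  rw [← Finset.sum_neg_distrib]
  refine Finset.sum_congr rfl fun ε _ => ?_
  have hdet : wDet σ ε = - wDet (Equiv.mulRight (Equiv.swap i j) σ) ε := by
    unfold wDet
    simp [Equiv.Perm.sign_swap hij]
  have hact : wAct σ ε (fun x => (((if x = i then β j else if x = j then β i else β x) : ℤ) : ℚ)) =
      wAct (Equiv.mulRight (Equiv.swap i j) σ) ε (fun x => (β x : ℚ)) := by
    funext x
    simp only [wAct, Equiv.coe_mulRight, mul_inv_rev, Equiv.swap_inv, Equiv.Perm.mul_apply]
    rw [Equiv.swap_apply_def]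
    split_ifs <;> rfl
  rw [hdet, hact]
  split_ifs <;> simp

theorem FD_negswap (m : ℕ) (κ : Fin m → ℚ) (β : Fin m → ℤ) (i j : Fin m) (hij : i ≠ j) :
    FD m κ (fun x => if x = i then - β j else if x = j then - β i else β x) = - FD m κ β := by
  unfold FD
  rw [← Finset.sum_neg_distrib]
  refine Fintype.sum_equiv (Equiv.mulRight (Equiv.swap i j)) _ _ fun σ => ?_
  rw [← Finset.sum_neg_distrib]
  let s : (Fin m → Bool) → (Fin m → Bool) :=
    fun ε x => xor (ε x) (decide (σ⁻¹ x = i) || decide (σ⁻¹ x = j))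
  have hs : Function.Involutive s := by
    intro ε; funext x
    simp [s]
  have hprod : ∀ ε, (∏ x, (if s ε x then (-1 : ℤ) else 1)) = ∏ x, (if ε x then (-1 : ℤ) else 1) := by
    intro ε
    have e1 : ∀ x, (if s ε x then (-1 : ℤ) else 1) = (if ε x then (-1 : ℤ) else 1) *
        ((if x = σ i then (-1 : ℤ) else 1) * (if x = σ j then (-1 : ℤ) else 1)) := by
      intro x
      have hij' : σ i ≠ σ j := fun e => hij (σ.injective e)
      simp only [s, Equiv.Perm.inv_eq_iff_eq]
      by_cases h1 : x = σ i
      · subst h1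
        by_cases h : ε (σ i) <;> simp [h, hij']
      · by_cases h2 : x = σ j
        · subst h2
          by_cases h : ε (σ j) <;> simp [h, hij'.symm]
        · by_cases h : ε x <;> simp [h, h1, h2]
    rw [Finset.prod_congr rfl fun x _ => e1 x, Finset.prod_mul_distrib, Finset.prod_mul_distrib]
    simp
  refine Fintype.sum_equiv hs.toPerm _ _ fun ε => ?_
  have hdet : wDet σ ε = - wDet (Equiv.mulRight (Equiv.swap i j) σ) (s ε) := by
    unfold wDet
    rw [hprod]
    simp [Equiv.Perm.sign_swap hij]
  have hact : wAct σ ε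
      (fun x => (((if x = i then - β j else if x = j then - β i else β x) : ℤ) : ℚ)) =
      wAct (Equiv.mulRight (Equiv.swap i j) σ) (s ε) (fun x => (β x : ℚ)) := by
    funext x
    simp only [wAct, Equiv.coe_mulRight, mul_inv_rev, Equiv.swap_inv, Equiv.Perm.mul_apply, s]
    rw [Equiv.swap_apply_def]
    obtain ⟨y, rfl⟩ := σ.surjective x
    have hy : σ⁻¹ (σ y) = y := σ.symm_apply_apply y
    simp only [hy]
    by_cases h1 : y = i
    · subst h1
      by_cases h : ε (σ y) <;> simp [h]
    · by_cases h2 : y = j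
      · subst h2
        by_cases h : ε (σ y) <;> simp [h, h1]
      · by_cases h : ε (σ y) <;> simp [h, h1, h2]
  rw [hdet, hact, Function.Involutive.coe_toPerm, hprod]
  split_ifs <;> simp

/-! ### The sign-reversing involutions -/

/-- pairs with `min (t.1 0) (t.2 0) = 0` -/
def pairsT (m r : ℕ) (z : Fin m) : Finset ((Fin m → ℕ) × (Fin m → ℕ)) :=
  (pairsS m r).filter fun t => min (t.1 z) (t.2 z) = 0

def phi {m : ℕ} (c : Fin m → ℤ) (t : (Fin m → ℕ) × (Fin m → ℕ)) :
    (Fin m → ℤ) × (Fin m → ℤ) :=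
  (fun i => c i - (t.1 i : ℤ), fun i => c i + ((t.2 i : ℤ) - (t.1 i : ℤ)))

theorem phi_inj {m : ℕ} (c : Fin m → ℤ) : Function.Injective (phi c) := by
  rintro ⟨a, b⟩ ⟨a', b'⟩ h
  have h1 : ∀ i, a i = a' i := fun i => by
    have := congrFun (congrArg Prod.fst h) i
    simp only [phi] at this
    omega
  have h2 : ∀ i, b i = b' i := fun i => by
    have := congrFun (congrArg Prod.snd h) i
    have := h1 i
    simp only [phi] at *
    omega
  exact Prod.ext (funext h1) (funext h2)

def Uset {m : ℕ} (c : Fin m → ℤ) (z : Fin m) (r : ℕ) : Finset ((Fin m → ℤ) × (Fin m → ℤ)) :=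
  (pairsT m r z).image (phi c)

theorem mem_Uset {m : ℕ} (c : Fin m → ℤ) (z : Fin m) (r : ℕ) (u : (Fin m → ℤ) × (Fin m → ℤ)) :
    u ∈ Uset c z r ↔ (∀ x, u.1 x ≤ c x ∧ u.1 x ≤ u.2 x) ∧ u.1 z = min (c z) (u.2 z) ∧
      ∑ x, (c x + u.2 x - 2 * u.1 x) = r := by
  unfold Uset pairsT
  simp only [Finset.mem_image, Finset.mem_filter, mem_pairsS]
  constructor
  · rintro ⟨t, ⟨h1, h2⟩, rfl⟩
    refine ⟨fun x => ?_, ?_, ?_⟩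
    · simp only [phi]; omega
    · simp only [phi]; omega
    · simp only [phi]
      rw [← h1]
      push_cast
      refine Finset.sum_congr rfl fun x _ => by ring
  · rintro ⟨h1, h2, h3⟩
    refine ⟨(fun x => (c x - u.1 x).toNat, fun x => (u.2 x - u.1 x).toNat), ⟨?_, ?_⟩, ?_⟩
    · have : ((∑ x, ((c x - u.1 x).toNat + (u.2 x - u.1 x).toNat) : ℕ) : ℤ) = (r : ℤ) := by
        rw [← h3]
        push_cast
        refine Finset.sum_congr rfl fun x _ => ?_
        have := h1 x
        omega
      exact_mod_cast this
    · simp only; omega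
    · refine Prod.ext ?_ ?_ <;> funext x <;> have := h1 x <;> simp only [phi] <;> omega

def Acond {m : ℕ} (c : Fin m → ℤ) (k : ℕ) (u : (Fin m → ℤ) × (Fin m → ℤ)) : Prop :=
  ∃ h : k + 1 < m, u.1 ⟨k + 1, h⟩ ≤ c ⟨k, by omega⟩ ∨ (k = 0 ∧ u.1 ⟨k + 1, h⟩ ≤ - c ⟨k, by omega⟩)

def Bcond {m : ℕ} (k : ℕ) (u : (Fin m → ℤ) × (Fin m → ℤ)) : Prop :=
  ∃ h : k + 1 < m, u.1 ⟨k + 1, h⟩ ≤ u.2 ⟨k, by omega⟩ ∨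
    (k = 0 ∧ u.1 ⟨k + 1, h⟩ ≤ - u.2 ⟨k, by omega⟩)

theorem inv_sum {α : Type*} (s : Finset α) (f : α → PowerSeries ℤ) (g : α → α)
    (hmem : ∀ u ∈ s, g u ∈ s) (hinv : ∀ u ∈ s, g (g u) = u) (hneg : ∀ u ∈ s, f (g u) = - f u) :
    ∑ u ∈ s, f u = 0 := by
  refine Finset.sum_involution (fun u _ => g u) ?_ ?_ hmem hinv
  · intro u hu; simp [hneg u hu]
  · intro u hu h0 e
    have := hneg u hu
    rw [e] at this
    apply h0
    ext n
    have h2 := congrArg (PowerSeries.coeff n) this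
    rw [map_neg] at h2
    rw [map_zero]
    omega

def upd2 {m : ℕ} (i j : Fin m) (a b : ℤ) (f : Fin m → ℤ) : Fin m → ℤ :=
  fun x => if x = i then a else if x = j then b else f x

theorem upd2_i {m : ℕ} (i j : Fin m) (a b : ℤ) (f : Fin m → ℤ) : upd2 i j a b f i = a := by
  simp [upd2]

theorem upd2_j {m : ℕ} {i j : Fin m} (h : i ≠ j) (a b : ℤ) (f : Fin m → ℤ) :
    upd2 i j a b f j = b := by
  simp [upd2, h.symm]

theorem upd2_o {m : ℕ} {i j x : Fin m} (h : x ≠ i) (h' : x ≠ j) (a b : ℤ) (f : Fin m → ℤ) :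
    upd2 i j a b f x = f x := by
  simp [upd2, h, h']

theorem upd2_upd2 {m : ℕ} {i j : Fin m} (a b a' b' : ℤ) (f : Fin m → ℤ) (ha : a = f i)
    (hb : b = f j) : upd2 i j a b (upd2 i j a' b' f) = f := by
  funext x
  by_cases h : x = i
  · subst h; simp [upd2, ha]
  · by_cases h' : x = j
    · subst h'; simp [upd2, h, hb]
    · simp [upd2, h, h']

theorem sum_two {m : ℕ} {i j : Fin m} (hij : i ≠ j) (f f' : Fin m → ℤ)
    (h : f' i + f' j = f i + f j) (ho : ∀ x, x ≠ i → x ≠ j → f' x = f x) :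
    ∑ x, f' x = ∑ x, f x := by
  have key : ∀ g : Fin m → ℤ, ∑ x, g x = g i + (g j + ∑ x ∈ (univ.erase i).erase j, g x) := by
    intro g
    rw [Finset.add_sum_erase _ g (Finset.mem_erase.2 ⟨hij.symm, Finset.mem_univ _⟩),
      Finset.add_sum_erase _ g (Finset.mem_univ _)]
  rw [key f, key f', ← add_assoc, ← add_assoc, h]
  congr 1
  refine Finset.sum_congr rfl fun x hx => ?_
  simp only [Finset.mem_erase] at hx
  exact ho x hx.2.1 hx.1

/-- membership in `Uset` after changing two coordinates -/
theorem Uset_upd {m : ℕ} {c : Fin m → ℤ} {z : Fin m} {r : ℕ} {i j : Fin m} (hij : i ≠ j)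
    (u : (Fin m → ℤ) × (Fin m → ℤ)) (hu : u ∈ Uset c z r) (a b a' b' : ℤ)
    (h1 : a ≤ c i) (h2 : a ≤ a') (h3 : b ≤ c j) (h4 : b ≤ b')
    (hz : (i ≠ z ∧ j ≠ z) ∨ (i = z ∧ a = min (c i) a'))
    (hs : a' - 2 * a + (b' - 2 * b) = u.2 i - 2 * u.1 i + (u.2 j - 2 * u.1 j)) :
    (upd2 i j a b u.1, upd2 i j a' b' u.2) ∈ Uset c z r := by
  rw [mem_Uset] at hu ⊢
  obtain ⟨e1, e2, e3⟩ := hu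
  refine ⟨fun x => ?_, ?_, ?_⟩
  · by_cases h : x = i
    · subst h; simp only [upd2_i]; exact ⟨h1, h2⟩
    · by_cases h' : x = j
      · subst h'; simp only [upd2_j hij]; exact ⟨h3, h4⟩
      · simp only [upd2_o h h']; exact e1 x
  · rcases hz with ⟨hz1, hz2⟩ | ⟨hz1, hz2⟩
    · simp only [upd2_o hz1.symm hz2.symm]; exact e2
    · subst hz1; simp only [upd2_i]; exact hz2
  · rw [← e3]
    refine sum_two hij _ _ ?_ ?_
    · simp only [upd2_i, upd2_j hij]; linarith
    · intro x h h'
      simp only [upd2_o h h']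

open Classical in
theorem A_stage {m : ℕ} (c : Fin m → ℤ) (r : ℕ) (F : (Fin m → ℤ) → PowerSeries ℤ)
    (hm : 0 < m)
    (hc : ∀ k, ∀ h : k + 1 < m, c ⟨k, by omega⟩ < c ⟨k + 1, h⟩ ∧
      (k = 0 → - c ⟨k, by omega⟩ < c ⟨k + 1, h⟩))
    (hF : ∀ i j : Fin m, i ≠ j → ∀ l, F (upd2 i j (l j) (l i) l) = - F l)
    (hF' : ∀ i j : Fin m, i ≠ j → ∀ l, F (upd2 i j (- l j) (- l i) l) = - F l) (k : ℕ) :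
    ∑ u ∈ Uset c ⟨0, hm⟩ r with (∀ j, k < j → ¬ Acond c j u) ∧ Acond c k u, F u.2 = 0 := by
  by_cases hk : k + 1 < m
  swap
  · rw [Finset.filter_false_of_mem, Finset.sum_empty]
    rintro u _ ⟨_, h, _⟩
    exact hk h
  have hij : (⟨k, by omega⟩ : Fin m) ≠ ⟨k + 1, hk⟩ := by simp
  obtain ⟨hc1, hc2⟩ := hc k hk
  -- later conditions are unaffected
  have later : ∀ (u : (Fin m → ℤ) × (Fin m → ℤ)) (a b a' b' : ℤ),
      (∀ j, k < j → ¬ Acond c j u) → ∀ j, k < j → ¬ Acond c j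
        (upd2 ⟨k, by omega⟩ ⟨k + 1, hk⟩ a b u.1, upd2 ⟨k, by omega⟩ ⟨k + 1, hk⟩ a' b' u.2) := by
    rintro u a b a' b' hu j hj ⟨h, hA⟩
    refine hu j hj ⟨h, ?_⟩
    have e : upd2 ⟨k, by omega⟩ ⟨k + 1, hk⟩ a b u.1 ⟨j + 1, h⟩ = u.1 ⟨j + 1, h⟩ :=
      upd2_o (by simp; omega) (by simp; omega) _ _ _
    simpa only [e] using hA
  generalize hi : (⟨k, by omega⟩ : Fin m) = i at *
  generalize hj : (⟨k + 1, hk⟩ : Fin m) = j at *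
  have hAk : ∀ u, Acond c k u ↔ (u.1 j ≤ c i ∨ (k = 0 ∧ u.1 j ≤ - c i)) := by
    intro u
    subst hi hj
    exact ⟨fun ⟨_, h⟩ => h, fun h => ⟨hk, h⟩⟩
  have hfacts : ∀ u ∈ Uset c ⟨0, hm⟩ r, u.1 i ≤ c i ∧ u.1 i ≤ u.2 i ∧ u.1 j ≤ c j ∧ u.1 j ≤ u.2 j ∧
      (k = 0 → u.1 i = min (c i) (u.2 i)) := by
    intro u hu
    rw [mem_Uset] at hu
    obtain ⟨h1, h2, _⟩ := hu
    refine ⟨(h1 i).1, (h1 i).2, (h1 j).1, (h1 j).2, ?_⟩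
    rintro rfl
    rw [← hi]; exact h2
  by_cases hk0 : k = 0
  · have hiz : i = ⟨0, hm⟩ := by subst hk0; exact hi.symm
    by_cases hpos : 0 ≤ c i
    · refine inv_sum _ _ (fun u => (upd2 i j (min (c i) (u.2 j))
        (u.1 j - min (c i) (u.2 j) + min (c i) (u.2 i)) u.1, upd2 i j (u.2 j) (u.2 i) u.2)) ?_ ?_ ?_
      · intro u hu
        simp only [Finset.mem_filter] at hu ⊢
        obtain ⟨hU, hl, hA⟩ := hu
        have hf := hfacts u hU
        rw [hAk] at hA
        refine ⟨Uset_upd hij u hU _ _ _ _ ?_ ?_ ?_ ?_ (Or.inr ⟨hiz, rfl⟩) ?_, later _ _ _ _ _ hl, ?_⟩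
        · omega
        · omega
        · omega
        · omega
        · omega
        · rw [hAk]
          simp only [upd2_j hij]
          omega
      · intro u hu
        simp only [Finset.mem_filter] at hu
        obtain ⟨hU, hl, hA⟩ := hu
        have hf := hfacts u hU
        simp only [upd2_i, upd2_j hij]
        refine Prod.ext ?_ ?_
        · refine upd2_upd2 _ _ _ _ _ ?_ ?_ <;> omega
        · exact upd2_upd2 _ _ _ _ _ rfl rfl
      · intro u _
        exact hF i j hij u.2
    · refine inv_sum _ _ (fun u => (upd2 i j (min (c i) (- u.2 j))
        (u.1 j - min (- c i) (u.2 j) + min (- c i) (- u.2 i)) u.1,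
        upd2 i j (- u.2 j) (- u.2 i) u.2)) ?_ ?_ ?_
      · intro u hu
        simp only [Finset.mem_filter] at hu ⊢
        obtain ⟨hU, hl, hA⟩ := hu
        have hf := hfacts u hU
        rw [hAk] at hA
        refine ⟨Uset_upd hij u hU _ _ _ _ ?_ ?_ ?_ ?_ (Or.inr ⟨hiz, rfl⟩) ?_, later _ _ _ _ _ hl, ?_⟩
        · omega
        · omega
        · omega
        · omega
        · omega
        · rw [hAk]
          simp only [upd2_j hij]
          omega
      · intro u hu
        simp only [Finset.mem_filter] at hu
        obtain ⟨hU, hl, hA⟩ := hu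
        have hf := hfacts u hU
        simp only [upd2_i, upd2_j hij]
        refine Prod.ext ?_ ?_
        · refine upd2_upd2 _ _ _ _ _ ?_ ?_ <;> omega
        · exact upd2_upd2 _ _ _ _ _ (neg_neg _) (neg_neg _)
      · intro u _
        exact hF' i j hij u.2
  · refine inv_sum _ _ (fun u => (upd2 i j (u.1 j) (u.1 i) u.1,
        upd2 i j (u.2 j) (u.2 i) u.2)) ?_ ?_ ?_
    · intro u hu
      simp only [Finset.mem_filter] at hu ⊢
      obtain ⟨hU, hl, hA⟩ := hu
      have hf := hfacts u hU
      rw [hAk] at hA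
      refine ⟨Uset_upd hij u hU _ _ _ _ ?_ ?_ ?_ ?_ (Or.inl ⟨?_, ?_⟩) ?_, later _ _ _ _ _ hl, ?_⟩
      · omega
      · omega
      · omega
      · omega
      · rw [← hi]; simpa using hk0
      · rw [← hj]; simp
      · omega
      · rw [hAk]
        simp only [upd2_j hij]
        omega
    · intro u hu
      simp only [upd2_i, upd2_j hij]
      refine Prod.ext ?_ ?_
      · exact upd2_upd2 _ _ _ _ _ rfl rfl
      · exact upd2_upd2 _ _ _ _ _ rfl rfl
    · intro u _
      exact hF i j hij u.2

open Classical in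
theorem B_stage {m : ℕ} (c : Fin m → ℤ) (r : ℕ) (F : (Fin m → ℤ) → PowerSeries ℤ)
    (hm : 0 < m)
    (hF : ∀ i j : Fin m, i ≠ j → ∀ l, F (upd2 i j (l j) (l i) l) = - F l)
    (hF' : ∀ i j : Fin m, i ≠ j → ∀ l, F (upd2 i j (- l j) (- l i) l) = - F l) (k : ℕ) :
    ∑ u ∈ Uset c ⟨0, hm⟩ r with
      ((∀ j, ¬ Acond c j u) ∧ (∀ j, j < k → ¬ Bcond j u)) ∧ Bcond k u, F u.2 = 0 := by
  by_cases hk : k + 1 < m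
  swap
  · rw [Finset.filter_false_of_mem, Finset.sum_empty]
    rintro u _ ⟨_, h, _⟩
    exact hk h
  have hij : (⟨k, by omega⟩ : Fin m) ≠ ⟨k + 1, hk⟩ := by simp
  -- the first family of conditions is unaffected
  have hAs : ∀ (u : (Fin m → ℤ) × (Fin m → ℤ)) (a a' b' : ℤ), (k ≠ 0 → a = u.1 ⟨k, by omega⟩) →
      (∀ j, ¬ Acond c j u) → ∀ j, ¬ Acond c j
        (upd2 ⟨k, by omega⟩ ⟨k + 1, hk⟩ a (u.1 ⟨k + 1, hk⟩) u.1,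
          upd2 ⟨k, by omega⟩ ⟨k + 1, hk⟩ a' b' u.2) := by
    rintro u a a' b' ha hu j ⟨h, hA⟩
    refine hu j ⟨h, ?_⟩
    have e : upd2 ⟨k, by omega⟩ ⟨k + 1, hk⟩ a (u.1 ⟨k + 1, hk⟩) u.1 ⟨j + 1, h⟩ =
        u.1 ⟨j + 1, h⟩ := by
      by_cases h1 : j + 1 = k
      · have hk0 : k ≠ 0 := by omega
        subst h1
        rw [upd2_i, ha hk0]
      · by_cases h2 : j = k
        · subst h2
          rw [upd2_j hij]
        · exact upd2_o (by simp; omega) (by simp; omega) _ _ _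
    simpa only [e] using hA
  have hBs : ∀ (u : (Fin m → ℤ) × (Fin m → ℤ)) (a a' b' : ℤ), (k ≠ 0 → a = u.1 ⟨k, by omega⟩) →
      (∀ j, j < k → ¬ Bcond j u) → ∀ j, j < k → ¬ Bcond j
        (upd2 ⟨k, by omega⟩ ⟨k + 1, hk⟩ a (u.1 ⟨k + 1, hk⟩) u.1,
          upd2 ⟨k, by omega⟩ ⟨k + 1, hk⟩ a' b' u.2) := by
    rintro u a a' b' ha hu j hj ⟨h, hA⟩
    refine hu j hj ⟨h, ?_⟩
    have e : upd2 ⟨k, by omega⟩ ⟨k + 1, hk⟩ a (u.1 ⟨k + 1, hk⟩) u.1 ⟨j + 1, h⟩ =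
        u.1 ⟨j + 1, h⟩ := by
      by_cases h1 : j + 1 = k
      · have hk0 : k ≠ 0 := by omega
        subst h1
        rw [upd2_i, ha hk0]
      · exact upd2_o (by simp; omega) (by simp; omega) _ _ _
    have e' : upd2 ⟨k, by omega⟩ ⟨k + 1, hk⟩ a' b' u.2 ⟨j, by omega⟩ =
        u.2 ⟨j, by omega⟩ := upd2_o (by simp; omega) (by simp; omega) _ _ _
    simpa only [e, e'] using hA
  generalize hi : (⟨k, by omega⟩ : Fin m) = i at *
  generalize hj : (⟨k + 1, hk⟩ : Fin m) = j at *
  have hAk : ∀ u, Acond c k u ↔ (u.1 j ≤ c i ∨ (k = 0 ∧ u.1 j ≤ - c i)) := by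
    intro u
    subst hi hj
    exact ⟨fun ⟨_, h⟩ => h, fun h => ⟨hk, h⟩⟩
  have hBk : ∀ u, Bcond k u ↔ (u.1 j ≤ u.2 i ∨ (k = 0 ∧ u.1 j ≤ - u.2 i)) := by
    intro u
    subst hi hj
    exact ⟨fun ⟨_, h⟩ => h, fun h => ⟨hk, h⟩⟩
  have hfacts : ∀ u ∈ Uset c ⟨0, hm⟩ r, u.1 i ≤ c i ∧ u.1 i ≤ u.2 i ∧ u.1 j ≤ c j ∧ u.1 j ≤ u.2 j ∧
      (k = 0 → u.1 i = min (c i) (u.2 i)) := by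
    intro u hu
    rw [mem_Uset] at hu
    obtain ⟨h1, h2, _⟩ := hu
    refine ⟨(h1 i).1, (h1 i).2, (h1 j).1, (h1 j).2, ?_⟩
    rintro rfl
    rw [← hi]; exact h2
  by_cases hk0 : k = 0
  · have hiz : i = ⟨0, hm⟩ := by subst hk0; exact hi.symm
    refine inv_sum _ _ (fun u => if 0 ≤ u.2 i then
        (upd2 i j (min (c i) (u.2 j)) (u.1 j) u.1, upd2 i j (u.2 j) (u.2 i) u.2)
      else (upd2 i j (min (c i) (- u.2 j)) (u.1 j) u.1,
        upd2 i j (- u.2 j) (- u.2 i) u.2)) ?_ ?_ ?_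
    · intro u hu
      simp only [Finset.mem_filter] at hu ⊢
      obtain ⟨hU, ⟨hA, hB⟩, hBB⟩ := hu
      have hf := hfacts u hU
      have hA0 := hA k
      rw [hAk] at hA0
      rw [hBk] at hBB
      split_ifs with hp
      · refine ⟨Uset_upd hij u hU _ _ _ _ ?_ ?_ ?_ ?_ (Or.inr ⟨hiz, rfl⟩) ?_,
          ⟨hAs u _ _ _ (fun h => absurd hk0 h) hA, hBs u _ _ _ (fun h => absurd hk0 h) hB⟩, ?_⟩
        · omega
        · omega
        · omega
        · omega
        · omega
        · rw [hBk]
          simp only [upd2_i, upd2_j hij]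
          omega
      · refine ⟨Uset_upd hij u hU _ _ _ _ ?_ ?_ ?_ ?_ (Or.inr ⟨hiz, rfl⟩) ?_,
          ⟨hAs u _ _ _ (fun h => absurd hk0 h) hA, hBs u _ _ _ (fun h => absurd hk0 h) hB⟩, ?_⟩
        · omega
        · omega
        · omega
        · omega
        · omega
        · rw [hBk]
          simp only [upd2_i, upd2_j hij]
          omega
    · intro u hu
      simp only [Finset.mem_filter] at hu
      obtain ⟨hU, ⟨hA, hB⟩, hBB⟩ := hu
      have hf := hfacts u hU
      have hA0 := hA k
      rw [hAk] at hA0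
      rw [hBk] at hBB
      by_cases hp : 0 ≤ u.2 i
      · have hp' : 0 ≤ u.2 j := by omega
        simp only [if_pos hp, upd2_i, upd2_j hij, if_pos hp']
        refine Prod.ext ?_ ?_
        · refine upd2_upd2 _ _ _ _ _ ?_ ?_ <;> omega
        · exact upd2_upd2 _ _ _ _ _ rfl rfl
      · have hp' : ¬ 0 ≤ - u.2 j := by omega
        simp only [if_neg hp, upd2_i, upd2_j hij, if_neg hp']
        refine Prod.ext ?_ ?_
        · refine upd2_upd2 _ _ _ _ _ ?_ ?_ <;> omega
        · exact upd2_upd2 _ _ _ _ _ (neg_neg _) (neg_neg _)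
    · intro u _
      by_cases hp : 0 ≤ u.2 i
      · simp only [if_pos hp]
        exact hF i j hij u.2
      · simp only [if_neg hp]
        exact hF' i j hij u.2
  · refine inv_sum _ _ (fun u => (upd2 i j (u.1 i) (u.1 j) u.1,
        upd2 i j (u.2 j) (u.2 i) u.2)) ?_ ?_ ?_
    · intro u hu
      simp only [Finset.mem_filter] at hu ⊢
      obtain ⟨hU, ⟨hA, hB⟩, hBB⟩ := hu
      have hf := hfacts u hU
      have hA0 := hA k
      rw [hAk] at hA0
      rw [hBk] at hBB
      refine ⟨Uset_upd hij u hU _ _ _ _ ?_ ?_ ?_ ?_ (Or.inl ⟨?_, ?_⟩) ?_,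
        ⟨hAs u _ _ _ (fun _ => rfl) hA, hBs u _ _ _ (fun _ => rfl) hB⟩, ?_⟩
      · omega
      · omega
      · omega
      · omega
      · rw [← hi]; simpa using hk0
      · rw [← hj]; simp
      · omega
      · rw [hBk]
        simp only [upd2_i, upd2_j hij]
        omega
    · intro u hu
      simp only [upd2_i, upd2_j hij]
      refine Prod.ext ?_ ?_
      · exact upd2_upd2 _ _ _ _ _ rfl rfl
      · exact upd2_upd2 _ _ _ _ _ rfl rfl
    · intro u _
      exact hF i j hij u.2

open Classical in
theorem good_sum {m : ℕ} (c : Fin m → ℤ) (r : ℕ) (F : (Fin m → ℤ) → PowerSeries ℤ)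
    (hm : 0 < m)
    (hc : ∀ k, ∀ h : k + 1 < m, c ⟨k, by omega⟩ < c ⟨k + 1, h⟩ ∧
      (k = 0 → - c ⟨k, by omega⟩ < c ⟨k + 1, h⟩))
    (hF : ∀ i j : Fin m, i ≠ j → ∀ l, F (upd2 i j (l j) (l i) l) = - F l)
    (hF' : ∀ i j : Fin m, i ≠ j → ∀ l, F (upd2 i j (- l j) (- l i) l) = - F l) :
    ∑ u ∈ Uset c ⟨0, hm⟩ r, F u.2 =
      ∑ u ∈ Uset c ⟨0, hm⟩ r with (∀ j, ¬ Acond c j u) ∧ (∀ j, ¬ Bcond j u), F u.2 := by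
  have hA : ∀ k, ∑ u ∈ Uset c ⟨0, hm⟩ r with (∀ j, m - k ≤ j → ¬ Acond c j u), F u.2 =
      ∑ u ∈ Uset c ⟨0, hm⟩ r, F u.2 := by
    intro k
    induction k with
    | zero =>
      rw [Finset.filter_true_of_mem]
      rintro u _ j hj ⟨h, _⟩
      omega
    | succ k ih =>
      by_cases hk : m ≤ k
      · rw [← ih]
        have e1 : m - (k + 1) = m - k := by omega
        rw [e1]
      rw [← ih, ← Finset.sum_filter_add_sum_filter_not
        (Finset.filter (fun u => ∀ j, m - k ≤ j → ¬ Acond c j u) (Uset c ⟨0, hm⟩ r))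
        (fun u => Acond c (m - (k + 1)) u)]
      rw [Finset.filter_filter, Finset.filter_filter]
      have h0 := A_stage c r F hm hc hF hF' (m - (k + 1))
      have e : ∀ j, m - (k + 1) < j ↔ m - k ≤ j := fun j => by omega
      simp only [e] at h0
      rw [h0, zero_add]
      refine Finset.sum_congr ?_ fun _ _ => rfl
      refine Finset.filter_congr fun u _ => ?_
      constructor
      · intro h
        exact ⟨fun j hj => h j (by omega), h _ le_rfl⟩
      · rintro ⟨h, h'⟩ j hj
        by_cases e2 : j = m - (k + 1)
        · rw [e2]; exact h'
        · exact h j (by omega)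
  have hB : ∀ k, ∑ u ∈ Uset c ⟨0, hm⟩ r with
      (∀ j, ¬ Acond c j u) ∧ (∀ j, j < k → ¬ Bcond j u), F u.2 =
      ∑ u ∈ Uset c ⟨0, hm⟩ r, F u.2 := by
    intro k
    induction k with
    | zero =>
      rw [← hA m]
      refine Finset.sum_congr ?_ fun _ _ => rfl
      refine Finset.filter_congr fun u _ => ?_
      simp
    | succ k ih =>
      rw [← ih, ← Finset.sum_filter_add_sum_filter_not
        (Finset.filter (fun u => (∀ j, ¬ Acond c j u) ∧ ∀ j, j < k → ¬ Bcond j u)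
          (Uset c ⟨0, hm⟩ r)) (fun u => Bcond k u)]
      rw [Finset.filter_filter, Finset.filter_filter, B_stage c r F hm hF hF' k, zero_add]
      refine Finset.sum_congr ?_ fun _ _ => rfl
      refine Finset.filter_congr fun u _ => ?_
      constructor
      · rintro ⟨h, h'⟩
        exact ⟨⟨h, fun j hj => h' j (by omega)⟩, h' _ (by omega)⟩
      · rintro ⟨⟨h, h'⟩, h3⟩
        refine ⟨h, fun j hj => ?_⟩
        by_cases e2 : j = k
        · rw [e2]; exact h3
        · exact h' j (by omega)
  rw [← hB m]
  refine Finset.sum_congr ?_ fun _ _ => rfl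
  refine Finset.filter_congr fun u _ => ?_
  constructor
  · rintro ⟨h, h'⟩
    refine ⟨h, fun j hB => h' j ?_ hB⟩
    obtain ⟨h, _⟩ := hB
    omega
  · rintro ⟨h, h'⟩
    exact ⟨h, fun j _ => h' j⟩


theorem sum_update_add {m : ℕ} (z : Fin m) (f g f' g' : Fin m → ℕ) (s : ℕ)
    (h : ∀ x, x ≠ z → f x = f' x ∧ g x = g' x) (hz : f z + g z = f' z + g' z + 2 * s) :
    ∑ x, (f x + g x) = ∑ x, (f' x + g' x) + 2 * s := by
  rw [← Finset.add_sum_erase _ _ (Finset.mem_univ z),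
    ← Finset.add_sum_erase (a := z) Finset.univ (fun x => f' x + g' x) (Finset.mem_univ z)]
  have : ∑ x ∈ Finset.univ.erase z, (f x + g x) = ∑ x ∈ Finset.univ.erase z, (f' x + g' x) :=
    Finset.sum_congr rfl fun x hx => by
      have := h x (Finset.ne_of_mem_erase hx)
      omega
  omega

theorem pairs_split (m l : ℕ) (z : Fin m) (G : (Fin m → ℤ) → PowerSeries ℤ) :
    ∑ t ∈ pairsS m l, G (fun i => (t.2 i : ℤ) - (t.1 i : ℤ)) =
      ∑ p ∈ Finset.range (l + 1) ×ˢ Finset.range (l + 1),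
        if p.1 + 2 * p.2 = l then
          ∑ t ∈ pairsT m p.1 z, G (fun i => (t.2 i : ℤ) - (t.1 i : ℤ)) else 0 := by
  have hle : ∀ t ∈ pairsS m l, t.1 z + t.2 z ≤ l := fun t ht => by
    rw [mem_pairsS] at ht
    rw [← ht]
    exact Finset.single_le_sum (f := fun i => t.1 i + t.2 i) (fun _ _ => Nat.zero_le _)
      (Finset.mem_univ z)
  rw [← Finset.sum_fiberwise_of_maps_to (t := Finset.range (l + 1) ×ˢ Finset.range (l + 1))
    (g := fun t => (l - 2 * min (t.1 z) (t.2 z), min (t.1 z) (t.2 z)))]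
  · refine Finset.sum_congr rfl fun p hp => ?_
    split_ifs with hpl
    · refine Finset.sum_bij'
        (fun t _ => (Function.update t.1 z (t.1 z - p.2), Function.update t.2 z (t.2 z - p.2)))
        (fun t _ => (Function.update t.1 z (t.1 z + p.2), Function.update t.2 z (t.2 z + p.2)))
        ?_ ?_ ?_ ?_ ?_
      · intro t ht
        rw [Finset.mem_filter] at ht
        have h1 := hle t ht.1
        obtain ⟨ht, h2⟩ := ht
        have h3 : min (t.1 z) (t.2 z) = p.2 := congrArg Prod.snd h2
        unfold pairsT
        rw [mem_pairsS] at ht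
        rw [Finset.mem_filter, mem_pairsS]
        simp only [Function.update_self]
        refine ⟨?_, by omega⟩
        have := sum_update_add z t.1 t.2 (Function.update t.1 z (t.1 z - p.2))
          (Function.update t.2 z (t.2 z - p.2)) p.2
          (fun x hx => by simp [Function.update_of_ne hx])
          (by simp only [Function.update_self]; omega)
        omega
      · intro t ht
        unfold pairsT at ht
        rw [Finset.mem_filter, mem_pairsS] at ht
        obtain ⟨ht, h2⟩ := ht
        rw [Finset.mem_filter, mem_pairsS]
        simp only [Function.update_self]
        constructor
        · rw [sum_update_add z (Function.update t.1 z (t.1 z + p.2))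
            (Function.update t.2 z (t.2 z + p.2)) t.1 t.2 p.2
            (fun x hx => by simp [Function.update_of_ne hx])
            (by simp only [Function.update_self]; omega)]
          omega
        · refine Prod.ext ?_ ?_ <;> simp only <;> omega
      · intro t ht
        rw [Finset.mem_filter] at ht
        have h3 : min (t.1 z) (t.2 z) = p.2 := congrArg Prod.snd ht.2
        refine Prod.ext ?_ ?_
        · simp only [Function.update_self, Function.update_idem]
          rw [Function.update_eq_self_iff]; omega
        · simp only [Function.update_self, Function.update_idem]
          rw [Function.update_eq_self_iff]; omega
      · intro t ht
        refine Prod.ext ?_ ?_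
        · simp only [Function.update_self, Function.update_idem]
          rw [Function.update_eq_self_iff]; omega
        · simp only [Function.update_self, Function.update_idem]
          rw [Function.update_eq_self_iff]; omega
      · intro t ht
        rw [Finset.mem_filter] at ht
        have h3 : min (t.1 z) (t.2 z) = p.2 := congrArg Prod.snd ht.2
        congr 1
        funext i
        by_cases hi : i = z
        · subst hi
          simp only [Function.update_self]
          omega
        · simp only [Function.update_of_ne hi]
    · refine Finset.sum_eq_zero fun t ht => ?_
      exfalso
      rw [Finset.mem_filter] at ht
      have h1 := hle t ht.1
      have h3 : min (t.1 z) (t.2 z) = p.2 := congrArg Prod.snd ht.2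
      have h4 : l - 2 * min (t.1 z) (t.2 z) = p.1 := congrArg Prod.fst ht.2
      omega
  · intro t ht
    have := hle t ht
    simp only [Finset.mem_product, Finset.mem_range]
    omega

theorem KD_eq_FD (m : ℕ) (β : Fin m → ℤ) (mu : Fin m → ℚ) :
    KD m (fun i => (β i : ℚ)) mu =
      FD m (fun i => mu i + ((i : ℕ) : ℚ)) (fun i => β i + ((i : ℕ) : ℤ)) := by
  unfold KD FD
  refine Finset.sum_congr rfl fun σ _ => Finset.sum_congr rfl fun ε _ => ?_
  have e1 : ((fun i => (β i : ℚ)) + rhoD m) = fun i => (((β i + ((i : ℕ) : ℤ) : ℤ)) : ℚ) := by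
    funext i; simp [rhoD]
  have e2 : mu + rhoD m = fun i => mu i + ((i : ℕ) : ℚ) := rfl
  rw [e1, e2]

/-- the goodness condition in terms of the original data -/
def GoodT {m : ℕ} (γ : Fin m → ℤ) (t : (Fin m → ℕ) × (Fin m → ℕ)) : Prop :=
  ∀ k, ∀ h : k + 1 < m,
    γ ⟨k, by omega⟩ ≤ γ ⟨k + 1, h⟩ - t.1 ⟨k + 1, h⟩ ∧
    γ ⟨k, by omega⟩ + ((t.2 ⟨k, by omega⟩ : ℤ) - t.1 ⟨k, by omega⟩) ≤
      γ ⟨k + 1, h⟩ - t.1 ⟨k + 1, h⟩ ∧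
    (k = 0 → - γ ⟨k, by omega⟩ ≤ γ ⟨k + 1, h⟩ - t.1 ⟨k + 1, h⟩ ∧
      - (γ ⟨k, by omega⟩ + ((t.2 ⟨k, by omega⟩ : ℤ) - t.1 ⟨k, by omega⟩)) ≤
      γ ⟨k + 1, h⟩ - t.1 ⟨k + 1, h⟩)

theorem goodT_iff {m : ℕ} (γ : Fin m → ℤ) (t : (Fin m → ℕ) × (Fin m → ℕ)) :
    ((∀ j, ¬ Acond (fun i => γ i + ((i : ℕ) : ℤ)) j (phi (fun i => γ i + ((i : ℕ) : ℤ)) t)) ∧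
      (∀ j, ¬ Bcond j (phi (fun i => γ i + ((i : ℕ) : ℤ)) t))) ↔ GoodT γ t := by
  unfold Acond Bcond GoodT phi
  simp only [not_exists, not_or, not_and, not_le]
  constructor
  · rintro ⟨h1, h2⟩ k h
    have a := h1 k h
    have b := h2 k h
    push_cast at a b
    refine ⟨by omega, by omega, fun hk => ?_⟩
    have a' := a.2 hk
    have b' := b.2 hk
    subst hk
    constructor <;> omega
  · intro H
    refine ⟨fun k h => ?_, fun k h => ?_⟩
    · have a := H k h
      push_cast
      refine ⟨by omega, fun hk => ?_⟩
      have a' := a.2.2 hk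
      subst hk
      simp only [zero_add] at *
      push_cast
      omega
    · have a := H k h
      push_cast
      refine ⟨by omega, fun hk => ?_⟩
      have a' := a.2.2 hk
      subst hk
      simp only [zero_add] at *
      push_cast
      omega

open Classical in
theorem sum_pairsT (m r : ℕ) (hm : 0 < m) (γ : Fin m → ℤ) (κ : Fin m → ℚ)
    (hγ : ∀ k, ∀ h : k + 1 < m, γ ⟨k, by omega⟩ ≤ γ ⟨k + 1, h⟩ ∧
      (k = 0 → - γ ⟨k, by omega⟩ ≤ γ ⟨k + 1, h⟩)) :
    ∑ t ∈ pairsT m r ⟨0, hm⟩,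
        FD m κ (fun i => γ i + ((i : ℕ) : ℤ) + ((t.2 i : ℤ) - (t.1 i : ℤ))) =
      ∑ t ∈ pairsT m r ⟨0, hm⟩ with GoodT γ t,
        FD m κ (fun i => γ i + ((i : ℕ) : ℤ) + ((t.2 i : ℤ) - (t.1 i : ℤ))) := by
  have key := good_sum (fun i => γ i + ((i : ℕ) : ℤ)) r (FD m κ) hm
    (fun k h => by
      have := hγ k h
      push_cast
      refine ⟨by omega, fun hk => ?_⟩
      have a' := this.2 hk
      subst hk
      simp only [zero_add] at *
      push_cast
      omega)
    (fun i j hij l => FD_swap m κ l i j hij) (fun i j hij l => FD_negswap m κ l i j hij)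
  unfold Uset at key
  rw [Finset.sum_image (fun _ _ _ _ h => phi_inj _ h), Finset.filter_image,
    Finset.sum_image (fun _ _ _ _ h => phi_inj _ h)] at key
  simp only [goodT_iff] at key
  exact key

theorem dPieri_eq (m r : ℕ) (hm : 1 < m) (γ lam : Fin m → ℤ) :
    dPieri (fun i => (γ i : ℚ)) (fun i => (lam i : ℚ)) r =
      Nat.card {t : (Fin m → ℕ) × (Fin m → ℕ) //
        (t ∈ pairsT m r ⟨0, by omega⟩ ∧ GoodT γ t) ∧
          (fun i => γ i + ((t.2 i : ℤ) - t.1 i)) = lam} := by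
  unfold dPieri
  refine Nat.card_congr (Equiv.subtypeEquivRight fun t => ?_)
  unfold pairsT
  rw [Finset.mem_filter, mem_pairsS]
  constructor
  · rintro ⟨h0, hs, hd, h4, h5, h6, h7⟩
    have hd' : ∀ i, (t.2 i : ℤ) - t.1 i = lam i - γ i := fun i => by
      have := hd i
      simp only [← Int.cast_natCast (R := ℚ), ← Int.cast_sub, ← Int.cast_add, ← Int.cast_neg,
        Int.cast_le, Int.cast_inj, Int.cast_nonneg_iff, Int.cast_lt_zero] at this
      exact this
    refine ⟨⟨⟨hs, h0 (by omega)⟩, ?_⟩, ?_⟩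
    · intro k h
      have e0 := hd' ⟨k, by omega⟩
      have e1 := hd' ⟨k + 1, h⟩
      by_cases hk : k = 0
      · subst hk
        have m0 := h0 (by omega)
        obtain ⟨a1, a2⟩ := h4 h
        obtain ⟨b1, b2, b3, b4⟩ := h7 h
        simp only [← Int.cast_natCast (R := ℚ), ← Int.cast_sub, ← Int.cast_add, ← Int.cast_neg,
        Int.cast_le, Int.cast_inj, Int.cast_nonneg_iff, Int.cast_lt_zero] at a1 a2 b1 b2 b3 b4
        simp only [zero_add] at *
        omega
      · have a := h5 ⟨k, by omega⟩ (by simp only; omega) h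
        have b := h6 ⟨k, by omega⟩ (by simp only; omega) h
        simp only [← Int.cast_natCast (R := ℚ), ← Int.cast_sub, ← Int.cast_add, ← Int.cast_neg,
        Int.cast_le, Int.cast_inj, Int.cast_nonneg_iff, Int.cast_lt_zero] at a b
        simp only at *
        omega
    · funext i
      have := hd' i
      omega
  · rintro ⟨⟨⟨hs, h0⟩, hg⟩, rfl⟩
    refine ⟨fun _ => h0, hs, fun i => by push_cast; ring, ?_, ?_, ?_, ?_⟩
    · intro h
      have := hg 0 h
      have this2 := this.2.2 rfl
      simp only [← Int.cast_natCast (R := ℚ), ← Int.cast_sub, ← Int.cast_add, ← Int.cast_neg,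
        Int.cast_le, Int.cast_inj, Int.cast_nonneg_iff, Int.cast_lt_zero]
      simp only [zero_add] at *
      omega
    · rintro ⟨i, hi0⟩ hi h
      have := hg i h
      simp only [← Int.cast_natCast (R := ℚ), ← Int.cast_sub, ← Int.cast_add, ← Int.cast_neg,
        Int.cast_le, Int.cast_inj, Int.cast_nonneg_iff, Int.cast_lt_zero]
      omega
    · rintro ⟨i, hi0⟩ hi h
      have := hg i h
      simp only [← Int.cast_natCast (R := ℚ), ← Int.cast_sub, ← Int.cast_add, ← Int.cast_neg,
        Int.cast_le, Int.cast_inj, Int.cast_nonneg_iff, Int.cast_lt_zero]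
      omega
    · intro h
      have := hg 0 h
      have this2 := this.2.2 rfl
      simp only [← Int.cast_natCast (R := ℚ), ← Int.cast_sub, ← Int.cast_add, ← Int.cast_neg,
        Int.cast_le, Int.cast_inj, Int.cast_nonneg_iff, Int.cast_lt_zero]
      simp only [zero_add] at *
      omega

theorem GoodT.dominant {m : ℕ} (hm : 1 < m) {γ : Fin m → ℤ} {t : (Fin m → ℕ) × (Fin m → ℕ)}
    (h : GoodT γ t) :
    DominantD (fun i => ((γ i + ((t.2 i : ℤ) - t.1 i) : ℤ) : ℚ)) := by
  have hstep : ∀ a d : ℕ, ∀ h1 : a + d < m, 0 < a →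
      γ ⟨a, by omega⟩ + ((t.2 ⟨a, by omega⟩ : ℤ) - t.1 ⟨a, by omega⟩) ≤
      γ ⟨a + d, h1⟩ + ((t.2 ⟨a + d, h1⟩ : ℤ) - t.1 ⟨a + d, h1⟩) := by
    intro a d
    induction d with
    | zero => intro h1 _; exact le_rfl
    | succ d ih =>
      intro h1 h2
      have h3 := ih (by omega) h2
      have h4 := h (a + d) h1
      have h5 : γ ⟨a + (d + 1), h1⟩ = γ ⟨a + d + 1, h1⟩ := rfl
      have h6 : t.1 ⟨a + (d + 1), h1⟩ = t.1 ⟨a + d + 1, h1⟩ := rfl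
      have h7 : t.2 ⟨a + (d + 1), h1⟩ = t.2 ⟨a + d + 1, h1⟩ := rfl
      rw [h5, h6, h7]
      omega
  refine ⟨?_, ?_, Or.inl fun i => ⟨_, rfl⟩⟩
  · intro i j hij hi
    obtain ⟨d, hd⟩ := Nat.exists_eq_add_of_le (show (i : ℕ) ≤ j from hij)
    have := hstep i d (by have := j.2; omega) hi
    have e : (⟨(i : ℕ) + d, by have := j.2; omega⟩ : Fin m) = j := Fin.ext hd.symm
    rw [e] at this
    simp only [Int.cast_le]
    exact this
  · intro h0 j hj
    obtain ⟨d, hd⟩ := Nat.exists_eq_add_of_le (show 1 ≤ (j : ℕ) from hj)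
    have := hstep 1 d (by have := j.2; omega) (by omega)
    have e : (⟨1 + d, by have := j.2; omega⟩ : Fin m) = j := Fin.ext hd.symm
    rw [e] at this
    have a := h 0 hm
    have a' := a.2.2 rfl
    simp only [zero_add] at a a'
    rw [← Int.cast_abs, Int.cast_le, abs_le]
    constructor <;> omega

open Classical in
theorem finsum_good (m r : ℕ) (hm : 1 < m) (γ : Fin m → ℤ) (mu : Fin m → ℚ) :
    ∑ᶠ lam ∈ {lam : Fin m → ℚ | DominantD lam ∧ ∀ i, ∃ z : ℤ, lam i = z},
      (dPieri (fun i => (γ i : ℚ)) lam r : ℤ) • KD m lam mu =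
    ∑ t ∈ pairsT m r ⟨0, by omega⟩ with GoodT γ t,
      KD m (fun i => ((γ i + ((t.2 i : ℤ) - (t.1 i : ℤ)) : ℤ) : ℚ)) mu := by
  set S := (pairsT m r ⟨0, by omega⟩).filter (GoodT γ) with hS
  set img : (Fin m → ℕ) × (Fin m → ℕ) → Fin m → ℚ :=
    fun t i => ((γ i + ((t.2 i : ℤ) - (t.1 i : ℤ)) : ℤ) : ℚ) with himg
  have hcard : ∀ lam : Fin m → ℤ, dPieri (fun i => (γ i : ℚ)) (fun i => (lam i : ℚ)) r =
      (S.filter fun t => img t = fun i => (lam i : ℚ)).card := by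
    intro lam
    rw [dPieri_eq m r hm]
    refine Nat.subtype_card _ fun t => ?_
    rw [Finset.mem_filter, hS, Finset.mem_filter, himg]
    refine and_congr_right fun _ => ?_
    constructor
    · intro h
      funext i
      have := congrFun h i
      exact Int.cast_injective (α := ℚ) this
    · rintro rfl
      rfl
  have hc := Finset.sum_comp (s := S) (fun lam => KD m lam mu) img
  refine Eq.trans ?_ hc.symm
  rw [finsum_mem_eq_sum_of_inter_support_eq (t := S.image img)]
  · refine Finset.sum_congr rfl fun lam hl => ?_
    obtain ⟨t, ht, rfl⟩ := Finset.mem_image.1 hl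
    have := hcard (fun i => γ i + ((t.2 i : ℤ) - (t.1 i : ℤ)))
    rw [himg] at this ⊢
    rw [this, natCast_zsmul]
  · ext lam
    simp only [Set.mem_inter_iff, Set.mem_ofPred_eq, Function.mem_support, Finset.coe_image,
      Set.mem_image, Finset.mem_coe]
    constructor
    · rintro ⟨⟨h1, h2⟩, h3⟩
      refine ⟨?_, h3⟩
      choose z hz using h2
      obtain rfl : lam = fun i => (z i : ℚ) := funext hz
      have h4 : dPieri (fun i => (γ i : ℚ)) (fun i => (z i : ℚ)) r ≠ 0 := by
        intro h0
        apply h3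
        rw [h0]
        simp
      rw [hcard, ← Nat.pos_iff_ne_zero, Finset.card_pos] at h4
      obtain ⟨t, ht⟩ := h4
      rw [Finset.mem_filter] at ht
      exact ⟨t, ht⟩
    · rintro ⟨⟨t, ht, rfl⟩, h3⟩
      rw [hS, Finset.mem_filter] at ht
      exact ⟨⟨ht.2.dominant hm, fun i => ⟨_, rfl⟩⟩, h3⟩

theorem main_step (m : ℕ) (hm : 1 < m) (ν μ : Fin (m + 1) → ℤ)
    (hν : DominantD (fun i => (ν i : ℚ))) (hμ : DominantD (fun i => (μ i : ℚ)))
    (h1 : ν ⟨m - 1, by omega⟩ ≤ μ (Fin.last m))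
    (h2 : μ (Fin.last m) ≤ ν (Fin.last m)) :
    KD (m + 1) (fun i => (ν i : ℚ)) (fun i => (μ i : ℚ)) =
      (PowerSeries.X : PowerSeries ℤ) ^ (ν (Fin.last m) - μ (Fin.last m)).toNat *
        ∑ p ∈ Finset.range ((ν (Fin.last m) - μ (Fin.last m)).toNat + 1) ×ˢ
              Finset.range ((ν (Fin.last m) - μ (Fin.last m)).toNat + 1),
          if p.1 + 2 * p.2 = (ν (Fin.last m) - μ (Fin.last m)).toNat then
            ∑ᶠ lam ∈ {lam : Fin m → ℚ | DominantD lam ∧ ∀ i, ∃ z : ℤ, lam i = z},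
              (dPieri (fun i : Fin m => (ν i.castSucc : ℚ)) lam p.1 : ℤ) •
                KD m lam (fun i : Fin m => (μ i.castSucc : ℚ))
          else 0 := by
  obtain ⟨hν1, hν2, -⟩ := hν
  obtain ⟨hμ1, hμ2, -⟩ := hμ
  have hm0 : |μ ⟨0, by omega⟩| ≤ μ (Fin.last m) := by
    have := hμ2 (by omega) (Fin.last m) (by simp only [Fin.val_last]; omega)
    dsimp only at this
    exact_mod_cast this
  have hn0 : ∀ j : Fin (m + 1), 0 < (j : ℕ) → |ν ⟨0, by omega⟩| ≤ ν j := fun j hj => by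
    have := hν2 (by omega) j hj
    dsimp only at this
    exact_mod_cast this
  have hnm : ∀ i j : Fin (m + 1), i ≤ j → 0 < (i : ℕ) → ν i ≤ ν j := fun i j hij hi => by
    have := hν1 i j hij hi
    dsimp only at this
    exact_mod_cast this
  have hm1 : 0 ≤ μ (Fin.last m) := le_trans (abs_nonneg _) hm0
  have hlast : ∀ i : Fin m, |ν i.castSucc + (i : ℕ)| < μ (Fin.last m) + m := by
    intro i
    have hi := i.2
    have hx := hn0 ⟨m - 1, by omega⟩ (by simp only; omega)
    rw [abs_le] at hx
    by_cases h0 : (i : ℕ) = 0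
    · have e : i.castSucc = ⟨0, by omega⟩ := Fin.ext h0
      rw [e, abs_lt, h0]
      push_cast
      constructor <;> omega
    · have ha := hnm i.castSucc ⟨m - 1, by omega⟩
        (by rw [Fin.le_def]; simp only [Fin.val_castSucc]; omega)
        (by simp only [Fin.val_castSucc]; omega)
      have hb := hn0 i.castSucc (by simp only [Fin.val_castSucc]; omega)
      have hb' := le_trans (abs_nonneg _) hb
      rw [abs_lt]
      constructor <;> omega
  rw [KD_rec m ν μ (by omega) hlast h2]
  congr 1
  have key := pairs_split m (ν (Fin.last m) - μ (Fin.last m)).toNat ⟨0, by omega⟩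
    (fun d => FD m (fun i => (μ i.castSucc : ℚ) + ((i : ℕ) : ℚ))
      (fun i => ν i.castSucc + (i : ℕ) + d i))
  refine key.trans (Finset.sum_congr rfl fun p _ => ?_)
  split_ifs with hp
  · rw [finsum_good m p.1 hm (fun i => ν i.castSucc)]
    refine (sum_pairsT m p.1 (by omega) (fun i => ν i.castSucc) _ ?_).trans ?_
    · intro k hk
      have hb := hn0 ⟨k + 1, by omega⟩ (by simp only; omega)
      rw [abs_le] at hb
      by_cases h0 : k = 0
      · subst h0
        simp only [Fin.castSucc_mk]
        constructor
        · omega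
        · intro; omega
      · refine ⟨?_, fun h => absurd h h0⟩
        exact hnm _ _ (by rw [Fin.le_def]; simp) (by simp only [Fin.val_castSucc]; omega)
    · refine Finset.sum_congr rfl fun t _ => ?_
      rw [KD_eq_FD]
      congr 1
      funext i
      ring
  · rfl

end KDproof

/-- If `μ_n ≥ ν_{n-1}` and `l = ν_n - μ_n ≥ 0` then
`K^{D_n}_{ν,μ}(q) = q^l ∑_{r+2m=l} ∑_λ d^λ_{ν',r} K^{D_{n-1}}_{λ,μ'}(q)`. -/
theorem KD_top_row_reduction (n : ℕ) (hn : 3 ≤ n) (ν μ : Fin n → ℤ)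
    (hν : DominantD (fun i => (ν i : ℚ))) (hμ : DominantD (fun i => (μ i : ℚ)))
    (h1 : ν ⟨n - 2, by omega⟩ ≤ μ ⟨n - 1, by omega⟩)
    (h2 : μ ⟨n - 1, by omega⟩ ≤ ν ⟨n - 1, by omega⟩) :
    KD n (fun i => (ν i : ℚ)) (fun i => (μ i : ℚ)) =
      (PowerSeries.X : PowerSeries ℤ) ^ (ν ⟨n - 1, by omega⟩ - μ ⟨n - 1, by omega⟩).toNat *
        ∑ p ∈ Finset.range ((ν ⟨n - 1, by omega⟩ - μ ⟨n - 1, by omega⟩).toNat + 1) ×ˢ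
              Finset.range ((ν ⟨n - 1, by omega⟩ - μ ⟨n - 1, by omega⟩).toNat + 1),
          if p.1 + 2 * p.2 = (ν ⟨n - 1, by omega⟩ - μ ⟨n - 1, by omega⟩).toNat then
            ∑ᶠ lam ∈ {lam : Fin (n - 1) → ℚ | DominantD lam ∧ ∀ i, ∃ z : ℤ, lam i = z},
              (dPieri (restrict1 fun i => (ν i : ℚ)) lam p.1 : ℤ) •
                KD (n - 1) lam (restrict1 fun i => (μ i : ℚ))
          else 0 := by
  obtain ⟨m, rfl⟩ : ∃ m, n = m + 1 := ⟨n - 1, by omega⟩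
  exact main_step m (by omega) ν μ hν hμ h1 h2
end

section
/- Let X be one of the types B, C, D (with n ≥ 1 for X = B, C and n ≥ 3 for X = D). Let μ = (μ_n,…,μ_1) ∈ ℤ^n with μ_n ≥ … ≥ μ_1 ≥ 0, let r ∈ ℕ with r ≥ |μ| = Σ_{i=1}^n μ_i, and set l = r − |μ| and h_n(μ) = Σ_{i=1}^n (n−i)·μ_i. Then K^{X_n}_{(r,0,…,0),μ}(q) = q^{h_n(μ)} · K^{X_n}_{(l,0,…,0),0}(q), where (r,0,…,0) denotes the dominant weight whose e_n-coordinate is r and whose other coordinates are 0, and 0 denotes the zero weight. -/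
open scoped BigOperators

namespace RS
open Finset

theorem kq_coeff {n : ℕ} (R : Finset (Fin n → ℚ)) (β : Fin n → ℚ) (k : ℕ) :
    PowerSeries.coeff k (kostantQ R β) =
      ∑ m ∈ Finset.piAntidiag R k, if ∑ α ∈ R, (m α : ℚ) • α = β then (1 : ℤ) else 0 := by
  classical
  rw [kostantQ, PowerSeries.coeff_mk, Finset.sum_boole]
  congr 1
  let e : {m : {α // α ∈ R} → ℕ //
      (∑ α, m α) = k ∧ (∑ α, (m α : ℚ) • (α : Fin n → ℚ)) = β} ≃
      ↥((Finset.piAntidiag R k).filter fun m => ∑ α ∈ R, (m α : ℚ) • α = β) :=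
    { toFun := fun m => ⟨fun α => if h : α ∈ R then m.1 ⟨α, h⟩ else 0, by
        obtain ⟨m, h1, h2⟩ := m
        simp only [mem_filter, mem_piAntidiag]
        refine ⟨⟨?_, ?_⟩, ?_⟩
        · rw [← Finset.sum_attach]; simpa using h1
        · intro i hi; by_contra h; simp [h] at hi
        · rw [← Finset.sum_attach]; simpa using h2⟩
      invFun := fun m => ⟨fun α => m.1 α.1, by
        obtain ⟨m, hm⟩ := m
        simp only [mem_filter, mem_piAntidiag] at hm
        obtain ⟨⟨h1, h2⟩, h3⟩ := hm
        refine ⟨?_, ?_⟩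
        · exact (Finset.sum_attach R (fun α => m α)).trans h1
        · exact (Finset.sum_attach R (fun α => (m α : ℚ) • α)).trans h3⟩
      left_inv := fun m => by
        ext α; simp
      right_inv := fun m => by
        obtain ⟨m, hm⟩ := m
        simp only [mem_filter, mem_piAntidiag] at hm
        ext α
        by_cases h : α ∈ R
        · simp [h]
        · have := hm.1.2 α
          simp only [h, dite_false]
          by_contra h'
          exact h (this (fun h0 => h' h0.symm)) }
  rw [Nat.card_congr e, Nat.card_eq_fintype_card, Fintype.card_coe]

theorem kq_insert_coeff {n : ℕ} (R : Finset (Fin n → ℚ)) (a : Fin n → ℚ) (ha : a ∉ R)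
    (β : Fin n → ℚ) (k : ℕ) :
    PowerSeries.coeff k (kostantQ (insert a R) β) =
      ∑ p ∈ antidiagonal k, PowerSeries.coeff p.2 (kostantQ R (β - (p.1 : ℚ) • a)) := by
  classical
  rw [kq_coeff, ← Finset.cons_eq_insert a R ha, Finset.piAntidiag_cons, Finset.sum_disjiUnion]
  refine Finset.sum_congr rfl fun p _ => ?_
  rw [Finset.sum_map, kq_coeff]
  refine Finset.sum_congr rfl fun m hm => ?_
  rw [mem_piAntidiag] at hm
  have hma : m a = 0 := by by_contra h; exact ha (hm.2 a h)
  refine if_congr ?_ rfl rfl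
  rw [Finset.sum_cons]
  have : ∑ x ∈ R, (((addRightEmbedding fun t => if t = a then p.1 else 0) m) x : ℚ) • x
      = ∑ x ∈ R, (m x : ℚ) • x := by
    refine Finset.sum_congr rfl fun x hx => ?_
    have : x ≠ a := fun h => ha (h ▸ hx)
    simp [this]
  rw [this]
  simp only [addRightEmbedding_apply, Pi.add_apply, hma, if_true, zero_add]
  rw [eq_sub_iff_add_eq, add_comm]

theorem kq_empty {n : ℕ} (β : Fin n → ℚ) : kostantQ ∅ β = if β = 0 then 1 else 0 := by
  classical
  ext k
  rw [kq_coeff]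
  rcases Nat.eq_zero_or_pos k with rfl | hk
  · by_cases h : β = 0
    · simp [h]
    · simp [h, Ne.symm h]
  · rw [Finset.piAntidiag_empty_of_ne_zero hk.ne']
    by_cases h : β = 0
    · simp [h, PowerSeries.coeff_one, hk.ne']
    · simp [h]

theorem kq_zero {n : ℕ} (R : Finset (Fin n → ℚ)) (l : (Fin n → ℚ) →ₗ[ℚ] ℚ)
    (hl : ∀ a ∈ R, 0 ≤ l a) (β : Fin n → ℚ) (hβ : l β < 0) : kostantQ R β = 0 := by
  classical
  ext k
  rw [kq_coeff]
  simp only [map_zero]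
  refine Finset.sum_eq_zero fun m _ => ?_
  rw [if_neg]
  rintro rfl
  rw [map_sum] at hβ
  refine absurd hβ (not_lt.mpr (Finset.sum_nonneg fun a ha => ?_))
  rw [map_smul, smul_eq_mul]
  exact mul_nonneg (Nat.cast_nonneg _) (hl a ha)

/-- Truncated expansion along one root. -/
theorem kq_insert {n : ℕ} (R : Finset (Fin n → ℚ)) (a : Fin n → ℚ) (ha : a ∉ R)
    (β : Fin n → ℚ) (N : ℕ) (h0 : ∀ c : ℕ, N < c → kostantQ R (β - (c : ℚ) • a) = 0) :
    kostantQ (insert a R) β =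
      ∑ c ∈ range (N + 1), PowerSeries.X ^ c * kostantQ R (β - (c : ℚ) • a) := by
  ext k
  rw [kq_insert_coeff R a ha, map_sum,
    Finset.Nat.sum_antidiagonal_eq_sum_range_succ_mk]
  simp only [PowerSeries.coeff_X_pow_mul']
  have h1 : ∀ K : ℕ, k ≤ K → N ≤ K → ∑ x ∈ range (k+1),
      PowerSeries.coeff (k - x) (kostantQ R (β - (x : ℚ) • a)) =
      ∑ c ∈ range (K + 1), if c ≤ k then
        PowerSeries.coeff (k - c) (kostantQ R (β - (c : ℚ) • a)) else 0 := by
    intro K hk _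
    rw [← Finset.sum_filter]
    refine Finset.sum_congr ?_ fun _ _ => rfl
    ext x; simp; omega
  have h2 : ∑ c ∈ range (N + 1), (if c ≤ k then
        PowerSeries.coeff (k - c) (kostantQ R (β - (c : ℚ) • a)) else 0) =
      ∑ c ∈ range (max k N + 1), if c ≤ k then
        PowerSeries.coeff (k - c) (kostantQ R (β - (c : ℚ) • a)) else 0 := by
    refine Finset.sum_subset ?_ ?_
    · intro x; simp; omega
    · intro x _ hx
      rw [h0 x (by simpa using hx)]; simp
  rw [h1 _ (le_max_left k N) (le_max_right k N), h2]

/-- Extending a weight by a last coordinate. -/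
def sn {n : ℕ} (β : Fin n → ℚ) (x : ℚ) : Fin (n + 1) → ℚ := Fin.snoc (α := fun _ => ℚ) β x

@[simp] theorem sn_castSucc {n : ℕ} (β : Fin n → ℚ) (x : ℚ) (i : Fin n) :
    sn β x i.castSucc = β i := by simp [sn]
@[simp] theorem sn_last {n : ℕ} (β : Fin n → ℚ) (x : ℚ) :
    sn β x (Fin.last n) = x := by simp [sn]

theorem sn_inj {n : ℕ} {β γ : Fin n → ℚ} {x y : ℚ} : sn β x = sn γ y ↔ β = γ ∧ x = y := by
  simp [sn, Fin.snoc_inj]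

theorem sn_sub {n : ℕ} (β γ : Fin n → ℚ) (x y c : ℚ) :
    sn β x - c • sn γ y = sn (β - c • γ) (x - c * y) := by
  ext i
  refine Fin.lastCases ?_ (fun i => ?_) i <;> simp

theorem sn_ext {n : ℕ} {β : Fin n → ℚ} {x : ℚ} {v : Fin (n+1) → ℚ}
    (h1 : ∀ i : Fin n, v i.castSucc = β i) (h2 : v (Fin.last n) = x) : v = sn β x := by
  ext i
  refine Fin.lastCases ?_ (fun i => ?_) i
  · simp [h2]
  · simp [h1]

theorem kq_lift {n : ℕ} (R : Finset (Fin n → ℚ)) : ∀ (β : Fin n → ℚ) (x : ℚ),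
    kostantQ (R.image fun v => sn v 0) (sn β x) = if x = 0 then kostantQ R β else 0 := by
  classical
  induction R using Finset.induction_on with
  | empty =>
    intro β x
    rw [Finset.image_empty, kq_empty, kq_empty]
    have h : (0 : Fin (n+1) → ℚ) = sn 0 0 := sn_ext (by simp) (by simp)
    rw [h]
    simp only [sn_inj]
    split_ifs <;> simp_all
  | insert a R ha ih =>
    intro β x
    rw [Finset.image_insert]
    have hna : sn a 0 ∉ R.image fun v => sn v 0 := by
      simp only [mem_image, sn_inj]
      rintro ⟨b, hb, rfl, -⟩
      exact ha hb
    ext k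
    rw [kq_insert_coeff _ _ hna]
    simp only [sn_sub, mul_zero, sub_zero, ih]
    split_ifs with hx
    · rw [kq_insert_coeff _ _ ha]
    · simp

/-- Complete homogeneous operators attached to a list of vectors. -/
def hh {n : ℕ} (τ : ℕ → ℤ) : List (Fin n → ℚ) → ℕ → ((Fin n → ℚ) → PowerSeries ℤ) →
    (Fin n → ℚ) → PowerSeries ℤ
  | [], N, A, v => τ N • A v
  | a :: L, N, A, v => ∑ p ∈ antidiagonal N, hh τ L p.2 A (v - (p.1 : ℚ) • a)

/-- The indicator of `0`. -/
def t0 : ℕ → ℤ := fun N => if N = 0 then 1 else 0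

theorem nonneg_last {n : ℕ} (R : Finset (Fin n → ℚ)) (L : List (Fin n → ℚ)) :
    ∀ a ∈ (R.image (fun v => sn v 0) ∪ (L.map fun v => sn v 1).toFinset),
      0 ≤ (LinearMap.proj (Fin.last n) : (Fin (n+1) → ℚ) →ₗ[ℚ] ℚ) a := by
  intro a ha
  simp only [mem_union, mem_image, List.mem_toFinset, List.mem_map] at ha
  rcases ha with ⟨v, _, rfl⟩ | ⟨v, _, rfl⟩ <;> simp

theorem kq_top {n : ℕ} (R : Finset (Fin n → ℚ)) (L : List (Fin n → ℚ)) (hL : L.Nodup) :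
    ∀ (N : ℕ) (β : Fin n → ℚ),
    kostantQ (R.image (fun v => sn v 0) ∪ (L.map fun v => sn v 1).toFinset) (sn β N) =
      PowerSeries.X ^ N * hh t0 L N (kostantQ R) β := by
  classical
  induction L with
  | nil =>
    intro N β
    simp only [List.map_nil, List.toFinset_nil, Finset.union_empty, kq_lift, hh, t0]
    rcases Nat.eq_zero_or_pos N with rfl | hN
    · simp
    · simp [hN.ne']
  | cons a L ih =>
    intro N β
    rw [List.nodup_cons] at hL
    have hset : (R.image (fun v => sn v 0) ∪ ((a :: L).map fun v => sn v 1).toFinset) =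
        insert (sn a 1) (R.image (fun v => sn v 0) ∪ (L.map fun v => sn v 1).toFinset) := by
      rw [List.map_cons, List.toFinset_cons, Finset.union_insert]
    have hna : sn a 1 ∉ (R.image (fun v => sn v 0) ∪ (L.map fun v => sn v 1).toFinset) := by
      simp only [mem_union, mem_image, List.mem_toFinset, List.mem_map, sn_inj]
      rintro (⟨v, _, _, h⟩ | ⟨v, hv, rfl, _⟩)
      · norm_num at h
      · exact hL.1 hv
    rw [hset, kq_insert _ _ hna _ N]
    · rw [hh, Finset.Nat.sum_antidiagonal_eq_sum_range_succ_mk, Finset.mul_sum]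
      refine Finset.sum_congr rfl fun c hc => ?_
      have hc' : c ≤ N := by simp at hc; omega
      rw [sn_sub, mul_one, ← Nat.cast_sub hc', ih hL.2, ← mul_assoc, ← pow_add]
      congr 2
      omega
    · intro c hc
      refine kq_zero _ _ (nonneg_last R L) _ ?_
      rw [sn_sub]
      have : (N : ℚ) < c := by exact_mod_cast hc
      simp; linarith

end RS


namespace RS
open Finset

theorem sum_triple_comm {M : Type*} [AddCommMonoid M] (N : ℕ) (f : ℕ → ℕ → ℕ → M) :
    ∑ p ∈ antidiagonal N, ∑ r ∈ antidiagonal p.2, f p.1 r.1 r.2 =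
    ∑ p ∈ antidiagonal N, ∑ r ∈ antidiagonal p.2, f r.1 p.1 r.2 := by
  rw [Finset.sum_sigma', Finset.sum_sigma']
  refine Finset.sum_bij' (fun x _ => ⟨(x.2.1, x.1.1 + x.2.2), (x.1.1, x.2.2)⟩)
    (fun x _ => ⟨(x.2.1, x.1.1 + x.2.2), (x.1.1, x.2.2)⟩) ?_ ?_ ?_ ?_ ?_
  · rintro ⟨⟨a, b⟩, ⟨c, d⟩⟩ h; simp at h ⊢; omega
  · rintro ⟨⟨a, b⟩, ⟨c, d⟩⟩ h; simp at h ⊢; omega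
  · rintro ⟨⟨a, b⟩, ⟨c, d⟩⟩ h; simp at h ⊢; omega
  · rintro ⟨⟨a, b⟩, ⟨c, d⟩⟩ h; simp at h ⊢; omega
  · rintro ⟨⟨a, b⟩, ⟨c, d⟩⟩ h; simp

theorem hh_perm {n : ℕ} (τ : ℕ → ℤ) {L L' : List (Fin n → ℚ)} (h : L.Perm L')
    (A : (Fin n → ℚ) → PowerSeries ℤ) : ∀ N v, hh τ L N A v = hh τ L' N A v := by
  induction h with
  | nil => intro N v; rfl
  | cons a _ ih => intro N v; simp only [hh, ih]
  | swap a b L =>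
    intro N v
    simp only [hh]
    rw [sum_triple_comm N (fun x y z => hh τ L z A (v - (x : ℚ) • b - (y : ℚ) • a))]
    refine Finset.sum_congr rfl fun p _ => Finset.sum_congr rfl fun r _ => ?_
    rw [sub_right_comm]
  | trans _ _ ih1 ih2 => intro N v; rw [ih1, ih2]

theorem hh_comp {n : ℕ} (τ : ℕ → ℤ) (L : List (Fin n → ℚ)) (A : (Fin n → ℚ) → PowerSeries ℤ)
    (f g : (Fin n → ℚ) → (Fin n → ℚ))
    (hfg : ∀ v (c : ℚ) a, f (v - c • a) = f v - c • g a) :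
    ∀ N v, hh τ L N (fun v => A (f v)) v = hh τ (L.map g) N A (f v) := by
  induction L with
  | nil => intro N v; rfl
  | cons a L ih => intro N v; simp only [hh, List.map_cons, ih, hfg]

theorem hh_sum {n : ℕ} (τ : ℕ → ℤ) (L : List (Fin n → ℚ)) {ι : Type*} (s : Finset ι)
    (c : ι → ℤ) (A : ι → (Fin n → ℚ) → PowerSeries ℤ) :
    ∀ N v, hh τ L N (fun v => ∑ i ∈ s, c i • A i v) v = ∑ i ∈ s, c i • hh τ L N (A i) v := by
  induction L with
  | nil =>
    intro N v
    simp only [hh, Finset.smul_sum]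
    exact Finset.sum_congr rfl fun i _ => smul_comm _ _ _
  | cons a L ih =>
    intro N v
    simp only [hh, ih, Finset.smul_sum]
    rw [Finset.sum_comm]

theorem hh_tau {n : ℕ} (τ : ℕ → ℤ) (L : List (Fin n → ℚ))
    (A : (Fin n → ℚ) → PowerSeries ℤ) :
    ∀ N v, hh τ L N A v = ∑ p ∈ antidiagonal N, τ p.1 • hh t0 L p.2 A v := by
  induction L with
  | nil =>
    intro N v
    simp only [hh]
    rw [Finset.sum_eq_single (N, 0)]
    · simp [t0]
    · rintro ⟨a, b⟩ h1 h2
      have : b ≠ 0 := by rintro rfl; simp at h1 h2; omega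
      simp [t0, this]
    · simp
  | cons a L ih =>
    intro N v
    simp only [hh, ih, Finset.smul_sum]
    rw [sum_triple_comm N (fun x y z => τ y • hh t0 L z A (v - (x : ℚ) • a))]

theorem triple_eq {M : Type*} [AddCommMonoid M] (N : ℕ) (f : ℕ → ℕ → ℕ → M) :
    ∑ p ∈ antidiagonal N, ∑ r ∈ antidiagonal p.2, f p.1 r.1 r.2 =
    ∑ x ∈ (range (N+1) ×ˢ range (N+1) ×ˢ range (N+1)).filter
      (fun x : ℕ × ℕ × ℕ => x.1 + x.2.1 + x.2.2 = N), f x.1 x.2.1 x.2.2 := by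
  rw [Finset.sum_sigma']
  refine Finset.sum_bij' (fun x _ => (x.1.1, x.2.1, x.2.2))
    (fun x _ => ⟨(x.1, x.2.1 + x.2.2), (x.2.1, x.2.2)⟩) ?_ ?_ ?_ ?_ ?_
  · rintro ⟨⟨a, b⟩, ⟨c, d⟩⟩ h; simp at h ⊢; omega
  · rintro ⟨a, b, c⟩ h; simp at h ⊢; omega
  · rintro ⟨⟨a, b⟩, ⟨c, d⟩⟩ h; simp at h ⊢; omega
  · rintro ⟨a, b, c⟩ h; simp at h ⊢
  · rintro ⟨⟨a, b⟩, ⟨c, d⟩⟩ h; simp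

/-- triples `(minus, plus, j)` summing to `N` -/
def trip (N : ℕ) : Finset (ℕ × ℕ × ℕ) :=
  (range (N+1) ×ˢ range (N+1) ×ˢ range (N+1)).filter
      (fun x : ℕ × ℕ × ℕ => x.1 + x.2.1 + x.2.2 = N)

theorem mem_trip {N : ℕ} {x : ℕ × ℕ × ℕ} : x ∈ trip N ↔ x.1 + x.2.1 + x.2.2 = N := by
  simp [trip]; omega

theorem sum_single_of_involution {ι M : Type*} [DecidableEq ι] [AddCommGroup M]
    (s : Finset ι) (x0 : ι) (hx0 : x0 ∈ s) (f : ι → M) (φ : ι → ι)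
    (h1 : ∀ x ∈ s, x ≠ x0 → φ x ∈ s ∧ φ x ≠ x0 ∧ φ (φ x) = x ∧ f x + f (φ x) = 0 ∧
      (φ x = x → f x = 0)) :
    ∑ x ∈ s, f x = f x0 := by
  rw [← Finset.add_sum_erase _ _ hx0]
  rw [Finset.sum_involution (fun x _ => φ x), add_zero]
  · intro x hx; rw [mem_erase] at hx; exact (h1 x hx.2 hx.1).2.2.2.1
  · intro x hx hne h; rw [mem_erase] at hx; exact hne ((h1 x hx.2 hx.1).2.2.2.2 h)
  · intro x hx; rw [mem_erase] at hx ⊢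
    exact ⟨(h1 x hx.2 hx.1).2.1, (h1 x hx.2 hx.1).1⟩
  · intro x hx; rw [mem_erase] at hx; exact (h1 x hx.2 hx.1).2.2.1

/-- The involution of the step. -/
def phi (e : ℕ) (x : ℕ × ℕ × ℕ) : ℕ × ℕ × ℕ :=
  if x.1 ≤ x.2.1 + 1 then (x.1, x.2.2 + x.1 - 1, x.2.1 + 1 - x.1)
  else if x.2.1 + e + 1 ≤ x.1 then (x.2.2 + x.2.1 + e + 1, x.2.1, x.1 - x.2.1 - e - 1)
  else x

theorem step_sum {M : Type*} [AddCommGroup M] (e : ℕ) (he : 1 ≤ e) (g : ℤ → ℤ → M)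
    (h1 : ∀ u p, g u p + g p u = 0) (h2 : ∀ u p, g u p + g (-e - p) (-e - u) = 0)
    (h3 : ∀ u, g u u = 0) (h4 : ∀ u, g u (-e - u) = 0)
    (h5 : ∀ u p, -(e : ℤ) < p → p < 0 → g u p = 0) (N : ℕ) :
    ∑ p ∈ antidiagonal N, ∑ r ∈ antidiagonal p.2, g r.2 (1 + r.1 - p.1) = g 0 (N + 1) := by
  rw [triple_eq N (fun a b j => g j (1 + b - a))]
  change ∑ x ∈ trip N, g x.2.2 (1 + x.2.1 - x.1) = _
  rw [sum_single_of_involution (trip N) (0, N, 0) (by simp [mem_trip])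
    (fun x => g x.2.2 (1 + x.2.1 - x.1)) (phi e)]
  · simp [add_comm]
  · rintro ⟨a, b, j⟩ hx hne
    rw [mem_trip] at hx
    simp only [ne_eq, Prod.mk.injEq] at hx hne
    by_cases c1 : a ≤ b + 1
    · have e1 : phi e (a, b, j) = (a, j + a - 1, b + 1 - a) := by simp [phi, c1]
      have e2 : phi e (a, j + a - 1, b + 1 - a) = (a, b, j) := by
        have : a ≤ j + a - 1 + 1 := by omega
        unfold phi
        rw [if_pos this]
        simp only [Prod.mk.injEq, true_and]; omega
      have e3 : ((b + 1 - a : ℕ) : ℤ) = 1 + b - a := by omega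
      have e4 : (1 : ℤ) + ((j + a - 1 : ℕ) : ℤ) - a = j := by omega
      rw [e1]
      refine ⟨?_, ?_, e2, ?_, ?_⟩
      · rw [mem_trip]; simp only; omega
      · simp only [ne_eq, Prod.mk.injEq]; omega
      · simp only [e3, e4]; exact h1 _ _
      · intro h
        simp only [Prod.mk.injEq] at h
        have : (1 : ℤ) + b - a = j := by omega
        simp only [this]; exact h3 _
    · by_cases c2 : b + e + 1 ≤ a
      · have e1 : phi e (a, b, j) = (j + b + e + 1, b, a - b - e - 1) := by simp [phi, c1, c2]
        have e2 : phi e (j + b + e + 1, b, a - b - e - 1) = (a, b, j) := by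
          have k1 : ¬ (j + b + e + 1 ≤ b + 1) := by omega
          have k2 : b + e + 1 ≤ j + b + e + 1 := by omega
          unfold phi
          rw [if_neg k1, if_pos k2]
          simp only [Prod.mk.injEq, true_and]; omega
        have e3 : ((a - b - e - 1 : ℕ) : ℤ) = -e - (1 + b - a) := by omega
        have e4 : (1 : ℤ) + b - ((j + b + e + 1 : ℕ) : ℤ) = -e - j := by omega
        rw [e1]
        refine ⟨?_, ?_, e2, ?_, ?_⟩
        · rw [mem_trip]; simp only; omega
        · simp only [ne_eq, Prod.mk.injEq]; omega
        · simp only [e3, e4]; exact h2 _ _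
        · intro h
          simp only [Prod.mk.injEq] at h
          have : (1 : ℤ) + b - a = -e - j := by omega
          simp only [this]; exact h4 _
      · have e1 : phi e (a, b, j) = (a, b, j) := by simp [phi, c1, c2]
        have e5 : g j (1 + b - a) = 0 := h5 _ _ (by omega) (by omega)
        rw [e1, e1]
        exact ⟨mem_trip.2 hx, by simpa using hne, rfl, by simp [e5], fun _ => e5⟩

/-- First step, type C. -/
theorem baseC {M : Type*} [AddCommGroup M] (g : ℤ → M)
    (h1 : ∀ u, g u + g (-2 - u) = 0) (h2 : g (-1) = 0) (N : ℕ) :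
    ∑ p ∈ antidiagonal N, g (p.2 - p.1) = g N := by
  rw [sum_single_of_involution (antidiagonal N) (0, N) (by simp)
    (fun x => g (x.2 - x.1)) (fun x => (x.2 + 1, x.1 - 1))]
  · simp
  · rintro ⟨a, b⟩ hx hne
    simp only [Finset.HasAntidiagonal.mem_antidiagonal, ne_eq, Prod.mk.injEq] at hx hne
    refine ⟨?_, ?_, ?_, ?_, ?_⟩
    · simp only [Finset.HasAntidiagonal.mem_antidiagonal]; omega
    · simp
    · simp only [Prod.mk.injEq]; omega
    · have : ((a - 1 : ℕ) : ℤ) - ((b + 1 : ℕ) : ℤ) = -2 - (b - a) := by omega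
      simp only [this]; exact h1 _
    · intro h
      simp only [Prod.mk.injEq] at h
      have : (b : ℤ) - a = -1 := by omega
      simp only [this]; exact h2

/-- First step, type B. -/
theorem baseB {M : Type*} [AddCommGroup M] (g : ℤ → M)
    (h1 : ∀ u, g u + g (-1 - u) = 0) (N : ℕ) :
    ∑ p ∈ antidiagonal (N + 1), g (p.2 - p.1) + ∑ p ∈ antidiagonal N, g (p.2 - p.1)
      = g (N + 1) := by
  rw [Finset.Nat.antidiagonal_succ, Finset.sum_cons, Finset.sum_map]
  rw [add_assoc, ← Finset.Nat.sum_antidiagonal_swap (n := N) (f := fun p => g (p.2 - p.1)),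
    ← Finset.sum_add_distrib, Finset.sum_eq_zero]
  · simp
  · intro p _
    rw [← h1 (p.1 - p.2), add_comm]
    simp; ring_nf

/-- First step, type D. -/
theorem baseD {M : Type*} [AddCommGroup M] (g : ℤ → ℤ → M)
    (h1 : ∀ u p, g u p + g p u = 0) (h2 : ∀ u p, g u p + g (-p) (-u) = 0)
    (h3 : ∀ u, g u u = 0) (h4 : ∀ u, g u (-u) = 0) (N : ℕ) :
    ∑ p ∈ antidiagonal N, ∑ r ∈ antidiagonal p.2, (g r.2 (1 + r.1 - p.1) +
      if r.2 = 0 then 0 else g (-r.2) (1 + r.1 - p.1)) = g 0 (N + 1) := by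
  have key : ∑ x ∈ range (N+1) ×ˢ range (N+1), g (x.2 - x.1) (N + 1 - x.1 - x.2) = g 0 (N+1) := by
    rw [Finset.sum_product]
    have a1 : ∀ i : ℕ, ∑ k ∈ range (N+1), g ((k : ℤ) - i) (N + 1 - i - k) = g (-i) (N + 1 - i) := by
      intro i
      rw [sum_single_of_involution (range (N+1)) 0 (by simp) _ (fun k => N + 1 - k)]
      · simp
      · intro k hk hne
        simp only [mem_range] at hk
        refine ⟨?_, ?_, ?_, ?_, ?_⟩
        · simp only [mem_range]; omega
        · omega
        · omega
        · have e1 : (((N + 1 - k : ℕ) : ℤ)) - i = N + 1 - i - k := by omega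
          have e2 : (N + 1 : ℤ) - i - ((N + 1 - k : ℕ) : ℤ) = k - i := by omega
          rw [e1, e2]; exact h1 _ _
        · intro h
          have : (N + 1 : ℤ) - i - k = k - i := by omega
          rw [this]; exact h3 _
    simp only [a1]
    rw [sum_single_of_involution (range (N+1)) 0 (by simp) _ (fun k => N + 1 - k)]
    · simp
    · intro k hk hne
      simp only [mem_range] at hk
      refine ⟨?_, ?_, ?_, ?_, ?_⟩
      · simp only [mem_range]; omega
      · omega
      · omega
      · have e1 : -(((N + 1 - k : ℕ) : ℤ)) = -(N + 1 - k) := by omega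
        have e2 : (N + 1 : ℤ) - ((N + 1 - k : ℕ) : ℤ) = - (-k) := by omega
        rw [e1, e2]; exact h2 _ _
      · intro h
        have : (N + 1 : ℤ) - k = - (-k) := by omega
        rw [this]; exact h4 _
  rw [← key, triple_eq N (fun a b j => (g j (1 + b - a) +
      if j = 0 then 0 else g (-j) (1 + b - a)))]
  change ∑ x ∈ trip N, _ = _
  rw [Finset.sum_add_distrib, ← Finset.sum_filter_add_sum_filter_not (range (N+1) ×ˢ range (N+1))
    (fun x => x.1 ≤ x.2)]
  congr 1
  · refine Finset.sum_bij' (fun x _ => (x.1, x.1 + x.2.2))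
      (fun x _ => (x.1, N - x.2, x.2 - x.1)) ?_ ?_ ?_ ?_ ?_
    · rintro ⟨a, b, c⟩ h; rw [mem_trip] at h; simp at h ⊢; omega
    · rintro ⟨a, b⟩ h; rw [mem_trip]; simp at h ⊢; omega
    · rintro ⟨a, b, c⟩ h; rw [mem_trip] at h; simp at h ⊢; omega
    · rintro ⟨a, b⟩ h; simp at h ⊢; omega
    · rintro ⟨a, b, c⟩ h; rw [mem_trip] at h; simp at h ⊢; congr 1; omega
  · have : ∀ x : ℕ × ℕ × ℕ, (if x.2.2 = 0 then (0:M) else g (-x.2.2) (1 + x.2.1 - x.1))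
      = if ¬ x.2.2 = 0 then g (-x.2.2) (1 + x.2.1 - x.1) else 0 := by
      intro x; split_ifs <;> rfl
    simp only [this]
    rw [← Finset.sum_filter]
    refine Finset.sum_bij' (fun x _ => (x.1 + x.2.2, x.1))
      (fun x _ => (x.2, N - x.1, x.1 - x.2)) ?_ ?_ ?_ ?_ ?_
    · rintro ⟨a, b, c⟩ h; rw [mem_filter, mem_trip] at h; simp at h ⊢; omega
    · rintro ⟨a, b⟩ h; rw [mem_filter, mem_trip]; simp at h ⊢; omega
    · rintro ⟨a, b, c⟩ h; rw [mem_filter, mem_trip] at h; simp at h ⊢; omega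
    · rintro ⟨a, b⟩ h; simp at h ⊢; omega
    · rintro ⟨a, b, c⟩ h; rw [mem_filter, mem_trip] at h; simp at h ⊢; congr 1; omega

end RS


namespace RS
open Finset

/-- The three types. -/
inductive Ty : Type
  | B : Ty
  | C : Ty
  | D : Ty

/-- shift of rho -/
def sh : Ty → ℚ
  | Ty.B => 1/2
  | Ty.C => 1
  | Ty.D => 0

/-- twice the shift -/
def sh2 : Ty → ℕ
  | Ty.B => 1
  | Ty.C => 2
  | Ty.D => 0

theorem sh2_eq (t : Ty) : (sh2 t : ℚ) = 2 * sh t := by cases t <;> norm_num [sh, sh2]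

/-- the correcting series -/
def tau : Ty → ℕ → ℤ
  | Ty.B => fun N => if N ≤ 1 then 1 else 0
  | Ty.C => t0
  | Ty.D => fun N => if N = 0 then 1 else if N = 2 then -1 else 0

theorem hh_tauB_zero {n : ℕ} (L : List (Fin n → ℚ)) (A : (Fin n → ℚ) → PowerSeries ℤ) (v) :
    hh (tau Ty.B) L 0 A v = hh t0 L 0 A v := by
  rw [hh_tau]; simp [tau]

theorem hh_tauB_succ {n : ℕ} (L : List (Fin n → ℚ)) (A : (Fin n → ℚ) → PowerSeries ℤ) (v) (N) :
    hh (tau Ty.B) L (N + 1) A v = hh t0 L (N + 1) A v + hh t0 L N A v := by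
  rw [hh_tau, Finset.Nat.sum_antidiagonal_eq_sum_range_succ_mk, Finset.sum_range_succ',
    Finset.sum_range_succ', Finset.sum_eq_zero]
  · simp [tau]; ring
  · intro x _; simp [tau]

theorem hh_tauD_zero {n : ℕ} (L : List (Fin n → ℚ)) (A : (Fin n → ℚ) → PowerSeries ℤ) (v) :
    hh (tau Ty.D) L 0 A v = hh t0 L 0 A v := by
  rw [hh_tau]; simp [tau]

theorem hh_tauD_one {n : ℕ} (L : List (Fin n → ℚ)) (A : (Fin n → ℚ) → PowerSeries ℤ) (v) :
    hh (tau Ty.D) L 1 A v = hh t0 L 1 A v := by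
  rw [hh_tau, Finset.Nat.sum_antidiagonal_eq_sum_range_succ_mk]; simp [tau, Finset.sum_range_succ]

theorem hh_tauD_succ {n : ℕ} (L : List (Fin n → ℚ)) (A : (Fin n → ℚ) → PowerSeries ℤ) (v) (N) :
    hh (tau Ty.D) L (N + 2) A v = hh t0 L (N + 2) A v - hh t0 L N A v := by
  rw [hh_tau, Finset.Nat.sum_antidiagonal_eq_sum_range_succ_mk, Finset.sum_range_succ',
    Finset.sum_range_succ', Finset.sum_range_succ', Finset.sum_eq_zero]
  · simp [tau]; ring
  · intro x _; simp [tau]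

theorem hh_pair {n : ℕ} (a : Fin n → ℚ) (A : (Fin n → ℚ) → PowerSeries ℤ) (v) (N) :
    hh t0 [a, -a] N A v =
      ∑ p ∈ antidiagonal N, A (v + (((p.2 : ℤ) - (p.1 : ℤ) : ℤ) : ℚ) • a) := by
  simp only [hh]
  refine Finset.sum_congr rfl fun p _ => ?_
  rw [Finset.sum_eq_single (p.2, 0)]
  · simp only [t0, if_true, one_smul]
    congr 1
    push_cast
    module
  · rintro ⟨a, b⟩ h1 h2
    have : b ≠ 0 := by rintro rfl; simp at h1 h2; omega
    simp [t0, this]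
  · simp

theorem hh_pairD {n : ℕ} (a : Fin n → ℚ) (A : (Fin n → ℚ) → PowerSeries ℤ) (v) (N : ℕ) :
    hh (tau Ty.D) [a, -a] N A v =
      A (v + (N : ℚ) • a) + if N = 0 then 0 else A (v - (N : ℚ) • a) := by
  match N with
  | 0 => rw [hh_tauD_zero, hh_pair]; simp
  | 1 =>
    rw [hh_tauD_one, hh_pair, Finset.Nat.sum_antidiagonal_eq_sum_range_succ_mk]
    simp [Finset.sum_range_succ, sub_eq_add_neg]
  | N + 2 =>
    rw [hh_tauD_succ, hh_pair, hh_pair, Finset.Nat.antidiagonal_succ_succ', Finset.sum_cons,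
      Finset.sum_cons, Finset.sum_map]
    have : ∀ x ∈ antidiagonal N, A (v + (((((Function.Embedding.prodMap ⟨Nat.succ, Nat.succ_injective⟩
        ⟨Nat.succ, Nat.succ_injective⟩ : ℕ × ℕ ↪ ℕ × ℕ) x).2 : ℤ) -
        (((Function.Embedding.prodMap ⟨Nat.succ, Nat.succ_injective⟩
        ⟨Nat.succ, Nat.succ_injective⟩ : ℕ × ℕ ↪ ℕ × ℕ) x).1 : ℤ) : ℤ) : ℚ) • a) =
        A (v + (((x.2 : ℤ) - (x.1 : ℤ) : ℤ) : ℚ) • a) := by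
      intro x _
      congr 3
      simp
    rw [Finset.sum_congr rfl this]
    have e1 : v + ((((N + 2 : ℕ) : ℤ) - ((0 : ℕ) : ℤ) : ℤ) : ℚ) • a = v + ((N + 2 : ℕ) : ℚ) • a := by
      push_cast; simp
    have e2 : v + ((((0 : ℕ) : ℤ) - ((N + 2 : ℕ) : ℤ) : ℤ) : ℚ) • a = v - ((N + 2 : ℕ) : ℚ) • a := by
      push_cast; module
    simp only [e1, e2]
    simp only [Nat.add_eq_zero_iff, OfNat.ofNat_ne_zero, and_false, if_false]
    ring

open Function in
/-- Antisymmetric functions. -/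
structure AS (t : Ty) {m : ℕ} (A : (Fin m → ℚ) → PowerSeries ℤ) : Prop where
  sw : ∀ i j : Fin m, i ≠ j → ∀ v x y,
    A (update (update v i x) j y) + A (update (update v i y) j x) = 0
  nsw : ∀ i j : Fin m, i ≠ j → ∀ v x y,
    A (update (update v i x) j y) + A (update (update v i (-y)) j (-x)) = 0
  fl : t ≠ Ty.D → ∀ i : Fin m, ∀ v x, A (update v i x) + A (update v i (-x)) = 0

theorem self_add {x : PowerSeries ℤ} (h : x + x = 0) : x = 0 := by
  ext k
  have := congrArg (PowerSeries.coeff k) h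
  simp only [map_add, map_zero] at this ⊢
  omega

theorem AS.eq0 {t : Ty} {m : ℕ} {A : (Fin m → ℚ) → PowerSeries ℤ} (h : AS t A)
    {i j : Fin m} (hij : i ≠ j) {v : Fin m → ℚ} (hv : v i = v j) : A v = 0 := by
  have := h.sw i j hij v (v i) (v j)
  rw [← hv] at this
  have e : Function.update (Function.update v i (v i)) j (v i) = v := by
    rw [Function.update_eq_self, hv, Function.update_eq_self]
  rw [e] at this
  exact self_add this

theorem AS.neq0 {t : Ty} {m : ℕ} {A : (Fin m → ℚ) → PowerSeries ℤ} (h : AS t A)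
    {i j : Fin m} (hij : i ≠ j) {v : Fin m → ℚ} (hv : v i = - v j) : A v = 0 := by
  have := h.nsw i j hij v (v i) (v j)
  rw [← hv] at this
  have e : Function.update (Function.update v i (v i)) j (v j) = v := by
    rw [Function.update_eq_self, Function.update_eq_self]
  have e' : Function.update (Function.update v i (v i)) j (- v i) = v := by
    rw [Function.update_eq_self, hv, neg_neg, Function.update_eq_self]
  rw [e, e'] at this
  exact self_add this

theorem AS.z0 {t : Ty} {m : ℕ} {A : (Fin m → ℚ) → PowerSeries ℤ} (h : AS t A) (ht : t ≠ Ty.D)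
    {i : Fin m} {v : Fin m → ℚ} (hv : v i = 0) : A v = 0 := by
  have := h.fl ht i v (v i)
  rw [hv, neg_zero] at this
  have e : Function.update v i 0 = v := by
    rw [← hv, Function.update_eq_self]
  rw [e] at this
  exact self_add this

/-- basis vector -/
def E (m s : ℕ) : Fin m → ℚ := fun i => if i.val = s then 1 else 0

/-- list of signed basis vectors -/
def Lst (m : ℕ) : ℕ → List (Fin m → ℚ)
  | 0 => []
  | s + 1 => E m s :: -E m s :: Lst m s

theorem stage_step (t : Ty) {m : ℕ} {A : (Fin m → ℚ) → PowerSeries ℤ} (hA : AS t A) (s : ℕ)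
    (hs : s + 1 < m) (hD : t = Ty.D → 1 ≤ s)
    (ih : ∀ N v, (∀ i : Fin m, i.val < s + 1 → v i = i + sh t) →
      hh (tau t) (Lst m (s + 1)) N A v = A (v + (N : ℚ) • E m s))
    (N : ℕ) (v : Fin m → ℚ) (hv : ∀ i : Fin m, i.val < s + 2 → v i = i + sh t) :
    hh (tau t) (Lst m (s + 2)) N A v = A (v + (N : ℚ) • E m (s + 1)) := by
  have hsh := sh2_eq t
  set i : Fin m := ⟨s, by omega⟩ with hi
  set j : Fin m := ⟨s + 1, hs⟩ with hj
  have hij : i ≠ j := by simp [hi, hj]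
  have hvi : v i = s + sh t := hv i (by simp [hi])
  have hvj : v j = s + 1 + sh t := by rw [hv j (by simp [hj])]; simp [hj]
  set c : ℚ := s + sh t with hc
  let g : ℤ → ℤ → PowerSeries ℤ := fun u p =>
    A (Function.update (Function.update v i (c + u)) j (c + p))
  have hstep := step_sum (2 * s + sh2 t) (by cases t <;> simp [sh2] at hD ⊢; omega) g
    (fun u p => hA.sw i j hij v _ _)
    (fun u p => by
      have := hA.nsw i j hij v (c + u) (c + p)
      have e1 : -(c + (p : ℚ)) = c + ((-((2 * s + sh2 t : ℕ) : ℤ) - p : ℤ) : ℚ) := by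
        push_cast; rw [hsh, hc]; ring
      have e2 : -(c + (u : ℚ)) = c + ((-((2 * s + sh2 t : ℕ) : ℤ) - u : ℤ) : ℚ) := by
        push_cast; rw [hsh, hc]; ring
      rw [e1, e2] at this
      exact this)
    (fun u => hA.eq0 hij (by simp [hij]))
    (fun u => hA.neq0 hij (by
      simp only [Function.update_self, ne_eq, hij, not_false_eq_true, Function.update_of_ne]
      push_cast; rw [hsh, hc]; ring))
    (by
      intro u p h1 h2
      by_cases h3 : 0 ≤ (s : ℤ) + p
      · obtain ⟨k, hk⟩ := Int.eq_ofNat_of_zero_le h3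
        have hks : k < s := by omega
        have hkj : (⟨k, by omega⟩ : Fin m) ≠ j := by simp [hj]; omega
        have hki : (⟨k, by omega⟩ : Fin m) ≠ i := by simp [hi]; omega
        refine hA.eq0 hkj ?_
        rw [Function.update_of_ne hkj, Function.update_of_ne hki, Function.update_self,
          hv _ (by simp; omega)]
        have : (k : ℚ) = s + p := by exact_mod_cast hk.symm
        simp only [this, hc]; ring
      · by_cases h4 : 0 ≤ -(s : ℤ) - p - sh2 t
        · obtain ⟨k, hk⟩ := Int.eq_ofNat_of_zero_le h4
          have hks : k < s := by omega
          have hkj : (⟨k, by omega⟩ : Fin m) ≠ j := by simp [hj]; omega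
          have hki : (⟨k, by omega⟩ : Fin m) ≠ i := by simp [hi]; omega
          refine hA.neq0 hkj ?_
          rw [Function.update_of_ne hkj, Function.update_of_ne hki, Function.update_self,
            hv _ (by simp; omega)]
          have : (k : ℚ) = -s - p - sh2 t := by exact_mod_cast hk.symm
          simp only [this, hsh, hc]; ring
        · have ht : t = Ty.C := by
            cases t
            · simp [sh2] at h4; omega
            · rfl
            · simp [sh2] at h4; omega
          subst ht
          refine hA.z0 (by simp) (i := j) ?_
          simp [sh2] at h4
          have : p = -(s : ℤ) - 1 := by omega
          rw [Function.update_self, this, hc]; simp [sh]) N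
  have lhs : hh (tau t) (Lst m (s + 2)) N A v =
      ∑ p ∈ antidiagonal N, ∑ r ∈ antidiagonal p.2, g r.2 (1 + r.1 - p.1) := by
    rw [Lst]
    simp only [hh]
    refine Finset.sum_congr rfl fun p _ => Finset.sum_congr rfl fun r _ => ?_
    rw [ih]
    · refine congrArg A ?_
      ext k
      by_cases hkj : k = j
      · subst hkj
        simp only [Function.update_self]
        simp [E, hj, hvj]
        rw [hvj]; ring
      · rw [Function.update_of_ne hkj]
        have hk1 : k.val ≠ s + 1 := fun h => hkj (Fin.ext h)
        by_cases hki : k = i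
        · subst hki
          simp only [Function.update_self]
          simp [E, hi]
          rw [hvi]
        · rw [Function.update_of_ne hki]
          have hk2 : k.val ≠ s := fun h => hki (Fin.ext h)
          simp [E, hk1, hk2]
    · intro k hk
      have hk1 : k.val ≠ s + 1 := by omega
      simp [E, hk1]
      exact hv k (by omega)
  rw [lhs, hstep]
  refine congrArg A ?_
  ext k
  by_cases hkj : k = j
  · subst hkj
    simp only [Function.update_self]
    simp [E, hj]
    rw [hvj]; ring
  · rw [Function.update_of_ne hkj]
    have hk1 : k.val ≠ s + 1 := fun h => hkj (Fin.ext h)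
    by_cases hki : k = i
    · subst hki
      simp only [Function.update_self]
      simp [E, hi]
      exact hvi.symm
    · rw [Function.update_of_ne hki]
      simp [E, hk1]

end RS


namespace RS
open Finset

theorem hh_cons {n : ℕ} (τ : ℕ → ℤ) (a : Fin n → ℚ) (L : List (Fin n → ℚ)) (N : ℕ)
    (A : (Fin n → ℚ) → PowerSeries ℤ) (v : Fin n → ℚ) :
    hh τ (a :: L) N A v = ∑ p ∈ antidiagonal N, hh τ L p.2 A (v - (p.1 : ℚ) • a) := rfl

theorem upd_E {m : ℕ} (v : Fin m → ℚ) (i : Fin m) (x : ℚ) :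
    v + x • E m i.val = Function.update v i (v i + x) := by
  ext k
  by_cases h : k = i
  · subst h; simp [E]
  · have : k.val ≠ i.val := fun h' => h (Fin.ext h')
    simp [E, h, this]

theorem stage_base (t : Ty) (ht : t ≠ Ty.D) {m : ℕ} {A : (Fin m → ℚ) → PowerSeries ℤ}
    (hA : AS t A) (hm : 1 ≤ m) (N : ℕ) (v : Fin m → ℚ)
    (hv : ∀ i : Fin m, i.val < 1 → v i = i + sh t) :
    hh (tau t) (Lst m 1) N A v = A (v + (N : ℚ) • E m 0) := by
  set i : Fin m := ⟨0, hm⟩ with hi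
  have hvi : v i = sh t := by rw [hv i (by simp [hi])]; simp [hi]
  let g : ℤ → PowerSeries ℤ := fun z => A (v + (z : ℚ) • E m 0)
  have hg : ∀ z, g z = A (Function.update v i (sh t + z)) := by
    intro z
    have := upd_E v i z
    simp only [hvi] at this
    exact congrArg A this
  have hL : Lst m 1 = [E m 0, -E m 0] := rfl
  rw [hL]
  cases t with
  | D => exact absurd rfl ht
  | C =>
    rw [show tau Ty.C = t0 from rfl, hh_pair]
    have := baseC g (fun u => by
      rw [hg, hg]
      have := hA.fl ht i v (sh Ty.C + u)
      convert this using 4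
      simp [sh]; ring) (by
      rw [hg]
      exact hA.z0 ht (i := i) (by simp [sh])) N
    simp only [g] at this
    exact_mod_cast this
  | B =>
    have h1 := baseB g (fun u => by
      rw [hg, hg]
      have := hA.fl ht i v (sh Ty.B + u)
      convert this using 4
      simp [sh]; ring)
    simp only [g] at h1
    cases N with
    | zero => rw [hh_tauB_zero, hh_pair]; simp
    | succ N =>
      rw [hh_tauB_succ, hh_pair, hh_pair, h1]
      push_cast; rfl

theorem stage_baseD {m : ℕ} {A : (Fin m → ℚ) → PowerSeries ℤ}
    (hA : AS Ty.D A) (hm : 2 ≤ m) (N : ℕ) (v : Fin m → ℚ)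
    (hv : ∀ i : Fin m, i.val < 2 → v i = i + sh Ty.D) :
    hh (tau Ty.D) (Lst m 2) N A v = A (v + (N : ℚ) • E m 1) := by
  set i : Fin m := ⟨0, by omega⟩ with hi
  set j : Fin m := ⟨1, hm⟩ with hj
  have hij : i ≠ j := by simp [hi, hj]
  have hvi : v i = 0 := by rw [hv i (by simp [hi])]; simp [hi, sh]
  have hvj : v j = 1 := by rw [hv j (by simp [hj])]; simp [hj, sh]
  let g : ℤ → ℤ → PowerSeries ℤ := fun u p =>
    A (Function.update (Function.update v i u) j p)
  have key := baseD g (fun u p => hA.sw i j hij v u p)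
    (fun u p => by simpa [g] using hA.nsw i j hij v u p)
    (fun u => hA.eq0 hij (by simp [hij]))
    (fun u => hA.neq0 hij (by simp [hij])) N
  have hL : Lst m 2 = E m 1 :: -E m 1 :: [E m 0, -E m 0] := rfl
  have hE : ∀ x y : ℚ, v + y • E m 1 + x • E m 0 =
      Function.update (Function.update v i x) j (1 + y) := by
    intro x y
    have h1 := upd_E v j y
    have h2 := upd_E (Function.update v j (v j + y)) i x
    have h1' : v + y • E m 1 = Function.update v j (v j + y) := h1
    have h2' : Function.update v j (v j + y) + x • E m 0 =
      Function.update (Function.update v j (v j + y)) i (Function.update v j (v j + y) i + x) := h2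
    rw [h1', h2', Function.update_of_ne hij, hvi, hvj, Function.update_comm hij, zero_add]
  have lhs : hh (tau Ty.D) (Lst m 2) N A v =
      ∑ p ∈ antidiagonal N, ∑ r ∈ antidiagonal p.2, (g r.2 (1 + r.1 - p.1) +
      if r.2 = 0 then 0 else g (-r.2) (1 + r.1 - p.1)) := by
    rw [hL, hh_cons]
    simp only [hh_cons (tau Ty.D) (-E m 1) [E m 0, -E m 0]]
    refine Finset.sum_congr rfl fun p _ => Finset.sum_congr rfl fun r _ => ?_
    rw [hh_pairD]
    have e1 : v - (p.1 : ℚ) • E m 1 - (r.1 : ℚ) • -E m 1 + (r.2 : ℚ) • E m 0 =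
      v + ((r.1 : ℚ) - p.1) • E m 1 + (r.2 : ℚ) • E m 0 := by module
    have e2 : v - (p.1 : ℚ) • E m 1 - (r.1 : ℚ) • -E m 1 - (r.2 : ℚ) • E m 0 =
      v + ((r.1 : ℚ) - p.1) • E m 1 + (-(r.2 : ℚ)) • E m 0 := by module
    rw [e1, e2, hE, hE]
    simp only [g]
    push_cast
    simp only [add_sub_assoc]
  rw [lhs, key]
  have := hE 0 N
  simp only [zero_smul, add_zero] at this
  rw [this]
  simp only [g]
  push_cast
  rw [add_comm]

theorem stage (t : Ty) {m : ℕ} {A : (Fin m → ℚ) → PowerSeries ℤ} (hA : AS t A) (s : ℕ)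
    (hD : t = Ty.D → 1 ≤ s) : s + 1 ≤ m → ∀ N (v : Fin m → ℚ),
      (∀ i : Fin m, i.val < s + 1 → v i = i + sh t) →
      hh (tau t) (Lst m (s + 1)) N A v = A (v + (N : ℚ) • E m s) := by
  by_cases ht : t = Ty.D
  · subst ht
    have hs := hD rfl
    induction s, hs using Nat.le_induction with
    | base => intro h; exact stage_baseD hA h
    | succ s h1 ih =>
      intro h
      exact stage_step _ hA s h (fun _ => h1) (ih (fun _ => h1) (by omega))
  · induction s with
    | zero => intro h; exact stage_base t ht hA h
    | succ s ih =>
      intro h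
      exact stage_step _ hA s h (fun h => absurd h ht) (ih (fun h => absurd h ht) (by omega))

/-- rho -/
def rho (t : Ty) (n : ℕ) : Fin n → ℚ := fun i => (i.val : ℚ) + sh t

/-- roots -/
def rts (t : Ty) (n : ℕ) : Finset (Fin n → ℚ) :=
  match t with
  | Ty.B => rootsB n
  | Ty.C => rootsC n
  | Ty.D => rootsD n

/-- sign character restricted to the Weyl group -/
def chi (t : Ty) {n : ℕ} (σ : Equiv.Perm (Fin n)) (ε : Fin n → Bool) : ℤ :=
  match t with
  | Ty.B => wDet σ ε
  | Ty.C => wDet σ ε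
  | Ty.D => if (∏ i, (if ε i then (-1 : ℤ) else 1)) = 1 then wDet σ ε else 0

/-- alternating sum -/
noncomputable def Af (t : Ty) (n : ℕ) (mu v : Fin n → ℚ) : PowerSeries ℤ :=
  ∑ σ : Equiv.Perm (Fin n), ∑ ε : Fin n → Bool,
    chi t σ ε • kostantQ (rts t n) (wAct σ ε v - (mu + rho t n))

theorem rhoB_eq (n : ℕ) : rhoB n = rho Ty.B n := rfl
theorem rhoC_eq (n : ℕ) : rhoC n = rho Ty.C n := rfl
theorem rhoD_eq (n : ℕ) : rhoD n = rho Ty.D n := by ext i; simp [rhoD, rho, sh]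

theorem KB_eq (n : ℕ) (lam mu : Fin n → ℚ) : KB n lam mu = Af Ty.B n mu (lam + rho Ty.B n) := rfl
theorem KC_eq (n : ℕ) (lam mu : Fin n → ℚ) : KC n lam mu = Af Ty.C n mu (lam + rho Ty.C n) := rfl
theorem KD_eq (n : ℕ) (lam mu : Fin n → ℚ) : KD n lam mu = Af Ty.D n mu (lam + rho Ty.D n) := by
  simp only [KD, Af, chi, ite_smul, zero_smul, rhoD_eq, rts]

/-- product of signs -/
def psg {n : ℕ} (ε : Fin n → Bool) : ℤ := ∏ i, (if ε i then (-1 : ℤ) else 1)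

theorem sgx {M : Type*} (hM : Ring M) (a b : Bool) : (if xor a b then (-1 : M) else 1) =
    (if a then (-1 : M) else 1) * (if b then (-1 : M) else 1) := by
  cases a <;> cases b <;> simp

theorem psg_mul {n : ℕ} (σ : Equiv.Perm (Fin n)) (ε ε' : Fin n → Bool) :
    psg (fun i => xor (ε i) (ε' (σ⁻¹ i))) = psg ε * psg ε' := by
  unfold psg
  rw [← Equiv.prod_comp σ⁻¹ (fun i => if ε' i then (-1 : ℤ) else 1), ← Finset.prod_mul_distrib]
  refine Finset.prod_congr rfl fun i _ => ?_
  exact sgx _ _ _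

theorem psg_sq {n : ℕ} (ε : Fin n → Bool) : psg ε = 1 ∨ psg ε = -1 := by
  unfold psg
  refine Finset.prod_induction _ (fun x => x = 1 ∨ x = -1) ?_ (Or.inl rfl) ?_
  · rintro a b (rfl | rfl) (rfl | rfl) <;> simp
  · intro i _; cases ε i <;> simp

theorem wDet_eq {n : ℕ} (σ : Equiv.Perm (Fin n)) (ε : Fin n → Bool) :
    wDet σ ε = (Equiv.Perm.sign σ : ℤ) * psg ε := rfl

theorem sign_sq {n : ℕ} (σ : Equiv.Perm (Fin n)) :
    (Equiv.Perm.sign σ : ℤ) * (Equiv.Perm.sign σ : ℤ) = 1 := by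
  rcases Int.units_eq_one_or (Equiv.Perm.sign σ) with h | h <;> simp [h]

theorem chi_mul (t : Ty) {n : ℕ} (σ σ' : Equiv.Perm (Fin n)) (ε ε' : Fin n → Bool)
    (h : t = Ty.D → psg ε' = 1) :
    chi t (σ * σ') (fun i => xor (ε i) (ε' (σ⁻¹ i))) = chi t σ ε * wDet σ' ε' := by
  have e : wDet (σ * σ') (fun i => xor (ε i) (ε' (σ⁻¹ i))) = wDet σ ε * wDet σ' ε' := by
    rw [wDet_eq, wDet_eq, wDet_eq, psg_mul, Equiv.Perm.sign_mul]
    push_cast; ring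
  cases t
  · exact e
  · exact e
  · have h' := psg_mul σ ε ε'
    rw [h rfl, mul_one] at h'
    unfold psg at h'
    simp only [chi, e, h', ite_mul, zero_mul]

theorem wAct_wAct {n : ℕ} (σ σ' : Equiv.Perm (Fin n)) (ε ε' : Fin n → Bool) (v : Fin n → ℚ) :
    wAct σ ε (wAct σ' ε' v) = wAct (σ * σ') (fun i => xor (ε i) (ε' (σ⁻¹ i))) v := by
  ext i
  simp only [wAct, mul_inv_rev, Equiv.Perm.mul_apply]
  rw [← mul_assoc]
  exact congrArg (· * v (σ'⁻¹ (σ⁻¹ i))) (sgx (M := ℚ) _ (ε i) (ε' (σ⁻¹ i))).symm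

theorem wDet_sq {n : ℕ} (σ : Equiv.Perm (Fin n)) (ε : Fin n → Bool) :
    wDet σ ε * wDet σ ε = 1 := by
  rw [wDet_eq]
  have := sign_sq σ
  rcases psg_sq ε with h | h <;> rw [h] <;> linarith

theorem Af_wAct (t : Ty) {n : ℕ} (mu v : Fin n → ℚ) (σ' : Equiv.Perm (Fin n)) (ε' : Fin n → Bool)
    (h : t = Ty.D → psg ε' = 1) :
    Af t n mu (wAct σ' ε' v) = wDet σ' ε' • Af t n mu v := by
  unfold Af
  rw [Finset.smul_sum]
  refine Fintype.sum_equiv (Equiv.mulRight σ') _ _ fun σ => ?_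
  rw [Finset.smul_sum]
  let e : (Fin n → Bool) ≃ (Fin n → Bool) :=
    ⟨fun ε i => xor (ε i) (ε' (σ⁻¹ i)), fun ε i => xor (ε i) (ε' (σ⁻¹ i)),
      fun ε => by ext i; simp, fun ε => by ext i; simp⟩
  refine Fintype.sum_equiv e _ _ fun ε => ?_
  have := chi_mul t σ σ' ε ε' h
  simp only [Equiv.coe_mulRight, e, Equiv.coe_fn_mk, wAct_wAct, this]
  rw [smul_smul, mul_comm (wDet σ' ε'), mul_assoc, wDet_sq, mul_one]

theorem Af_AS (t : Ty) {n : ℕ} (mu : Fin n → ℚ) : AS t (Af t n mu) where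
  sw i j hij v x y := by
    have h := Af_wAct t mu (Function.update (Function.update v i x) j y) (Equiv.swap i j)
      (fun _ => false) (by intro; simp [psg])
    have h2 : wDet (Equiv.swap i j) (fun _ => false) = -1 := by
      simp [wDet, Equiv.Perm.sign_swap hij]
    have h3 : wAct (Equiv.swap i j) (fun _ => false) (Function.update (Function.update v i x) j y)
        = Function.update (Function.update v i y) j x := by
      ext k
      simp only [wAct, Equiv.swap_inv]
      by_cases h1 : k = i
      · subst h1; simp [hij]
      · by_cases h2 : k = j
        · subst h2; simp [hij]
        · simp [Equiv.swap_apply_of_ne_of_ne h1 h2, h1, h2]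
    rw [h2, h3] at h
    rw [h]; simp
  nsw i j hij v x y := by
    have hp : psg (fun k => decide (k = i) || decide (k = j)) = 1 := by
      unfold psg
      rw [← Finset.prod_subset (s₁ := {i, j}) (Finset.subset_univ _), Finset.prod_pair hij]
      · simp
      · intro k _ hk
        simp only [mem_insert, mem_singleton, not_or] at hk
        simp [hk.1, hk.2]
    have h := Af_wAct t mu (Function.update (Function.update v i x) j y) (Equiv.swap i j)
      (fun k => decide (k = i) || decide (k = j)) (fun _ => hp)
    have h2 : wDet (Equiv.swap i j) (fun k => decide (k = i) || decide (k = j)) = -1 := by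
      rw [wDet_eq, hp]; simp [Equiv.Perm.sign_swap hij]
    have h3 : wAct (Equiv.swap i j) (fun k => decide (k = i) || decide (k = j))
        (Function.update (Function.update v i x) j y)
        = Function.update (Function.update v i (-y)) j (-x) := by
      ext k
      simp only [wAct, Equiv.swap_inv]
      by_cases h1 : k = i
      · subst h1; simp [hij]
      · by_cases h2 : k = j
        · subst h2; simp [hij]
        · simp [Equiv.swap_apply_of_ne_of_ne h1 h2, h1, h2]
    rw [h2, h3] at h
    rw [h]; simp
  fl ht i v x := by
    have hp : psg (fun k => decide (k = i)) = -1 := by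
      unfold psg
      simp
    have h := Af_wAct t mu (Function.update v i x) 1
      (fun k => decide (k = i)) (fun h => absurd h ht)
    have h2 : wDet 1 (fun k => decide (k = i)) = -1 := by
      rw [wDet_eq, hp]; simp
    have h3 : wAct 1 (fun k => decide (k = i)) (Function.update v i x)
        = Function.update v i (-x) := by
      ext k
      change (if decide (k = i) = true then (-1 : ℚ) else 1) * Function.update v i x k = _
      by_cases h1 : k = i
      · subst h1; simp
      · simp [h1]
    rw [h2, h3] at h
    rw [h]; simp

/-- straightening -/
theorem straight (t : Ty) {m : ℕ} (hm : 1 ≤ m) (hD : t = Ty.D → 2 ≤ m) (mu : Fin m → ℚ) (N : ℕ) :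
    hh (tau t) (Lst m m) N (Af t m mu) (rho t m) =
      Af t m mu (rho t m + (N : ℚ) • E m (m - 1)) := by
  obtain ⟨s, rfl⟩ : ∃ s, m = s + 1 := ⟨m - 1, by omega⟩
  exact stage t (Af_AS t mu) s (fun h => by have := hD h; omega) le_rfl N _ (fun i _ => rfl)

end RS


namespace RS
open Finset

theorem single_cast {m : ℕ} (i : Fin m) (x : ℚ) :
    (Pi.single i.castSucc x : Fin (m + 1) → ℚ) = sn (Pi.single i x) 0 := by
  refine sn_ext (fun j => ?_) ?_
  · by_cases h : j = i
    · subst h; simp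
    · have : j.castSucc ≠ i.castSucc := fun h' => h (Fin.castSucc_injective _ h')
      rw [Pi.single_eq_of_ne this, Pi.single_eq_of_ne h]
  · rw [Pi.single_eq_of_ne]
    exact (Fin.castSucc_lt_last i).ne'

theorem single_last {m : ℕ} (x : ℚ) :
    (Pi.single (Fin.last m) x : Fin (m + 1) → ℚ) = sn 0 x := by
  refine sn_ext (fun j => ?_) ?_
  · rw [Pi.single_eq_of_ne]
    · rfl
    · exact (Fin.castSucc_lt_last j).ne
  · simp

theorem sn_sub' {m : ℕ} (a b : Fin m → ℚ) (x y : ℚ) : sn a x - sn b y = sn (a - b) (x - y) := by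
  refine sn_ext (fun j => ?_) ?_ <;> simp

theorem sn_add' {m : ℕ} (a b : Fin m → ℚ) (x y : ℚ) : sn a x + sn b y = sn (a + b) (x + y) := by
  refine sn_ext (fun j => ?_) ?_ <;> simp

theorem mem_rootsD {m : ℕ} (v : Fin m → ℚ) : v ∈ rootsD m ↔ ∃ i j : Fin m, j < i ∧
    (v = Pi.single i 1 - Pi.single j 1 ∨ v = Pi.single i 1 + Pi.single j 1) := by
  simp only [rootsD, mem_union, mem_image, mem_filter, mem_univ, true_and, Prod.exists]
  constructor
  · rintro (⟨i, j, h, rfl⟩ | ⟨i, j, h, rfl⟩)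
    · exact ⟨i, j, h, Or.inl rfl⟩
    · exact ⟨i, j, h, Or.inr rfl⟩
  · rintro ⟨i, j, h, rfl | rfl⟩
    · exact Or.inl ⟨i, j, h, rfl⟩
    · exact Or.inr ⟨i, j, h, rfl⟩

theorem E_single {m : ℕ} (i : Fin m) : E m i.val = Pi.single i 1 := by
  ext k
  by_cases h : k = i
  · subst h; simp [E]
  · have : k.val ≠ i.val := fun h' => h (Fin.ext h')
    simp [E, h, this]

theorem mem_Lst' {m : ℕ} (s : ℕ) (v : Fin m → ℚ) :
    v ∈ Lst m s ↔ ∃ j < s, (v = E m j ∨ v = -E m j) := by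
  induction s with
  | zero => simp [Lst]
  | succ s ih =>
    simp only [Lst, List.mem_cons, ih]
    constructor
    · rintro (h | h | ⟨j, hj, h⟩)
      · exact ⟨s, by omega, Or.inl h⟩
      · exact ⟨s, by omega, Or.inr h⟩
      · exact ⟨j, by omega, h⟩
    · rintro ⟨j, hj, h⟩
      rcases Nat.lt_succ_iff_lt_or_eq.mp hj with h1 | rfl
      · exact Or.inr (Or.inr ⟨j, h1, h⟩)
      · tauto

theorem mem_Lst {m : ℕ} (v : Fin m → ℚ) :
    v ∈ Lst m m ↔ ∃ j : Fin m, (v = -Pi.single j 1 ∨ v = Pi.single j 1) := by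
  rw [mem_Lst']
  constructor
  · rintro ⟨j, hj, h⟩
    refine ⟨⟨j, hj⟩, ?_⟩
    rw [← E_single]; exact h.symm
  · rintro ⟨j, h⟩
    refine ⟨j, j.2, ?_⟩
    rw [E_single]; exact h.symm

theorem Lst_nodup' {m : ℕ} (s : ℕ) (hs : s ≤ m) : (Lst m s).Nodup := by
  induction s with
  | zero => simp [Lst]
  | succ s ih =>
    simp only [Lst, List.nodup_cons, List.mem_cons, mem_Lst']
    have key : ∀ v : Fin m → ℚ, v ⟨s, hs⟩ ≠ 0 → ¬ ∃ j < s, (v = E m j ∨ v = -E m j) := by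
      rintro v hv ⟨j, hj, rfl | rfl⟩
      · apply hv; simp [E]; omega
      · apply hv; simp [E]; omega
    refine ⟨?_, ?_, ih (by omega)⟩
    · rw [not_or]
      refine ⟨fun h => ?_, key _ (by simp [E])⟩
      have := congrFun h ⟨s, hs⟩
      simp [E] at this
      norm_num at this
    · exact key _ (by simp [E])

theorem Lst_nodup (m : ℕ) : (Lst m m).Nodup := Lst_nodup' m le_rfl

theorem Lst_zero_notMem (m : ℕ) : (0 : Fin m → ℚ) ∉ Lst m m := by
  rw [mem_Lst]
  rintro ⟨j, h | h⟩
  · have := congrFun h j; simp at this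
  · have := congrFun h j; simp at this

theorem mem_top {m : ℕ} (R : Finset (Fin m → ℚ)) (v : Fin (m + 1) → ℚ) :
    v ∈ R.image (fun v => sn v 0) ∪ ((Lst m m).map fun v => sn v 1).toFinset ↔
    (∃ w ∈ R, sn w 0 = v) ∨ ∃ j : Fin m, v = sn (-Pi.single j 1) 1 ∨ v = sn (Pi.single j 1) 1 := by
  simp only [mem_union, mem_image, List.mem_toFinset, List.mem_map, mem_Lst]
  refine or_congr Iff.rfl ?_
  constructor
  · rintro ⟨w, ⟨j, rfl | rfl⟩, rfl⟩
    · exact ⟨j, Or.inl rfl⟩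
    · exact ⟨j, Or.inr rfl⟩
  · rintro ⟨j, rfl | rfl⟩
    · exact ⟨_, ⟨j, Or.inl rfl⟩, rfl⟩
    · exact ⟨_, ⟨j, Or.inr rfl⟩, rfl⟩

theorem mem_rootsD_succ {m : ℕ} (v : Fin (m + 1) → ℚ) : v ∈ rootsD (m + 1) ↔
    (∃ w ∈ rootsD m, sn w 0 = v) ∨
      ∃ j : Fin m, v = sn (-Pi.single j 1) 1 ∨ v = sn (Pi.single j 1) 1 := by
  rw [mem_rootsD]
  constructor
  · rintro ⟨i, j, hij, h⟩
    induction i using Fin.lastCases with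
    | last =>
      induction j using Fin.lastCases with
      | last => exact absurd hij (lt_irrefl _)
      | cast j =>
        right
        refine ⟨j, ?_⟩
        simpa [single_cast, single_last, sn_sub', sn_add'] using h
    | cast i =>
      induction j using Fin.lastCases with
      | last => exact absurd hij (Fin.castSucc_lt_last i).not_gt
      | cast j =>
        left
        simp only [single_cast, sn_sub', sn_add', sub_zero, add_zero] at h
        rcases h with h | h
        · exact ⟨_, (mem_rootsD _).2 ⟨i, j, by simpa using hij, Or.inl rfl⟩, h.symm⟩
        · exact ⟨_, (mem_rootsD _).2 ⟨i, j, by simpa using hij, Or.inr rfl⟩, h.symm⟩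
  · rintro (⟨w, hw, rfl⟩ | ⟨j, h⟩)
    · obtain ⟨i, j, hij, h⟩ := (mem_rootsD _).1 hw
      refine ⟨i.castSucc, j.castSucc, by simpa using hij, ?_⟩
      simpa [single_cast, sn_sub', sn_add', sn_inj] using h
    · refine ⟨Fin.last m, j.castSucc, Fin.castSucc_lt_last j, ?_⟩
      simpa [single_cast, single_last, sn_sub', sn_add'] using h

theorem rts_D (m : ℕ) : rts Ty.D (m + 1) =
    (rts Ty.D m).image (fun v => sn v 0) ∪ ((Lst m m).map fun v => sn v 1).toFinset := by
  ext v
  rw [mem_top]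
  exact mem_rootsD_succ v

theorem rts_aux (m : ℕ) (x : ℚ) :
    (rootsD (m + 1) ∪ (Finset.univ : Finset (Fin (m + 1))).image fun i => Pi.single i x) =
    insert (sn 0 x) ((rootsD m ∪ (Finset.univ : Finset (Fin m)).image fun i =>
      Pi.single i x).image (fun v => sn v 0) ∪ ((Lst m m).map fun v => sn v 1).toFinset) := by
  ext v
  rw [mem_insert, mem_top, mem_union, mem_rootsD_succ]
  have : v ∈ (Finset.univ : Finset (Fin (m + 1))).image (fun i => (Pi.single i x : Fin (m+1) → ℚ)) ↔
      v = sn 0 x ∨ ∃ i : Fin m, sn (Pi.single i x) 0 = v := by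
    simp only [mem_image, mem_univ, true_and]
    constructor
    · rintro ⟨i, rfl⟩
      induction i using Fin.lastCases with
      | last => exact Or.inl (single_last x)
      | cast i => exact Or.inr ⟨i, (single_cast i x).symm⟩
    · rintro (rfl | ⟨i, rfl⟩)
      · exact ⟨_, single_last x⟩
      · exact ⟨_, single_cast i x⟩
  rw [this]
  simp only [mem_union, mem_image, mem_univ, true_and, or_and_right, exists_or, exists_exists_eq_and]
  generalize (∃ w ∈ rootsD m, sn w 0 = v) = p1
  generalize (∃ i : Fin m, sn (Pi.single i x) 0 = v) = p2
  generalize (v = sn 0 x) = p3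
  generalize (∃ x : Fin m, v = sn (-Pi.single x 1) 1) = p4
  tauto

theorem rts_B (m : ℕ) : rts Ty.B (m + 1) = insert (sn 0 ((1 : ℕ) : ℚ))
    ((rts Ty.B m).image (fun v => sn v 0) ∪ ((Lst m m).map fun v => sn v 1).toFinset) := by
  rw [Nat.cast_one]; exact rts_aux m 1

theorem rts_C (m : ℕ) : rts Ty.C (m + 1) = insert (sn 0 ((2 : ℕ) : ℚ))
    ((rts Ty.C m).image (fun v => sn v 0) ∪ ((Lst m m).map fun v => sn v 1).toFinset) := by
  exact rts_aux m 2

theorem wAct_inj {m : ℕ} (σ : Equiv.Perm (Fin m)) (ε : Fin m → Bool) :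
    Function.Injective (wAct σ ε) := by
  intro v w h
  ext k
  have := congrFun h (σ k)
  have hk : σ⁻¹ (σ k) = k := σ.symm_apply_apply k
  simp only [wAct, hk] at this
  split_ifs at this <;> linarith

theorem wAct_single {m : ℕ} (σ : Equiv.Perm (Fin m)) (ε : Fin m → Bool) (j : Fin m) (x : ℚ) :
    wAct σ ε (Pi.single j x) = Pi.single (σ j) ((if ε (σ j) then -1 else 1) * x) := by
  ext k
  by_cases h : k = σ j
  · subst h; simp [wAct]
  · have : σ⁻¹ k ≠ j := fun h' => h (by rw [← h']; simp)
    rw [Pi.single_eq_of_ne h, wAct, Pi.single_eq_of_ne this, mul_zero]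

theorem wAct_Lst {m : ℕ} (σ : Equiv.Perm (Fin m)) (ε : Fin m → Bool) :
    ((Lst m m).map (wAct σ ε)).Perm (Lst m m) := by
  have h1 : ((Lst m m).map (wAct σ ε)).Nodup := (Lst_nodup m).map (wAct_inj σ ε)
  refine (h1.subperm ?_).perm_of_length_le (by simp)
  intro v hv
  simp only [List.mem_map, mem_Lst] at hv ⊢
  obtain ⟨w, ⟨j, h⟩, rfl⟩ := hv
  refine ⟨σ j, ?_⟩
  simp only [← Pi.single_neg] at h ⊢
  rcases h with rfl | rfl
  · rw [wAct_single]; split_ifs <;> simp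
  · rw [wAct_single]; split_ifs <;> simp

/-- weights -/
noncomputable def wt (t : Ty) (N c : ℕ) : PowerSeries ℤ :=
  match t with
  | Ty.B => ∑ d ∈ range (N + 1), if c + 1 * d = N then PowerSeries.X ^ (d + c) else 0
  | Ty.C => ∑ d ∈ range (N + 1), if c + 2 * d = N then PowerSeries.X ^ (d + c) else 0
  | Ty.D => if c = N then PowerSeries.X ^ c else 0

theorem wt_aux (k N c a : ℕ) (hk : 1 ≤ k) :
    (∑ d ∈ range (N + a + 1), if (c + a) + k * d = N + a then
      (PowerSeries.X : PowerSeries ℤ) ^ (d + (c + a)) else 0) =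
    PowerSeries.X ^ a * ∑ d ∈ range (N + 1), if c + k * d = N then PowerSeries.X ^ (d + c) else 0 := by
  rw [Finset.mul_sum]
  symm
  have hs : range (N + 1) ⊆ range (N + a + 1) := by
    intro x; simp only [mem_range]; omega
  rw [← Finset.sum_subset hs]
  · refine Finset.sum_congr rfl fun d _ => ?_
    have : (c + a + k * d = N + a) ↔ (c + k * d = N) := by omega
    simp only [this]
    split_ifs
    · rw [← pow_add]; congr 1; omega
    · simp
  · intro d _ hd
    rw [if_neg]
    have : d ≤ k * d := Nat.le_mul_of_pos_left d hk
    simp only [mem_range] at hd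
    omega

theorem wt_shift (t : Ty) (N c a : ℕ) :
    wt t (N + a) (c + a) = PowerSeries.X ^ a * wt t N c := by
  cases t
  · exact wt_aux 1 N c a le_rfl
  · exact wt_aux 2 N c a (by omega)
  · simp only [wt, Nat.add_right_cancel_iff, mul_ite, mul_zero, ← pow_add]
    split_ifs
    · rw [add_comm]
    · rfl

theorem kq_ins {m : ℕ} (R : Finset (Fin m → ℚ)) (k : ℕ) (hk : 1 ≤ k) (N : ℕ) (β : Fin m → ℚ) :
    kostantQ (insert (sn 0 (k : ℚ))
      (R.image (fun v => sn v 0) ∪ ((Lst m m).map fun v => sn v 1).toFinset)) (sn β N) =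
    ∑ c ∈ range (N + 1), (∑ d ∈ range (N + 1), if c + k * d = N then
      (PowerSeries.X : PowerSeries ℤ) ^ (d + c) else 0) * hh t0 (Lst m m) c (kostantQ R) β := by
  have hkq : (1 : ℚ) ≤ k := by exact_mod_cast hk
  have hneg : ∀ d : ℕ, N < k * d → kostantQ (R.image (fun v => sn v 0) ∪
      ((Lst m m).map fun v => sn v 1).toFinset) (sn β N - (d : ℚ) • sn 0 (k : ℚ)) = 0 := by
    intro d hd
    apply kq_zero _ _ (nonneg_last R (Lst m m))
    simp only [sn_sub, LinearMap.proj_apply, sn_last]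
    have : (N : ℚ) < k * d := by exact_mod_cast hd
    linarith
  rw [kq_insert _ _ _ _ N]
  · simp only [Finset.sum_mul]
    rw [Finset.sum_comm]
    refine Finset.sum_congr rfl fun d _ => ?_
    by_cases h : k * d ≤ N
    · rw [Finset.sum_eq_single (N - k * d)]
      · rw [if_pos (by omega)]
        have e : sn β (N : ℚ) - (d : ℚ) • sn 0 (k : ℚ) = sn β ((N - k * d : ℕ) : ℚ) := by
          rw [sn_sub, smul_zero, sub_zero]
          push_cast [h]
          congr 1; ring
        rw [e, kq_top _ _ (Lst_nodup m), pow_add, mul_assoc]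
      · intro c _ hc
        rw [if_neg (by omega), zero_mul]
      · intro h'
        simp only [mem_range] at h'; omega
    · rw [hneg d (by omega), mul_zero, Finset.sum_eq_zero]
      intro c _
      rw [if_neg (by omega), zero_mul]
  · intro c hc
    apply hneg
    have : c ≤ k * c := Nat.le_mul_of_pos_left c hk
    omega
  · rw [mem_top]
    rintro (⟨w, _, hw⟩ | ⟨j, hw | hw⟩)
    · rw [sn_inj] at hw; linarith [hw.2]
    · rw [sn_inj] at hw
      have := congrFun hw.1 j; simp at this
    · rw [sn_inj] at hw
      have := congrFun hw.1 j; simp at this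

theorem kq_rec (t : Ty) {m : ℕ} (N : ℕ) (β : Fin m → ℚ) :
    kostantQ (rts t (m + 1)) (sn β N) =
    ∑ c ∈ range (N + 1), wt t N c * hh t0 (Lst m m) c (kostantQ (rts t m)) β := by
  cases t
  · rw [rts_B]; exact kq_ins _ 1 le_rfl N β
  · rw [rts_C]; exact kq_ins _ 2 (by omega) N β
  · rw [rts_D, kq_top _ _ (Lst_nodup m), Finset.sum_eq_single N]
    · simp [wt]
    · intro c _ hc; simp [wt, hc]
    · simp

theorem rts_last (t : Ty) {m : ℕ} : ∀ a ∈ rts t (m + 1),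
    0 ≤ (LinearMap.proj (Fin.last m) : (Fin (m+1) → ℚ) →ₗ[ℚ] ℚ) a := by
  intro a ha
  cases t
  · rw [rts_B, mem_insert] at ha
    rcases ha with rfl | ha
    · simp
    · exact nonneg_last _ _ a ha
  · rw [rts_C, mem_insert] at ha
    rcases ha with rfl | ha
    · simp
    · exact nonneg_last _ _ a ha
  · rw [rts_D] at ha
    exact nonneg_last _ _ a ha

end RS


namespace RS
open Finset

/-- extension of a permutation -/
def xp {m : ℕ} (σ : Equiv.Perm (Fin m)) : Equiv.Perm (Fin (m + 1)) :=
  (finSuccEquivLast (n := m)).symm.permCongr σ.optionCongr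

theorem xp_last {m : ℕ} (σ : Equiv.Perm (Fin m)) : xp σ (Fin.last m) = Fin.last m := by
  simp [xp, Equiv.permCongr_apply]

theorem xp_cast {m : ℕ} (σ : Equiv.Perm (Fin m)) (i : Fin m) :
    xp σ i.castSucc = (σ i).castSucc := by
  simp [xp, Equiv.permCongr_apply]

theorem xp_inv_last {m : ℕ} (σ : Equiv.Perm (Fin m)) : (xp σ)⁻¹ (Fin.last m) = Fin.last m := by
  rw [Equiv.Perm.inv_eq_iff_eq, xp_last]

theorem xp_inv_cast {m : ℕ} (σ : Equiv.Perm (Fin m)) (i : Fin m) :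
    (xp σ)⁻¹ i.castSucc = (σ⁻¹ i).castSucc := by
  rw [Equiv.Perm.inv_eq_iff_eq, xp_cast]
  exact congrArg Fin.castSucc (σ.apply_symm_apply i).symm

theorem xp_sign {m : ℕ} (σ : Equiv.Perm (Fin m)) :
    Equiv.Perm.sign (xp σ) = Equiv.Perm.sign σ := by
  rw [xp, Equiv.Perm.sign_permCongr, Equiv.optionCongr_sign]

theorem xp_inj {m : ℕ} : Function.Injective (xp (m := m)) := by
  intro σ τ h
  ext i
  have := congrArg (fun s => s i.castSucc) h
  simp only [xp_cast] at this
  exact congrArg Fin.val (Fin.castSucc_injective _ this)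

theorem xp_surj {m : ℕ} (σ : Equiv.Perm (Fin (m + 1))) (h : σ (Fin.last m) = Fin.last m) :
    ∃ τ, xp τ = σ := by
  set p : Equiv.Perm (Option (Fin m)) := (finSuccEquivLast (n := m)).permCongr σ with hp
  have hn : p none = none := by
    simp [hp, Equiv.permCongr_apply, h]
  refine ⟨Equiv.removeNone p, ?_⟩
  have h1 : Equiv.Perm.decomposeOption p = (none, Equiv.removeNone p) := by
    rw [← hn]; rfl
  have h2 : p = (Equiv.removeNone p).optionCongr := by
    have := congrArg Equiv.Perm.decomposeOption.symm h1
    rw [Equiv.symm_apply_apply] at this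
    refine this.trans ?_
    simp
    rfl
  rw [xp, ← h2, hp]
  ext i
  simp [Equiv.permCongr_apply]

/-- extension of a sign vector -/
def xe {m : ℕ} (ε : Fin m → Bool) : Fin (m + 1) → Bool := Fin.snoc (α := fun _ => Bool) ε false

theorem xe_last {m : ℕ} (ε : Fin m → Bool) : xe ε (Fin.last m) = false := by simp [xe]
theorem xe_cast {m : ℕ} (ε : Fin m → Bool) (i : Fin m) : xe ε i.castSucc = ε i := by simp [xe]

theorem psg_xe {m : ℕ} (ε : Fin m → Bool) : psg (xe ε) = psg ε := by
  unfold psg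
  rw [Fin.prod_univ_castSucc]
  simp [xe_last, xe_cast]

theorem chi_x (t : Ty) {m : ℕ} (σ : Equiv.Perm (Fin m)) (ε : Fin m → Bool) :
    chi t (xp σ) (xe ε) = chi t σ ε := by
  have h : wDet (xp σ) (xe ε) = wDet σ ε := by rw [wDet_eq, wDet_eq, xp_sign, psg_xe]
  have h2 := psg_xe ε
  unfold psg at h2
  cases t <;> simp only [chi, h, h2]

theorem wAct_x {m : ℕ} (σ : Equiv.Perm (Fin m)) (ε : Fin m → Bool) (v : Fin m → ℚ) (x : ℚ) :
    wAct (xp σ) (xe ε) (sn v x) = sn (wAct σ ε v) x := by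
  refine sn_ext (fun j => ?_) ?_
  · simp only [wAct, xp_inv_cast, xe_cast, sn_castSucc]
  · simp [wAct, xp_inv_last, xe_last]

theorem sum_x {m : ℕ} (F : Equiv.Perm (Fin (m + 1)) → (Fin (m + 1) → Bool) → PowerSeries ℤ)
    (hF : ∀ σ ε, ¬ (σ (Fin.last m) = Fin.last m ∧ ε (Fin.last m) = false) → F σ ε = 0) :
    ∑ σ, ∑ ε, F σ ε = ∑ σ : Equiv.Perm (Fin m), ∑ ε : Fin m → Bool, F (xp σ) (xe ε) := by
  symm
  refine Fintype.sum_of_injective xp xp_inj _ _ ?_ ?_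
  · intro σ hσ
    refine Finset.sum_eq_zero fun ε _ => hF σ ε ?_
    rintro ⟨h, _⟩
    exact hσ (xp_surj σ h)
  · intro σ
    refine Fintype.sum_of_injective xe ?_ _ _ ?_ ?_
    · intro a b h
      ext i
      have := congrFun h i.castSucc
      rw [xe_cast, xe_cast] at this
      rw [this]
    · intro ε hε
      refine hF _ _ ?_
      rintro ⟨_, h⟩
      refine hε ⟨fun i => ε i.castSucc, ?_⟩
      ext i
      refine Fin.lastCases ?_ (fun i => ?_) i
      · rw [xe_last, h]
      · rw [xe_cast]
    · intro ε; rfl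

/-- Pieri sums -/
noncomputable def Phi (t : Ty) (m : ℕ) (mu : Fin m → ℚ) (c : ℕ) : PowerSeries ℤ :=
  hh t0 (Lst m m) c (Af t m mu) (rho t m)

theorem wAct_sub {m : ℕ} (σ : Equiv.Perm (Fin m)) (ε : Fin m → Bool) (v a : Fin m → ℚ) (c : ℚ) :
    wAct σ ε (v - c • a) = wAct σ ε v - c • wAct σ ε a := by
  ext i
  simp only [wAct, Pi.sub_apply, Pi.smul_apply, smul_eq_mul]
  ring

theorem Phi_eq (t : Ty) (m : ℕ) (mu : Fin m → ℚ) (c : ℕ) :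
    Phi t m mu c = ∑ σ : Equiv.Perm (Fin m), ∑ ε : Fin m → Bool,
      chi t σ ε • hh t0 (Lst m m) c (kostantQ (rts t m))
        (wAct σ ε (rho t m) - (mu + rho t m)) := by
  have h1 : Af t m mu = fun v => ∑ p : Equiv.Perm (Fin m) × (Fin m → Bool),
      chi t p.1 p.2 • (fun v => kostantQ (rts t m) (wAct p.1 p.2 v - (mu + rho t m))) v := by
    funext v
    rw [Fintype.sum_prod_type]; rfl
  rw [Phi, h1, hh_sum, Fintype.sum_prod_type]
  refine Finset.sum_congr rfl fun σ _ => Finset.sum_congr rfl fun ε _ => ?_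
  congr 1
  rw [hh_comp t0 (Lst m m) (kostantQ (rts t m)) (fun v => wAct σ ε v - (mu + rho t m))
    (wAct σ ε) (fun v c a => by simp only [wAct_sub]; abel)]
  exact hh_perm t0 (wAct_Lst σ ε) _ _ _

theorem sh_pos (t : Ty) {m : ℕ} (hD : t = Ty.D → 1 ≤ m) : 0 < (m : ℚ) + sh t := by
  cases t
  · simp only [sh]; positivity
  · simp only [sh]; positivity
  · have : (1 : ℚ) ≤ m := by exact_mod_cast hD rfl
    simp only [sh]; linarith

theorem sh_nonneg (t : Ty) : 0 ≤ sh t := by cases t <;> norm_num [sh]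

theorem rho_sn (t : Ty) (m : ℕ) (r : ℚ) :
    rho t (m + 1) + r • E (m + 1) m = sn (rho t m) (m + sh t + r) := by
  refine sn_ext (fun j => ?_) ?_
  · have : j.val ≠ m := by omega
    simp [rho, E, this]
  · simp [rho, E]

theorem Krec (t : Ty) {m : ℕ} (hD : t = Ty.D → 1 ≤ m) (mu : Fin m → ℚ) (b N : ℕ) :
    Af t (m + 1) (sn mu b) (rho t (m + 1) + ((b + N : ℕ) : ℚ) • E (m + 1) m) =
      ∑ c ∈ range (N + 1), wt t N c * Phi t m mu c := by
  have hpos := sh_pos t hD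
  have hsn := sh_nonneg t
  have hb : (0 : ℚ) ≤ b := by positivity
  have hN : (0 : ℚ) ≤ N := by positivity
  have hrho : rho t (m + 1) = sn (rho t m) (m + sh t) := by
    simpa using rho_sn t m 0
  rw [rho_sn, Af, sum_x]
  · simp only [chi_x, wAct_x, hrho, sn_add', sn_sub']
    have e : (m : ℚ) + sh t + ((b + N : ℕ) : ℚ) - (b + (m + sh t)) = N := by push_cast; ring
    simp only [e, kq_rec, Phi_eq, Finset.smul_sum, Finset.mul_sum]
    symm
    rw [Finset.sum_comm]
    refine Finset.sum_congr rfl fun σ _ => ?_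
    rw [Finset.sum_comm]
    refine Finset.sum_congr rfl fun ε _ => Finset.sum_congr rfl fun c _ => ?_
    rw [mul_smul_comm]
  · intro σ ε h
    rw [kq_zero _ _ (rts_last t), smul_zero]
    simp only [LinearMap.proj_apply, Pi.sub_apply, Pi.add_apply, sn_last, hrho]
    have hb2 : ((b + N : ℕ) : ℚ) = b + N := by push_cast; ring
    rw [hb2, wAct]
    by_cases h1 : σ (Fin.last m) = Fin.last m
    · have h2 : σ⁻¹ (Fin.last m) = Fin.last m := by rw [Equiv.Perm.inv_eq_iff_eq, h1]
      have h3 : ε (Fin.last m) = true := by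
        cases h4 : ε (Fin.last m)
        · exact absurd ⟨h1, h4⟩ h
        · rfl
      rw [h2, h3, sn_last]
      simp only [if_true]
      linarith
    · have h2 : σ⁻¹ (Fin.last m) ≠ Fin.last m := by
        intro h2; rw [Equiv.Perm.inv_eq_iff_eq] at h2; exact h1 h2.symm
      obtain ⟨j, hj⟩ := Fin.exists_castSucc_eq.2 h2
      rw [← hj, sn_castSucc, rho]
      have hjm : (j.val : ℚ) + 1 ≤ m := by exact_mod_cast j.2
      have hj0 : (0 : ℚ) ≤ j.val := by positivity
      split_ifs <;> linarith

theorem rts_sum (t : Ty) {n : ℕ} : ∀ a ∈ rts t n, 0 ≤ ∑ i, a i := by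
  have hd : ∀ a ∈ rootsD n, 0 ≤ ∑ i, a i := by
    intro a ha
    obtain ⟨i, j, _, rfl | rfl⟩ := (mem_rootsD a).1 ha
    · simp [Finset.sum_sub_distrib]
    · simp only [Pi.add_apply, Finset.sum_add_distrib, Finset.sum_pi_single', Finset.mem_univ]
      norm_num
  intro a ha
  cases t
  · simp only [rts, rootsB, mem_union, mem_image, mem_univ, true_and] at ha
    rcases ha with ha | ⟨i, rfl⟩
    · exact hd a ha
    · simp
  · simp only [rts, rootsC, mem_union, mem_image, mem_univ, true_and] at ha
    rcases ha with ha | ⟨i, rfl⟩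
    · exact hd a ha
    · simp
  · exact hd a ha

theorem K_vanish (t : Ty) {n : ℕ} (mu : Fin n → ℚ) (c : ℕ) (h : (c : ℚ) < ∑ i, mu i) (s : ℕ) :
    Af t n mu (rho t n + (c : ℚ) • E n s) = 0 := by
  have hE : ∑ i, E n s i ≤ 1 := by
    unfold E
    by_cases hs : s < n
    · rw [Finset.sum_eq_single ⟨s, hs⟩]
      · simp
      · intro b _ hb
        have : b.val ≠ s := fun h => hb (Fin.ext h)
        simp [this]
      · simp
    · rw [Finset.sum_eq_zero]
      · norm_num
      · intro i _
        have : i.val ≠ s := by omega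
        simp [this]
  have hsn := sh_nonneg t
  have hv : ∀ i, 0 ≤ (rho t n + (c : ℚ) • E n s) i := by
    intro i
    simp only [rho, E, Pi.add_apply, Pi.smul_apply, smul_eq_mul]
    split_ifs <;> positivity
  unfold Af
  refine Finset.sum_eq_zero fun σ _ => Finset.sum_eq_zero fun ε _ => ?_
  rw [kq_zero _ (∑ i, LinearMap.proj i), smul_zero]
  · intro a ha
    simpa using rts_sum t a ha
  · have h1 : ∑ i, wAct σ ε (rho t n + (c : ℚ) • E n s) i ≤
        ∑ i, (rho t n + (c : ℚ) • E n s) i := by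
      rw [← Equiv.sum_comp σ⁻¹ (rho t n + (c : ℚ) • E n s)]
      refine Finset.sum_le_sum fun i _ => ?_
      have := hv (σ⁻¹ i)
      unfold wAct
      split_ifs <;> linarith
    have h2 : ∑ i, (rho t n + (c : ℚ) • E n s) i = ∑ i, rho t n i + c * ∑ i, E n s i := by
      simp only [Pi.add_apply, Pi.smul_apply, smul_eq_mul, Finset.sum_add_distrib, Finset.mul_sum]
    have h3 : (c : ℚ) * ∑ i, E n s i ≤ c * 1 := mul_le_mul_of_nonneg_left hE (by positivity)
    simp only [LinearMap.coe_sum, Finset.sum_apply, LinearMap.proj_apply, Pi.sub_apply,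
      Pi.add_apply, Finset.sum_sub_distrib, Finset.sum_add_distrib] at h1 h2 ⊢
    linarith

end RS


namespace RS
open Finset

/-- cast of a natural weight -/
def cv {m : ℕ} (μ : Fin m → ℕ) : Fin m → ℚ := fun i => (μ i : ℚ)

/-- the exponent -/
def hx {m : ℕ} (μ : Fin m → ℕ) : ℕ := ∑ i : Fin m, (m - 1 - i.val) * μ i

theorem cv_zero {m : ℕ} : cv (0 : Fin m → ℕ) = 0 := by ext i; simp [cv]

theorem cv_sn {m : ℕ} (μ : Fin (m + 1) → ℕ) :
    cv μ = sn (cv fun i => μ i.castSucc) (μ (Fin.last m) : ℕ) :=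
  sn_ext (fun _ => rfl) rfl

theorem hx_succ {m : ℕ} (μ : Fin (m + 1) → ℕ) :
    hx μ = hx (fun i => μ i.castSucc) + ∑ i : Fin m, μ i.castSucc := by
  unfold hx
  rw [Fin.sum_univ_castSucc, ← Finset.sum_add_distrib]
  simp only [Fin.val_last, Fin.val_castSucc, Nat.add_sub_cancel, Nat.sub_self, zero_mul, add_zero]
  refine Finset.sum_congr rfl fun i _ => ?_
  have : m - i.val = (m - 1 - i.val) + 1 := by omega
  rw [this]; ring

/-- shift property of Pieri sums -/
def ShP (t : Ty) (m : ℕ) : Prop := ∀ μ : Fin m → ℕ,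
  (∀ c, Phi t m (cv μ) (c + ∑ i, μ i) = PowerSeries.X ^ hx μ * Phi t m 0 c) ∧
  (∀ c, c < ∑ i, μ i → Phi t m (cv μ) c = 0)

/-- shift property of row Kostka polynomials -/
def SP (t : Ty) (m : ℕ) : Prop := ∀ (μ : Fin m → ℕ) (l : ℕ),
  Af t m (cv μ) (rho t m + ((l + ∑ i, μ i : ℕ) : ℚ) • E m (m - 1)) =
    PowerSeries.X ^ hx μ * Af t m 0 (rho t m + (l : ℚ) • E m (m - 1))

theorem SP_of_ShP (t : Ty) {m : ℕ} (hD : t = Ty.D → 1 ≤ m) (h : ShP t m) : SP t (m + 1) := by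
  intro μ l
  set μ' : Fin m → ℕ := fun i => μ i.castSucc with hμ'
  obtain ⟨h1, h2⟩ := h μ'
  rw [Nat.add_sub_cancel]
  have e1 : l + ∑ i, μ i = μ (Fin.last m) + (l + ∑ i, μ' i) := by
    rw [Fin.sum_univ_castSucc]; ring
  have e2 : (0 : Fin (m + 1) → ℚ) = sn 0 ((0 : ℕ) : ℚ) :=
    sn_ext (fun _ => rfl) (by simp)
  have k2 := Krec t hD 0 0 l
  rw [zero_add, ← e2] at k2
  rw [k2, cv_sn, e1, Krec t hD, hx_succ, ← hμ']
  set a := ∑ i, μ' i with ha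
  rw [show l + a + 1 = a + (l + 1) by ring, Finset.sum_range_add, Finset.sum_eq_zero, zero_add,
    Finset.mul_sum]
  · refine Finset.sum_congr rfl fun c _ => ?_
    rw [add_comm a c, h1 c, wt_shift, pow_add]; ring
  · intro c hc
    rw [h2 c (by simpa using hc), mul_zero]

theorem seq_rec (τ : ℕ → ℤ) (h0 : τ 0 = 1) (k p : ℕ → PowerSeries ℤ)
    (hk : ∀ N, k N = ∑ q ∈ antidiagonal N, τ q.1 • p q.2) (N : ℕ) :
    p N = k N - ∑ i ∈ range N, τ (i + 1) • p (N - (i + 1)) := by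
  rw [hk, Finset.Nat.sum_antidiagonal_eq_sum_range_succ_mk, Finset.sum_range_succ', h0]
  simp

theorem seq_shift (τ : ℕ → ℤ) (h0 : τ 0 = 1) (k p k' p' : ℕ → PowerSeries ℤ) (a h : ℕ)
    (hk : ∀ N, k N = ∑ q ∈ antidiagonal N, τ q.1 • p q.2)
    (hk' : ∀ N, k' N = ∑ q ∈ antidiagonal N, τ q.1 • p' q.2)
    (hs : ∀ N, k (N + a) = PowerSeries.X ^ h * k' N) (hz : ∀ N, N < a → k N = 0) :
    (∀ N, p (N + a) = PowerSeries.X ^ h * p' N) ∧ (∀ N, N < a → p N = 0) := by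
  have z : ∀ N, N < a → p N = 0 := by
    intro N
    induction N using Nat.strong_induction_on with
    | _ N ih =>
      intro hN
      rw [seq_rec τ h0 k p hk, hz N hN, Finset.sum_eq_zero, sub_zero]
      intro i hi
      simp only [mem_range] at hi
      rw [ih _ (by omega) (by omega), smul_zero]
  refine ⟨fun N => ?_, z⟩
  induction N using Nat.strong_induction_on with
  | _ N ih =>
    rw [seq_rec τ h0 k p hk, seq_rec τ h0 k' p' hk', hs, Finset.sum_range_add, mul_sub,
      Finset.mul_sum]
    congr 1
    rw [Finset.sum_eq_zero (s := range a), add_zero]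
    · refine Finset.sum_congr rfl fun i hi => ?_
      simp only [mem_range] at hi
      rw [show N + a - (i + 1) = (N - (i + 1)) + a by omega, ih _ (by omega), mul_smul_comm]
    · intro i hi
      simp only [mem_range] at hi
      rw [z _ (by omega), smul_zero]

theorem tau_zero (t : Ty) : tau t 0 = 1 := by cases t <;> simp [tau, t0]

theorem ShP_of_SP (t : Ty) {m : ℕ} (hm : 1 ≤ m) (hD : t = Ty.D → 2 ≤ m) (h : SP t m) :
    ShP t m := by
  intro μ
  refine seq_shift (tau t) (tau_zero t)
    (fun N => Af t m (cv μ) (rho t m + (N : ℚ) • E m (m - 1))) (Phi t m (cv μ))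
    (fun N => Af t m 0 (rho t m + (N : ℚ) • E m (m - 1))) (Phi t m 0) _ _ ?_ ?_ ?_ ?_
  · intro N
    rw [← straight t hm hD, hh_tau]; rfl
  · intro N
    rw [← straight t hm hD, hh_tau]; rfl
  · intro N
    exact h μ N
  · intro N hN
    refine K_vanish t (cv μ) N ?_ _
    unfold cv
    exact_mod_cast hN

theorem ShP_zero (t : Ty) : ShP t 0 := by
  intro μ
  have : cv μ = 0 := by ext i; exact i.elim0
  simp [this, hx]

theorem rootsD_one : rootsD 1 = ∅ := by
  ext v
  rw [mem_rootsD]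
  constructor
  · rintro ⟨i, j, h, _⟩
    exact absurd h (by rw [Subsingleton.elim i j]; exact lt_irrefl _)
  · simp

theorem Af_D_one (mu v : Fin 1 → ℚ) : Af Ty.D 1 mu v = if v 0 = mu 0 then 1 else 0 := by
  unfold Af
  rw [Fintype.sum_unique]
  rw [Finset.sum_eq_single (fun _ => false)]
  · have h1 : chi Ty.D (default : Equiv.Perm (Fin 1)) (fun _ => false) = 1 := by
      simp [chi, wDet]
    have h2 : wAct (default : Equiv.Perm (Fin 1)) (fun _ => false) v = v := by
      ext i; simp [wAct]
    rw [h1, h2, one_smul, show rts Ty.D 1 = ∅ from rootsD_one, kq_empty]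
    congr 1
    rw [funext_iff, Fin.forall_fin_one]
    simp [rho, sh, sub_eq_zero]
  · intro ε _ hε
    have : ε 0 = true := by
      by_contra h
      apply hε
      ext i
      rw [Subsingleton.elim i 0]
      simpa using h
    have h1 : chi Ty.D (default : Equiv.Perm (Fin 1)) ε = 0 := by
      simp [chi, this]
    rw [h1, zero_smul]
  · simp

theorem Phi_D_one (a c : ℕ) : Phi Ty.D 1 (cv fun _ => a) c =
    ∑ x ∈ range (c + 1), if ((c - x : ℕ) : ℤ) - (x : ℤ) = a then 1 else 0 := by
  rw [Phi, show Lst 1 1 = [E 1 0, -E 1 0] from rfl, hh_pair,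
    Finset.Nat.sum_antidiagonal_eq_sum_range_succ_mk]
  refine Finset.sum_congr rfl fun x hx => ?_
  rw [Af_D_one]
  refine if_congr ?_ rfl rfl
  have : ((((c - x : ℕ) : ℤ) - (x : ℤ) : ℤ) : ℚ) = ((a : ℤ) : ℚ) ↔
    ((c - x : ℕ) : ℤ) - (x : ℤ) = a := Int.cast_inj
  rw [← this]
  simp [rho, sh, E, cv]

theorem ShP_D_one : ShP Ty.D 1 := by
  intro μ
  obtain ⟨a, rfl⟩ : ∃ a : ℕ, μ = fun _ => a :=
    ⟨μ 0, by ext i; rw [Subsingleton.elim i 0]⟩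
  have hz : (0 : Fin 1 → ℚ) = cv fun _ => 0 := by ext i; simp [cv]
  have hs : ∑ _i : Fin 1, a = a := by simp
  rw [hs]
  constructor
  · intro c
    rw [hz, Phi_D_one, Phi_D_one]
    have : hx (fun _ : Fin 1 => a) = 0 := by simp [hx]
    rw [this, pow_zero, one_mul]
    symm
    have hs : range (c + 1) ⊆ range (c + a + 1) := by
      intro x; simp only [mem_range]; omega
    rw [← Finset.sum_subset hs]
    · refine Finset.sum_congr rfl fun x hx => if_congr ?_ rfl rfl
      simp only [mem_range] at hx
      omega
    · intro x h1 h2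
      simp only [mem_range] at h1 h2
      rw [if_neg]
      omega
  · intro c hc
    rw [Phi_D_one]
    refine Finset.sum_eq_zero fun x hx => ?_
    rw [if_neg]
    omega

theorem ShP_BC (t : Ty) (ht : t ≠ Ty.D) (m : ℕ) : ShP t m := by
  induction m with
  | zero => exact ShP_zero t
  | succ m ih =>
    exact ShP_of_SP t (by omega) (fun h => absurd h ht)
      (SP_of_ShP t (fun h => absurd h ht) ih)

theorem ShP_D (m : ℕ) (hm : 1 ≤ m) : ShP Ty.D m := by
  induction m, hm using Nat.le_induction with
  | base => exact ShP_D_one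
  | succ m hm ih =>
    exact ShP_of_SP _ (by omega) (fun _ => by omega) (SP_of_ShP _ (fun _ => hm) ih)

theorem SP_all (t : Ty) (n : ℕ) (hn : 1 ≤ n) (hD : t = Ty.D → 2 ≤ n) : SP t n := by
  obtain ⟨m, rfl⟩ : ∃ m, n = m + 1 := ⟨n - 1, by omega⟩
  by_cases ht : t = Ty.D
  · subst ht
    have := hD rfl
    exact SP_of_ShP _ (fun _ => by omega) (ShP_D m (by omega))
  · exact SP_of_ShP _ (fun h => absurd h ht) (ShP_BC t ht m)

theorem final (t : Ty) (n : ℕ) (hn : 1 ≤ n) (hD : t = Ty.D → 2 ≤ n) (μ : Fin n → ℤ)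
    (hμ0 : ∀ i, 0 ≤ μ i) (r : ℕ) (hr : (∑ i, μ i) ≤ (r : ℤ)) :
    Af t n (fun i => (μ i : ℚ)) ((fun i : Fin n => if (i : ℕ) = n - 1 then (r : ℚ) else 0) + rho t n) =
      (PowerSeries.X : PowerSeries ℤ) ^ (∑ i : Fin n, (n - 1 - (i : ℕ)) * (μ i).toNat) *
        Af t n 0 ((fun i : Fin n => if (i : ℕ) = n - 1 then (((r : ℤ) - ∑ i, μ i).toNat : ℚ) else 0)
          + rho t n) := by
  have hE : ∀ x : ℚ, (fun i : Fin n => if (i : ℕ) = n - 1 then x else 0) + rho t n =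
      rho t n + x • E n (n - 1) := by
    intro x
    ext i
    simp only [Pi.add_apply, E, Pi.smul_apply, smul_eq_mul, mul_ite, mul_one, mul_zero]
    ring
  have hc : (fun i => (μ i : ℚ)) = cv fun i => (μ i).toNat := by
    ext i
    have : ((μ i).toNat : ℤ) = μ i := Int.toNat_of_nonneg (hμ0 i)
    have h2 : (((μ i).toNat : ℤ) : ℚ) = (μ i : ℚ) := congrArg _ this
    rw [← h2]
    rfl
  have hsum : ∑ i, μ i = ((∑ i, (μ i).toNat : ℕ) : ℤ) := by
    push_cast
    exact Finset.sum_congr rfl fun i _ => (Int.toNat_of_nonneg (hμ0 i)).symm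
  have key := SP_all t n hn hD (fun i => (μ i).toNat) ((r : ℤ) - ∑ i, μ i).toNat
  have hl : ((r : ℤ) - ∑ i, μ i).toNat + ∑ i, (μ i).toNat = r := by omega
  rw [hl] at key
  rw [hE, hE, hc]
  exact key

end RS

/-- For a row shape: `K^{X_n}_{(r,0,…,0),μ}(q) = q^{h_n(μ)} K^{X_n}_{(l,0,…,0),0}(q)`
with `l = r - |μ|` and `h_n(μ) = ∑ (n-i) μ_i`, for `X = B, C` (any `n ≥ 1`) and `X = D` (`n ≥ 3`). -/
theorem K_row_shape (n : ℕ) (hn : 1 ≤ n) (μ : Fin n → ℤ)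
    (hμ : Monotone μ) (hμ0 : ∀ i, 0 ≤ μ i) (r : ℕ) (hr : (∑ i, μ i) ≤ (r : ℤ)) :
    (KB n (fun i => if (i : ℕ) = n - 1 then (r : ℚ) else 0) (fun i => (μ i : ℚ)) =
      (PowerSeries.X : PowerSeries ℤ) ^ (∑ i : Fin n, (n - 1 - (i : ℕ)) * (μ i).toNat) *
        KB n (fun i => if (i : ℕ) = n - 1 then (((r : ℤ) - ∑ i, μ i).toNat : ℚ) else 0) 0) ∧
    (KC n (fun i => if (i : ℕ) = n - 1 then (r : ℚ) else 0) (fun i => (μ i : ℚ)) =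
      (PowerSeries.X : PowerSeries ℤ) ^ (∑ i : Fin n, (n - 1 - (i : ℕ)) * (μ i).toNat) *
        KC n (fun i => if (i : ℕ) = n - 1 then (((r : ℤ) - ∑ i, μ i).toNat : ℚ) else 0) 0) ∧
    (3 ≤ n →
      KD n (fun i => if (i : ℕ) = n - 1 then (r : ℚ) else 0) (fun i => (μ i : ℚ)) =
        (PowerSeries.X : PowerSeries ℤ) ^ (∑ i : Fin n, (n - 1 - (i : ℕ)) * (μ i).toNat) *
          KD n (fun i => if (i : ℕ) = n - 1 then (((r : ℤ) - ∑ i, μ i).toNat : ℚ) else 0) 0) := by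
  refine ⟨?_, ?_, fun h3 => ?_⟩
  · rw [RS.KB_eq, RS.KB_eq]
    exact RS.final RS.Ty.B n hn (by simp) μ hμ0 r hr
  · rw [RS.KC_eq, RS.KC_eq]
    exact RS.final RS.Ty.C n hn (by simp) μ hμ0 r hr
  · rw [RS.KD_eq, RS.KD_eq]
    exact RS.final RS.Ty.D n hn (fun _ => by omega) μ hμ0 r hr
end
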